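/- Let 𝕋=(−π,π), λ∈{1,−1}, and let u⁰∈H¹(𝕋). Let u∈C([0,T];H¹(𝕋)) be the unique solution of the cubic nonlinear Schrödinger equation i∂_t u+∂_{xx}u=λ|u|²u on 𝕋 with u(0)=u⁰. Let u^n_{τ,N} be the fully discrete numerical solution defined by u⁰_{τ,N}=Π_N I_{2N}u⁰ and u^{n+1}_{τ,N}=Ψ(u^n_{τ,N}) for n=0,…,L−1, with time levels t_n=nτ, τ=T/L. Then for every s∈(1/2,1) there exist positive constants τ_s, N_s and C_s, depending only on ‖u⁰‖_{H¹}, T and s, such that for all τ∈(0,τ_s] and N≥N_s: max_{0≤n≤L} ‖u(t_n,·)−u^n_{τ,N}‖_{H^s} ≤ C_s(τ^{1/2}+N^{−1+s}). -/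

import Mathlib

/-!
The numerical solution is compared, step by step, with the frequency truncation `Π_N u(t_n)` of the
exact solution, everything being written on Fourier coefficients.

*Trilinear estimates.* Sobolev norms are taken with values in `[0,∞]` (`en`), so that no summability
has to be tracked. Three bounds for products are used: `H^s` is an algebra (`trilin_alg`),
`H^{s-1} · H^s · H^s ⊆ H^{s-1}` (`trilin_neg`) and `L² · H^{1/2} · H^{1/2} ⊆ H^{s-1}`
(`trilin_half`). Each follows from Cauchy–Schwarz once the weights are distributed.

*A priori bounds.* On `[0,T]` the exact solution conserves mass and momentum (`sol_quad_conserved`)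
and energy; with a Gagliardo–Nirenberg inequality this bounds `‖u(t)‖_{H¹}` in terms of
`‖u⁰‖_{H¹}` alone (`sol_H1`). The conservation laws are proved by truncating to the frequencies
`|k| ≤ K` and letting `K → ∞`.

*Structure of the scheme.* On `S_N` the one-step map is a unimodular linear multiplier plus a
trilinear Fourier sum over `p + q + r = k` (`Psi_eq`). The multiplier of this sum is `O(τ)` after a
possible factor `⟨p⟩/⟨k⟩`, `⟨q⟩/⟨k⟩` or `⟨r⟩/⟨k⟩`, so `trilin_neg` shows that the one-step map is
Lipschitz on bounded sets of `H^s` with constant `1 + O(τ)` (`Psi_stable`).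

*Local error.* The one-step map is compared with the first Picard iterate of the truncated equation
(`Psi_picard`). The resonance function is `2(p+q)(p+r) = 2kp + 2qr`, and the difference of the two
trilinear multipliers splits into
* a resonant part, which equals a phase rotation by mass and momentum (`triS_mZ`) and is accounted
  for by `M_N` and `P_N` in the linear multiplier;
* parts caused by the inner projections `Π_N`, where one frequency exceeds `N/2`, which gains
  `N^{s-1}`;
* the replacement of `e^{i(x+y)}` by `e^{ix} + e^{iy} - 1` (by `1` if `k = 0`), where `x = 2σkp` and
  `y = 2σqr`. Its error is at most a multiple of `|y|^{1/2}`, so it costs half a derivative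
  on each of two factors, and `trilin_half` gives `O(τ^{3/2})`.

The exact flow follows the same Picard iterate up to `O(τ(τ + N^{s-1}))` (`sol_picard`), and
the aliasing error of the initial value is `O(N^{s-1})` (`initData_err`).

*Conclusion.* A discrete Gronwall argument (`err_all`) gives the bound for
`Π_N u(t_n) - u^n_{τ,N}`; smallness of `τ` and `N⁻¹` keeps the numerical solution in the ball
where `Psi_stable` applies. The remainder `u(t_n) - Π_N u(t_n)` is `O(N^{s-1})` by the `H¹` bound.
-/

noncomputable section

open Complex MeasureTheory
open scoped BigOperators

/-- A function on the torus `𝕋 = (-π,π)` is represented by its sequence of Fourier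
coefficients `f̂ : ℤ → ℂ`. -/
abbrev FSeq := ℤ → ℂ

/-- Membership in the Sobolev space `H^s(𝕋)`:
`∑_{k∈ℤ} (1+k²)^s |f̂_k|² < ∞`. -/
def InHs (s : ℝ) (a : FSeq) : Prop :=
  Summable fun k : ℤ => (1 + (k : ℝ) ^ 2) ^ s * ‖a k‖ ^ 2

/-- The `H^s(𝕋)` norm: `‖f‖_{H^s}² = 2π ∑_{k∈ℤ} (1+k²)^s |f̂_k|²`. -/
def hnorm (s : ℝ) (a : FSeq) : ℝ :=
  Real.sqrt (2 * Real.pi * ∑' k : ℤ, (1 + (k : ℝ) ^ 2) ^ s * ‖a k‖ ^ 2)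

/-- Convolution of Fourier coefficient sequences: the coefficients of the
pointwise product of two functions. -/
def conv (a b : FSeq) : FSeq := fun k => ∑' j : ℤ, a (k - j) * b j

/-- Coefficients of the complex conjugate function: `(conj f)̂_k = conj (f̂_{-k})`. -/
def conjS (a : FSeq) : FSeq := fun k => (starRingEnd ℂ) (a (-k))

/-- The Bessel-potential operator `J^s`, a Fourier multiplier with symbol
`⟨k⟩^s = (1+k²)^{s/2}`. -/
def Jpow (s : ℝ) (a : FSeq) : FSeq := fun k => (((1 + (k : ℝ) ^ 2) ^ (s / 2) : ℝ) : ℂ) * a k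

/-- The spatial derivative `∂ₓ`, multiplier `ik`. -/
def dx (a : FSeq) : FSeq := fun k => Complex.I * (k : ℂ) * a k

/-- The operator `∂ₓ⁻¹`, multiplier `(ik)⁻¹` for `k ≠ 0` and `0` at `k = 0`. -/
def dxInv (a : FSeq) : FSeq := fun k => if k = 0 then 0 else a k / (Complex.I * (k : ℂ))

/-- Frequency projection `Π_N` onto the modes `|k| ≤ N`. -/
def piN (N : ℕ) (a : FSeq) : FSeq := fun k => if |k| ≤ (N : ℤ) then a k else 0

/-- Zero-mode projection `Π₀` (viewed as a function, i.e. the constant `f̂₀`). -/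
def pi0 (a : FSeq) : FSeq := fun k => if k = 0 then a 0 else 0

/-- Nonzero-mode projection `Π_{≠0}`. -/
def piNe (a : FSeq) : FSeq := fun k => if k = 0 then 0 else a k

/-- The free Schrödinger flow `e^{it∂ₓ²}`, Fourier multiplier with symbol `e^{-itk²}`. -/
def expD (t : ℝ) (a : FSeq) : FSeq :=
  fun k => Complex.exp (-Complex.I * (t : ℂ) * (k : ℂ) ^ 2) * a k

/-- Coefficients of `|f|² = (conj f)·f`. -/
def modSq (a : FSeq) : FSeq := conv (conjS a) a

/-- Coefficients of `f²`. -/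
def sqS (a : FSeq) : FSeq := conv a a

/-- The Fourier multiplier `e^{iτ(−2λP∂ₓ^{−1}−2λM+∂ₓ²)}`, with symbol `e^{−2λMiτ}`
at `k = 0` and `e^{iτ(−2λP(ik)^{−1}−2λM−k²)}` for `k ≠ 0`. -/
def expMain (lam τ : ℝ) (M P : ℂ) (a : FSeq) : FSeq := fun k =>
  if k = 0 then Complex.exp (-2 * (lam : ℂ) * M * Complex.I * (τ : ℂ)) * a 0
  else Complex.exp (Complex.I * (τ : ℂ) *
      (-2 * (lam : ℂ) * P / (Complex.I * (k : ℂ)) - 2 * (lam : ℂ) * M - (k : ℂ) ^ 2)) * a k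

/-- The one-step map `Ψ : S_N → S_N` of the fully discrete low-regularity integrator. -/
def Psi (lam τ : ℝ) (N : ℕ) (M P : ℂ) (f : FSeq) : FSeq :=
  expMain lam τ M P f
  + (fun k => if k = 0 then (1 - Complex.exp (-2 * Complex.I * (lam : ℂ) * (τ : ℂ) * M)) * f 0 else 0)
  + (-(Complex.I * (lam : ℂ) * (τ : ℂ))) • pi0 (conv (piN N (modSq f)) f)
  + (lam : ℂ) • dxInv (piN N (conv (expD τ f) (dxInv (piN N (modSq (expD τ f))))))
  - (lam : ℂ) • expD τ (dxInv (piN N (conv f (dxInv (piN N (modSq f))))))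
  - ((lam : ℂ) / 2) •
      (dxInv (dxInv (piN N (conv (expD (-τ) (conjS f)) (expD τ (piN N (sqS f))))))
        - expD τ (dxInv (dxInv (piN N (conv (conjS f) (piN N (sqS f)))))))
  - ((lam : ℂ) / 2) • expD τ (dxInv (piN N (conv (dx (conjS f))
      (expD (-τ) (piN N (sqS (expD τ (dxInv f)))) - piN N (sqS (dxInv f))))))
  - (Complex.I * (lam : ℂ) * (τ : ℂ)) • expD τ (dxInv (piN N (conv (dx (conjS f)) (piN N (sqS f)))))
  + (2 * Complex.I * (lam : ℂ) * (τ : ℂ) * f 0) • expD τ (dxInv (piN N (conv (dx (conjS f)) f)))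
  - (Complex.I * (lam : ℂ) * (τ : ℂ) * (f 0) ^ 2) • expD τ (piNe (conjS f))

/-- Trigonometric interpolation `I_{2N}` at the `4N+1` equidistant points
`x_n = 2πn/(4N+1)`, expressed on Fourier coefficients by the aliasing formula
`(I_{2N}f)̂_k = ∑_{m∈ℤ} f̂_{k+m(4N+1)}` for `|k| ≤ 2N`. -/
def interp2N (N : ℕ) (a : FSeq) : FSeq := fun k =>
  if |k| ≤ 2 * (N : ℤ) then ∑' m : ℤ, a (k + m * (4 * (N : ℤ) + 1)) else 0

/-- The discrete initial value `u⁰_{τ,N} = Π_N I_{2N} u⁰`. -/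
def initData (N : ℕ) (u0 : FSeq) : FSeq := piN N (interp2N N u0)

/-- The approximate mass `M_N = Π₀(|u⁰_{τ,N}|²)`. -/
def Mnum (N : ℕ) (u0 : FSeq) : ℂ := modSq (initData N u0) 0

/-- The approximate momentum `P_N = Π₀(u⁰_{τ,N} ∂ₓ (conj u⁰_{τ,N}))`. -/
def Pnum (N : ℕ) (u0 : FSeq) : ℂ := conv (initData N u0) (dx (conjS (initData N u0))) 0

/-- The fully discrete numerical solution: `u⁰_{τ,N} = Π_N I_{2N} u⁰`,
`u^{n+1}_{τ,N} = Ψ(u^n_{τ,N})`. -/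
def numSol (lam τ : ℝ) (N : ℕ) (u0 : FSeq) : ℕ → FSeq
  | 0 => initData N u0
  | n + 1 => Psi lam τ N (Mnum N u0) (Pnum N u0) (numSol lam τ N u0 n)

/-- Coefficients of the cubic nonlinearity `|u|²u = (conj u)·u·u`. -/
def cubicTerm (a : FSeq) : FSeq := conv (conv (conjS a) a) a

/-- `u : [0,T] → H¹(𝕋)` is the (mild) solution of the cubic NLS equation
`i∂ₜu + ∂ₓₓu = λ|u|²u`, `u(0) = u⁰`: it takes values in `H¹`, is continuous in `H¹`,
and satisfies Duhamel's formula. -/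
def IsNLSSolution (lam T : ℝ) (u0 : FSeq) (u : ℝ → FSeq) : Prop :=
  u 0 = u0 ∧
  (∀ t ∈ Set.Icc (0 : ℝ) T, InHs 1 (u t)) ∧
  (∀ t₀ ∈ Set.Icc (0 : ℝ) T, Filter.Tendsto (fun t => hnorm 1 (u t - u t₀))
      (nhdsWithin t₀ (Set.Icc (0 : ℝ) T)) (nhds 0)) ∧
  (∀ t ∈ Set.Icc (0 : ℝ) T, ∀ k : ℤ,
    u t k = Complex.exp (-Complex.I * (t : ℂ) * (k : ℂ) ^ 2) * u0 k
      - Complex.I * (lam : ℂ) * ∫ s in (0 : ℝ)..t,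
          Complex.exp (-Complex.I * ((t - s : ℝ) : ℂ) * (k : ℂ) ^ 2) * cubicTerm (u s) k)

open scoped ENNReal NNReal ComplexConjugate

/-! ### The `ℓ²` norm of extended nonnegative sequences -/

/-- The `ℓ²` norm of a family of extended nonnegative reals. -/
def l2 {ι : Type*} (A : ι → ℝ≥0∞) : ℝ≥0∞ := (∑' i, A i ^ 2) ^ (1 / 2 : ℝ)

lemma l2_sq {ι : Type*} (A : ι → ℝ≥0∞) : l2 A ^ 2 = ∑' i, A i ^ 2 := by
  unfold l2
  rw [← ENNReal.rpow_natCast, ← ENNReal.rpow_mul]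
  norm_num

lemma l2_le_iff {ι : Type*} (A : ι → ℝ≥0∞) (c : ℝ≥0∞) : l2 A ≤ c ↔ ∑' i, A i ^ 2 ≤ c ^ 2 := by
  rw [← l2_sq, ENNReal.pow_le_pow_left_iff two_ne_zero]

lemma l2_mono {ι : Type*} {A B : ι → ℝ≥0∞} (h : ∀ i, A i ≤ B i) : l2 A ≤ l2 B := by
  rw [l2_le_iff, l2_sq]
  exact ENNReal.tsum_le_tsum fun i => by gcongr; exact h i

lemma le_l2 {ι : Type*} (A : ι → ℝ≥0∞) (i : ι) : A i ≤ l2 A := by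
  rw [← ENNReal.pow_le_pow_left_iff two_ne_zero, l2_sq]
  exact ENNReal.le_tsum (f := fun i => A i ^ 2) i

lemma l2_const_mul {ι : Type*} (c : ℝ≥0∞) (A : ι → ℝ≥0∞) :
    l2 (fun i => c * A i) = c * l2 A := by
  have : l2 (fun i => c * A i) ^ 2 = (c * l2 A) ^ 2 := by
    rw [l2_sq, mul_pow, l2_sq, ← ENNReal.tsum_mul_left]
    simp [mul_pow]
  exact (ENNReal.pow_right_strictMono two_ne_zero).injective this

/-- Cauchy–Schwarz. -/
lemma tsum_mul_le_l2 {ι : Type*} (A B : ι → ℝ≥0∞) : ∑' i, A i * B i ≤ l2 A * l2 B := by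
  rw [ENNReal.tsum_eq_iSup_sum]
  refine iSup_le fun s => ?_
  refine (ENNReal.inner_le_Lp_mul_Lq s A B Real.HolderConjugate.two_two).trans ?_
  unfold l2
  gcongr
  all_goals
    simp only [ENNReal.rpow_ofNat]
    exact ENNReal.sum_le_tsum s

/-- Minkowski. -/
lemma l2_add_le {ι : Type*} (A B : ι → ℝ≥0∞) :
    l2 (fun i => A i + B i) ≤ l2 A + l2 B := by
  rw [l2_le_iff, ENNReal.tsum_eq_iSup_sum]
  refine iSup_le fun s => ?_
  have h := ENNReal.Lp_add_le s A B (p := 2) (by norm_num)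
  have h1 : (∑ i ∈ s, A i ^ (2 : ℝ)) ^ (1 / (2 : ℝ)) ≤ l2 A := by
    unfold l2; gcongr; simp only [ENNReal.rpow_ofNat]; exact ENNReal.sum_le_tsum s
  have h2 : (∑ i ∈ s, B i ^ (2 : ℝ)) ^ (1 / (2 : ℝ)) ≤ l2 B := by
    unfold l2; gcongr; simp only [ENNReal.rpow_ofNat]; exact ENNReal.sum_le_tsum s
  have h3 := h.trans (add_le_add h1 h2)
  have h4 : ((∑ i ∈ s, (A i + B i) ^ (2 : ℝ)) ^ (1 / (2 : ℝ))) ^ 2 = ∑ i ∈ s, (A i + B i) ^ 2 := by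
    rw [← ENNReal.rpow_natCast, ← ENNReal.rpow_mul]
    norm_num
  rw [← h4]
  gcongr

/-- The `ℓ²` norm is determined by testing against `ℓ²`. -/
lemma l2_le_of_dual {ι : Type*} (H : ι → ℝ≥0∞) (c : ℝ≥0∞)
    (h : ∀ D : ι → ℝ≥0∞, ∑' i, D i * H i ≤ c * l2 D) : l2 H ≤ c := by
  classical
  by_cases hc : c = ∞
  · simp [hc]
  have hfin : ∀ i, H i ≤ c := by
    intro i
    have h1 := h (Pi.single i 1)
    have h2 : l2 (Pi.single i 1 : ι → ℝ≥0∞) = 1 := by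
      unfold l2
      rw [tsum_eq_single i]
      · simp
      · intro j hj; simp [hj]
    rw [h2, tsum_eq_single i (by intro j hj; simp [hj])] at h1
    simpa using h1
  rw [l2_le_iff, ENNReal.tsum_eq_iSup_sum]
  refine iSup_le fun s => ?_
  set D : ι → ℝ≥0∞ := fun i => if i ∈ s then H i else 0 with hD
  have h1 := h D
  have h2 : ∑' i, D i * H i = ∑ i ∈ s, H i ^ 2 := by
    rw [tsum_eq_sum (s := s) (by intro i hi; simp [hD, hi])]
    refine Finset.sum_congr rfl fun i hi => by simp [hD, hi, sq]
  have h3 : l2 D ^ 2 = ∑ i ∈ s, H i ^ 2 := by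
    rw [l2_sq, tsum_eq_sum (s := s) (by intro i hi; simp [hD, hi])]
    refine Finset.sum_congr rfl fun i hi => by simp [hD, hi]
  have hlt : l2 D ≠ ∞ := by
    intro h4
    rw [h4] at h3
    have : ∑ i ∈ s, H i ^ 2 < ∞ := by
      refine ENNReal.sum_lt_top.2 fun i _ => ?_
      exact ENNReal.pow_lt_top ((hfin i).trans_lt (lt_top_iff_ne_top.2 hc))
    rw [← h3] at this
    simp at this
  rw [h2, ← h3, sq] at h1
  rw [← h3]
  by_cases h0 : l2 D = 0
  · simp [h0]
  · have := (ENNReal.mul_le_mul_iff_left h0 hlt).1 h1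
    gcongr

/-! ### Weights and trilinear sums -/

/-- The Bessel weight `⟨k⟩^s = (1+k²)^{s/2}` as an extended nonnegative real. -/
def wt (s : ℝ) (k : ℤ) : ℝ≥0∞ := ENNReal.ofReal ((1 + (k : ℝ) ^ 2) ^ (s / 2))

lemma jb_pos (k : ℤ) : (0 : ℝ) < 1 + (k : ℝ) ^ 2 := by positivity

lemma wt_add (s t : ℝ) (k : ℤ) : wt (s + t) k = wt s k * wt t k := by
  unfold wt
  rw [← ENNReal.ofReal_mul (by positivity), ← Real.rpow_add (jb_pos k)]
  ring_nf

lemma wt_zero (k : ℤ) : wt 0 k = 1 := by simp [wt]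

lemma wt_ne_top (s : ℝ) (k : ℤ) : wt s k ≠ ∞ := by simp [wt]

lemma wt_neg_mul (s : ℝ) (k : ℤ) : wt (-s) k * wt s k = 1 := by
  rw [← wt_add]; simp [wt_zero]

lemma wt_sq (s : ℝ) (k : ℤ) : wt s k ^ 2 = wt (2 * s) k := by
  rw [sq, ← wt_add]; ring_nf

lemma wt_mono {s t : ℝ} (h : s ≤ t) (k : ℤ) : wt s k ≤ wt t k := by
  unfold wt
  apply ENNReal.ofReal_le_ofReal
  apply Real.rpow_le_rpow_of_exponent_le
  · nlinarith [sq_nonneg (k : ℝ)]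
  · linarith

lemma wt_le_of_le {s : ℝ} (hs : 0 ≤ s) {k l : ℤ} (h : (k : ℝ) ^ 2 ≤ (l : ℝ) ^ 2) :
    wt s k ≤ wt s l := by
  unfold wt
  apply ENNReal.ofReal_le_ofReal
  apply Real.rpow_le_rpow (jb_pos k).le <;> linarith

lemma wt_anti {s : ℝ} (hs : s ≤ 0) {k l : ℤ} (h : (k : ℝ) ^ 2 ≤ (l : ℝ) ^ 2) :
    wt s l ≤ wt s k := by
  unfold wt
  apply ENNReal.ofReal_le_ofReal
  apply Real.rpow_le_rpow_of_nonpos (jb_pos k) <;> linarith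

lemma wt_neg_arg (s : ℝ) (k : ℤ) : wt s (-k) = wt s k := by
  simp [wt]

/-- Subadditivity of the weights `⟨k⟩^s`, `0 ≤ s ≤ 1`. -/
lemma wt_subadd {s : ℝ} (hs : 0 ≤ s) (hs1 : s ≤ 1) (p q : ℤ) :
    wt s (p + q) ≤ wt s p + wt s q := by
  have hsq : Real.sqrt (1 + ((p + q : ℤ) : ℝ) ^ 2) ≤
      Real.sqrt (1 + (p : ℝ) ^ 2) + Real.sqrt (1 + (q : ℝ) ^ 2) := by
    rw [Real.sqrt_le_left (by positivity)]
    have h1 := Real.sq_sqrt (jb_pos p).le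
    have h2 := Real.sq_sqrt (jb_pos q).le
    have h3 : |(p : ℝ)| ≤ Real.sqrt (1 + (p : ℝ) ^ 2) := by
      rw [← Real.sqrt_sq_eq_abs]; exact Real.sqrt_le_sqrt (by linarith)
    have h4 : |(q : ℝ)| ≤ Real.sqrt (1 + (q : ℝ) ^ 2) := by
      rw [← Real.sqrt_sq_eq_abs]; exact Real.sqrt_le_sqrt (by linarith)
    have h5 : (p : ℝ) * q ≤ Real.sqrt (1 + (p : ℝ) ^ 2) * Real.sqrt (1 + (q : ℝ) ^ 2) := by
      calc (p : ℝ) * q ≤ |(p : ℝ) * q| := le_abs_self _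
        _ = |(p : ℝ)| * |(q : ℝ)| := abs_mul _ _
        _ ≤ _ := by gcongr
    push_cast
    nlinarith
  have key : ∀ k : ℤ, (1 + (k : ℝ) ^ 2) ^ (s / 2) = (Real.sqrt (1 + (k : ℝ) ^ 2)) ^ s := by
    intro k
    rw [Real.sqrt_eq_rpow, ← Real.rpow_mul (jb_pos k).le]
    ring_nf
  unfold wt
  rw [← ENNReal.ofReal_add (by positivity) (by positivity)]
  apply ENNReal.ofReal_le_ofReal
  rw [key, key, key]
  exact (Real.rpow_le_rpow (Real.sqrt_nonneg _) hsq hs).trans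
    (Real.rpow_add_le_add_rpow (Real.sqrt_nonneg _) (Real.sqrt_nonneg _) hs hs1)

/-- Total mass of the weight `⟨k⟩^{-a}`. -/
def Sw (a : ℝ) : ℝ≥0∞ := ∑' k : ℤ, wt (-a) k

lemma Sw_ne_top {a : ℝ} (ha : 1 < a) : Sw a ≠ ∞ := by
  have h : Summable fun k : ℤ => (1 + (k : ℝ) ^ 2) ^ (-a / 2) := by
    have h1 : Summable fun k : ℤ => |(k : ℝ)| ^ (-a) := Real.summable_abs_int_rpow ha
    refine Summable.of_norm_bounded_eventually h1 ?_
    have : {(0 : ℤ)}ᶜ ∈ Filter.cofinite := (Set.finite_singleton (0:ℤ)).compl_mem_cofinite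
    filter_upwards [this] with k hk
    have hk0 : (k : ℝ) ≠ 0 := by simpa using hk
    rw [Real.norm_of_nonneg (by positivity)]
    have h2 : |(k : ℝ)| ^ (-a) = ((k : ℝ) ^ 2) ^ (-a / 2) := by
      rw [← sq_abs, ← Real.rpow_natCast, ← Real.rpow_mul (abs_nonneg _)]
      congr 1; push_cast; ring
    rw [h2]
    apply Real.rpow_le_rpow_of_nonpos (by positivity) (by linarith) (by linarith)
  exact h.tsum_ofReal_ne_top

/-- The trilinear convolution sum `∑_{p+q+r=k} A_p B_q C_r`. -/
def tri (A B C : ℤ → ℝ≥0∞) (k : ℤ) : ℝ≥0∞ :=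
  ∑' x : ℤ × ℤ × ℤ, if x.1 + x.2.1 + x.2.2 = k then A x.1 * B x.2.1 * C x.2.2 else 0

lemma tsum_mul_tri (A B C D : ℤ → ℝ≥0∞) :
    ∑' k, D k * tri A B C k =
      ∑' x : ℤ × ℤ × ℤ, D (x.1 + x.2.1 + x.2.2) * (A x.1 * B x.2.1 * C x.2.2) := by
  unfold tri
  simp_rw [← ENNReal.tsum_mul_left]
  rw [ENNReal.tsum_comm]
  refine tsum_congr fun x => ?_
  rw [tsum_eq_single (x.1 + x.2.1 + x.2.2)]
  · simp
  · intro k hk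
    rw [if_neg (Ne.symm hk), mul_zero]

lemma tri_mono {A B C A' B' C' : ℤ → ℝ≥0∞} (hA : ∀ k, A k ≤ A' k) (hB : ∀ k, B k ≤ B' k)
    (hC : ∀ k, C k ≤ C' k) (k : ℤ) : tri A B C k ≤ tri A' B' C' k := by
  unfold tri
  refine ENNReal.tsum_le_tsum fun x => ?_
  split_ifs
  · gcongr <;> apply_assumption
  · exact le_rfl

lemma tri_swap12 (A B C : ℤ → ℝ≥0∞) : tri A B C = tri B A C := by
  funext k
  unfold tri
  let e : ℤ × ℤ × ℤ ≃ ℤ × ℤ × ℤ :=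
    ⟨fun x => (x.2.1, x.1, x.2.2), fun x => (x.2.1, x.1, x.2.2), fun _ => rfl, fun _ => rfl⟩
  rw [← e.tsum_eq]
  refine tsum_congr fun x => ?_
  have h1 : x.2.1 + x.1 = x.1 + x.2.1 := add_comm _ _
  have h2 : A x.2.1 * B x.1 = B x.1 * A x.2.1 := mul_comm _ _
  simp only [e, Equiv.coe_fn_mk, h1, h2]

lemma tri_swap23 (A B C : ℤ → ℝ≥0∞) : tri A B C = tri A C B := by
  funext k
  unfold tri
  let e : ℤ × ℤ × ℤ ≃ ℤ × ℤ × ℤ :=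
    ⟨fun x => (x.1, x.2.2, x.2.1), fun x => (x.1, x.2.2, x.2.1), fun _ => rfl, fun _ => rfl⟩
  rw [← e.tsum_eq]
  refine tsum_congr fun x => ?_
  have h1 : x.1 + x.2.2 + x.2.1 = x.1 + x.2.1 + x.2.2 := by ring
  have h2 : A x.1 * B x.2.2 * C x.2.1 = A x.1 * C x.2.1 * B x.2.2 := by ring
  simp only [e, Equiv.coe_fn_mk, h1, h2]

lemma l2_triple (A B C : ℤ → ℝ≥0∞) :
    l2 (fun x : ℤ × ℤ × ℤ => A x.1 * B x.2.1 * C x.2.2) = l2 A * l2 B * l2 C := by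
  have : l2 (fun x : ℤ × ℤ × ℤ => A x.1 * B x.2.1 * C x.2.2) ^ 2 = (l2 A * l2 B * l2 C) ^ 2 := by
    rw [l2_sq, mul_pow, mul_pow, l2_sq, l2_sq, l2_sq, ENNReal.tsum_prod']
    simp_rw [ENNReal.tsum_prod', mul_pow, ENNReal.tsum_mul_left, ENNReal.tsum_mul_right,
      mul_assoc, ENNReal.tsum_mul_left, ENNReal.tsum_mul_right]
    rw [mul_assoc]
  exact (ENNReal.pow_right_strictMono two_ne_zero).injective this

/-- Reparametrisation of `{(p,q,r)}` as `{(p+q+r,q,r)}`. -/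
def shearEquiv : ℤ × ℤ × ℤ ≃ ℤ × ℤ × ℤ :=
  ⟨fun x => (x.1 + x.2.1 + x.2.2, x.2.1, x.2.2), fun x => (x.1 - x.2.1 - x.2.2, x.2.1, x.2.2),
    fun x => by ext <;> simp; ring, fun x => by ext <;> simp; ring⟩

/-- Weighted quadrilinear estimate with the kernel square-summable for fixed output frequency. -/
lemma quad_typeA (K : ℤ × ℤ × ℤ → ℝ≥0∞) (S : ℝ≥0∞)
    (hK : ∀ k, ∑' y : ℤ × ℤ, K (k - y.1 - y.2, y.1, y.2) ^ 2 ≤ S ^ 2) (A B C D : ℤ → ℝ≥0∞) :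
    ∑' x : ℤ × ℤ × ℤ, K x * (D (x.1 + x.2.1 + x.2.2) * (A x.1 * B x.2.1 * C x.2.2)) ≤
      S * (l2 A * l2 B * l2 C) * l2 D := by
  have h1 := tsum_mul_le_l2 (fun x : ℤ × ℤ × ℤ => K x * D (x.1 + x.2.1 + x.2.2))
    (fun x => A x.1 * B x.2.1 * C x.2.2)
  rw [l2_triple] at h1
  have h2 : l2 (fun x : ℤ × ℤ × ℤ => K x * D (x.1 + x.2.1 + x.2.2)) ≤ S * l2 D := by
    rw [l2_le_iff, ← shearEquiv.symm.tsum_eq, ENNReal.tsum_prod', mul_pow, l2_sq,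
      ← ENNReal.tsum_mul_left]
    refine ENNReal.tsum_le_tsum fun k => ?_
    simp only [shearEquiv, Equiv.coe_fn_symm_mk, mul_pow]
    have : ∀ y : ℤ × ℤ, k - y.1 - y.2 + y.1 + y.2 = k := fun y => by ring
    simp_rw [this, ENNReal.tsum_mul_right]
    gcongr
    exact hK k
  calc _ = ∑' x : ℤ × ℤ × ℤ, K x * D (x.1 + x.2.1 + x.2.2) * (A x.1 * B x.2.1 * C x.2.2) := by
        simp_rw [mul_assoc]
    _ ≤ _ := h1
    _ ≤ S * l2 D * (l2 A * l2 B * l2 C) := by gcongr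
    _ = _ := by ring

/-- Weighted quadrilinear estimate with the kernel square-summable for fixed first frequency. -/
lemma quad_typeB (K : ℤ × ℤ × ℤ → ℝ≥0∞) (S : ℝ≥0∞)
    (hK : ∀ p, ∑' y : ℤ × ℤ, K (p, y.1, y.2) ^ 2 ≤ S ^ 2) (A B C D : ℤ → ℝ≥0∞) :
    ∑' x : ℤ × ℤ × ℤ, K x * (D (x.1 + x.2.1 + x.2.2) * (A x.1 * B x.2.1 * C x.2.2)) ≤
      S * (l2 A * l2 B * l2 C) * l2 D := by
  have h1 := tsum_mul_le_l2 (fun x : ℤ × ℤ × ℤ => K x * A x.1)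
    (fun x => D (x.1 + x.2.1 + x.2.2) * B x.2.1 * C x.2.2)
  have h3 : l2 (fun x : ℤ × ℤ × ℤ => D (x.1 + x.2.1 + x.2.2) * B x.2.1 * C x.2.2) =
      l2 D * l2 B * l2 C := by
    rw [← l2_triple]
    unfold l2
    congr 1
    exact shearEquiv.tsum_eq (fun x => (D x.1 * B x.2.1 * C x.2.2) ^ 2)
  rw [h3] at h1
  have h2 : l2 (fun x : ℤ × ℤ × ℤ => K x * A x.1) ≤ S * l2 A := by
    rw [l2_le_iff, ENNReal.tsum_prod', mul_pow, l2_sq, ← ENNReal.tsum_mul_left]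
    refine ENNReal.tsum_le_tsum fun k => ?_
    simp_rw [mul_pow, ENNReal.tsum_mul_right]
    gcongr
    exact hK k
  calc _ = ∑' x : ℤ × ℤ × ℤ, K x * A x.1 * (D (x.1 + x.2.1 + x.2.2) * B x.2.1 * C x.2.2) := by
        refine tsum_congr fun x => by ring
    _ ≤ _ := h1
    _ ≤ S * l2 A * (l2 D * l2 B * l2 C) := by gcongr
    _ = _ := by ring

/-! ### Trilinear product estimates -/

lemma tsum_pair (f g : ℤ → ℝ≥0∞) :
    ∑' y : ℤ × ℤ, f y.1 * g y.2 = (∑' k, f k) * ∑' k, g k := by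
  rw [ENNReal.tsum_prod']
  simp_rw [ENNReal.tsum_mul_left, ENNReal.tsum_mul_right]

lemma tsum_pair_sub2 (f g : ℤ → ℝ≥0∞) (k : ℤ) :
    ∑' y : ℤ × ℤ, f (k - y.1 - y.2) * g y.2 = (∑' k, f k) * ∑' k, g k := by
  rw [ENNReal.tsum_prod', ENNReal.tsum_comm, ← ENNReal.tsum_mul_left]
  refine tsum_congr fun r => ?_
  dsimp only
  rw [ENNReal.tsum_mul_right, ← (Equiv.subLeft (k - r)).tsum_eq f]
  congr 1
  refine tsum_congr fun q => ?_
  simp only [Equiv.subLeft_apply]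
  congr 1; ring

lemma tsum_pair_sub1 (f g : ℤ → ℝ≥0∞) (k : ℤ) :
    ∑' y : ℤ × ℤ, f (k - y.1 - y.2) * g y.1 = (∑' k, f k) * ∑' k, g k := by
  rw [← tsum_pair_sub2 f g k, ← (Equiv.prodComm ℤ ℤ).tsum_eq]
  refine tsum_congr fun y => ?_
  simp only [Equiv.prodComm_apply, Prod.fst_swap, Prod.snd_swap]
  congr 2; ring

lemma tsum_pair_add2 (f g : ℤ → ℝ≥0∞) (p : ℤ) :
    ∑' y : ℤ × ℤ, f (p + y.1 + y.2) * g y.2 = (∑' k, f k) * ∑' k, g k := by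
  have h := tsum_pair_sub2 (fun k => f (-k)) g (-p)
  rw [← (Equiv.neg ℤ).tsum_eq f]
  simp only [Equiv.neg_apply]
  rw [← h]
  refine tsum_congr fun y => ?_
  congr 2; ring

lemma tsum_pair_add1 (f g : ℤ → ℝ≥0∞) (p : ℤ) :
    ∑' y : ℤ × ℤ, f (p + y.1 + y.2) * g y.1 = (∑' k, f k) * ∑' k, g k := by
  rw [← tsum_pair_add2 f g p, ← (Equiv.prodComm ℤ ℤ).tsum_eq]
  refine tsum_congr fun y => ?_
  simp only [Equiv.prodComm_apply, Prod.fst_swap, Prod.snd_swap]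
  congr 2; ring

/-- From a bound on the weighted quadrilinear form to a trilinear product estimate. -/
lemma trilin_of_quad (d a b c : ℝ) (S : ℝ≥0∞)
    (h : ∀ A B C D : ℤ → ℝ≥0∞, ∑' x : ℤ × ℤ × ℤ,
      (wt d (x.1 + x.2.1 + x.2.2) * wt (-a) x.1 * wt (-b) x.2.1 * wt (-c) x.2.2) *
        (D (x.1 + x.2.1 + x.2.2) * (A x.1 * B x.2.1 * C x.2.2)) ≤
      S * (l2 A * l2 B * l2 C) * l2 D) (A B C : ℤ → ℝ≥0∞) :
    l2 (fun k => wt d k * tri A B C k) ≤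
      S * (l2 (fun k => wt a k * A k) * l2 (fun k => wt b k * B k) *
        l2 (fun k => wt c k * C k)) := by
  refine l2_le_of_dual _ _ fun D => ?_
  refine le_trans (le_of_eq ?_) (h _ _ _ D)
  have := tsum_mul_tri A B C (fun k => D k * wt d k)
  simp_rw [← mul_assoc]
  rw [this]
  refine tsum_congr fun x => ?_
  have h1 := wt_neg_mul a x.1
  have h2 := wt_neg_mul b x.2.1
  have h3 := wt_neg_mul c x.2.2
  calc _ = (wt (-a) x.1 * wt a x.1) * (wt (-b) x.2.1 * wt b x.2.1) *
        (wt (-c) x.2.2 * wt c x.2.2) * (D (x.1 + x.2.1 + x.2.2) * wt d (x.1 + x.2.1 + x.2.2) *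
        (A x.1 * B x.2.1 * C x.2.2)) := by rw [h1, h2, h3]; ring
    _ = _ := by ring

/-- Splitting a kernel into three pieces. -/
lemma quad_add3 (K K1 K2 K3 X : ℤ × ℤ × ℤ → ℝ≥0∞) (hK : ∀ x, K x ≤ K1 x + K2 x + K3 x)
    (S1 S2 S3 Y Z : ℝ≥0∞) (h1 : ∑' x, K1 x * X x ≤ S1 * Y * Z) (h2 : ∑' x, K2 x * X x ≤ S2 * Y * Z)
    (h3 : ∑' x, K3 x * X x ≤ S3 * Y * Z) : ∑' x, K x * X x ≤ (S1 + S2 + S3) * Y * Z := by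
  calc _ ≤ ∑' x, (K1 x * X x + K2 x * X x + K3 x * X x) := by
        refine ENNReal.tsum_le_tsum fun x => ?_
        rw [← add_mul, ← add_mul]
        gcongr
        exact hK x
    _ = ∑' x, K1 x * X x + ∑' x, K2 x * X x + ∑' x, K3 x * X x := by
        rw [ENNReal.tsum_add, ENNReal.tsum_add]
    _ ≤ S1 * Y * Z + S2 * Y * Z + S3 * Y * Z := by gcongr
    _ = _ := by ring

/-- `H^s` is an algebra for `1/2 < s ≤ 1`. -/
lemma trilin_alg {s : ℝ} (hs : 1 / 2 < s) (hs1 : s ≤ 1) (A B C : ℤ → ℝ≥0∞) :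
    l2 (fun k => wt s k * tri A B C k) ≤
      (3 * Sw (2 * s)) * (l2 (fun k => wt s k * A k) * l2 (fun k => wt s k * B k) *
        l2 (fun k => wt s k * C k)) := by
  refine trilin_of_quad s s s s _ (fun A B C D => ?_) A B C
  have h3 : (3 : ℝ≥0∞) * Sw (2 * s) = Sw (2 * s) + Sw (2 * s) + Sw (2 * s) := by ring
  have hsq : ∀ p q : ℤ, (wt (-s) p * wt (-s) q) ^ 2 = wt (-(2 * s)) p * wt (-(2 * s)) q := by
    intro p q
    rw [mul_pow, wt_sq, wt_sq]; ring_nf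
  rw [h3]
  refine quad_add3 _ (fun x => wt (-s) x.2.1 * wt (-s) x.2.2) (fun x => wt (-s) x.1 * wt (-s) x.2.2)
    (fun x => wt (-s) x.1 * wt (-s) x.2.1) _ (fun x => ?_) _ _ _ _ _ ?_ ?_ ?_
  · have h := (wt_subadd (by linarith) hs1 (x.1 + x.2.1) x.2.2).trans
      (add_le_add_left (wt_subadd (s := s) (by linarith) hs1 x.1 x.2.1) _)
    calc _ ≤ (wt s x.1 + wt s x.2.1 + wt s x.2.2) * wt (-s) x.1 * wt (-s) x.2.1 * wt (-s) x.2.2 := by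
          gcongr
      _ = (wt (-s) x.1 * wt s x.1) * (wt (-s) x.2.1 * wt (-s) x.2.2) +
          (wt (-s) x.2.1 * wt s x.2.1) * (wt (-s) x.1 * wt (-s) x.2.2) +
          (wt (-s) x.2.2 * wt s x.2.2) * (wt (-s) x.1 * wt (-s) x.2.1) := by ring
      _ = _ := by simp only [wt_neg_mul, one_mul]
  · refine quad_typeA _ _ (fun k => ?_) A B C D
    simp_rw [hsq, tsum_pair]
    rw [sq]; rfl
  · refine quad_typeA _ _ (fun k => ?_) A B C D
    simp_rw [hsq, tsum_pair_sub2]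
    rw [sq]; rfl
  · refine quad_typeA _ _ (fun k => ?_) A B C D
    simp_rw [hsq, tsum_pair_sub1]
    rw [sq]; rfl

/-- Young's inequality for products of decaying weights. -/
lemma wt_young {a b : ℝ} (ha : 0 ≤ a) (hb : 0 ≤ b) (x y : ℤ) :
    wt (-a) x * wt (-b) y ≤ wt (-(a + b)) x + wt (-(a + b)) y := by
  rcases le_total ((x : ℝ) ^ 2) ((y : ℝ) ^ 2) with h | h
  · calc wt (-a) x * wt (-b) y ≤ wt (-a) x * wt (-b) x := by
          gcongr; exact wt_anti (by linarith) h
      _ = wt (-(a + b)) x := by rw [← wt_add]; ring_nf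
      _ ≤ _ := le_self_add
  · calc wt (-a) x * wt (-b) y ≤ wt (-a) y * wt (-b) y := by
          gcongr; exact wt_anti (by linarith) h
      _ = wt (-(a + b)) y := by rw [← wt_add]; ring_nf
      _ ≤ _ := le_add_self

/-- The product estimate `H^{s-1} · H^s · H^s → H^{s-1}`. -/
lemma trilin_neg {s : ℝ} (hs : 1 / 2 < s) (hs1 : s < 1) (A B C : ℤ → ℝ≥0∞) :
    l2 (fun k => wt (s - 1) k * tri A B C k) ≤
      (5 * Sw (2 * s)) * (l2 (fun k => wt (s - 1) k * A k) * l2 (fun k => wt s k * B k) *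
        l2 (fun k => wt s k * C k)) := by
  refine trilin_of_quad (s - 1) (s - 1) s s _ (fun A B C D => ?_) A B C
  -- the three pieces come from `⟨p⟩^{1-s} ≤ ⟨k⟩^{1-s} + ⟨q⟩^{1-s} + ⟨r⟩^{1-s}`, where `k = p + q + r`
  have h3 : (5 : ℝ≥0∞) * Sw (2 * s) = Sw (2 * s) + 2 * Sw (2 * s) + 2 * Sw (2 * s) := by ring
  have hsq : ∀ p q : ℤ, (wt (-s) p * wt (-s) q) ^ 2 = wt (-(2 * s)) p * wt (-(2 * s)) q := by
    intro p q
    rw [mul_pow, wt_sq, wt_sq]; ring_nf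
  have hyo : ∀ k q r : ℤ, (wt (s - 1) k * wt (1 - s - s) q * wt (-s) r) ^ 2 ≤
      (wt (-(2 * s)) k + wt (-(2 * s)) q) * wt (-(2 * s)) r := by
    intro k q r
    rw [mul_pow, mul_pow, wt_sq, wt_sq, wt_sq]
    have := wt_young (a := 2 * (1 - s)) (b := 2 * (2 * s - 1)) (by linarith) (by linarith) k q
    rw [show -(2 * (1 - s)) = 2 * (s - 1) by ring, show -(2 * (2 * s - 1)) = 2 * (1 - s - s) by ring,
      show 2 * (1 - s) + 2 * (2 * s - 1) = 2 * s by ring] at this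
    rw [show 2 * -s = -(2 * s) by ring]
    gcongr
  rw [h3]
  refine quad_add3 _ (fun x => wt (-s) x.2.1 * wt (-s) x.2.2)
    (fun x => wt (s - 1) (x.1 + x.2.1 + x.2.2) * wt (1 - s - s) x.2.1 * wt (-s) x.2.2)
    (fun x => wt (s - 1) (x.1 + x.2.1 + x.2.2) * wt (1 - s - s) x.2.2 * wt (-s) x.2.1)
    _ (fun x => ?_) _ _ _ _ _ ?_ ?_ ?_
  · have h : wt (1 - s) x.1 ≤ wt (1 - s) (x.1 + x.2.1 + x.2.2) + wt (1 - s) x.2.1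
        + wt (1 - s) x.2.2 := by
      have h1 := wt_subadd (s := 1 - s) (by linarith) (by linarith)
        ((x.1 + x.2.1 + x.2.2) + -x.2.1) (-x.2.2)
      have h2 := wt_subadd (s := 1 - s) (by linarith) (by linarith) (x.1 + x.2.1 + x.2.2) (-x.2.1)
      rw [show x.1 + x.2.1 + x.2.2 + -x.2.1 + -x.2.2 = x.1 by ring] at h1
      rw [wt_neg_arg] at h1 h2
      exact h1.trans (add_le_add_left h2 _)
    rw [show -(s - 1) = 1 - s by ring]
    set k := x.1 + x.2.1 + x.2.2
    have e1 : wt (s - 1) k * wt (1 - s) k = 1 := by rw [← wt_add]; simp [wt_zero]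
    calc _ ≤ wt (s - 1) k * (wt (1 - s) k + wt (1 - s) x.2.1 + wt (1 - s) x.2.2)
            * wt (-s) x.2.1 * wt (-s) x.2.2 := by gcongr
      _ = (wt (s - 1) k * wt (1 - s) k) * (wt (-s) x.2.1 * wt (-s) x.2.2) +
          wt (s - 1) k * (wt (1 - s) x.2.1 * wt (-s) x.2.1) * wt (-s) x.2.2 +
          wt (s - 1) k * (wt (1 - s) x.2.2 * wt (-s) x.2.2) * wt (-s) x.2.1 := by ring
      _ = _ := by
        rw [e1, one_mul, ← wt_add, ← wt_add]
        simp only [sub_eq_add_neg]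
  · refine quad_typeA _ _ (fun k => ?_) A B C D
    simp_rw [hsq, tsum_pair]
    rw [sq]; rfl
  all_goals
    refine quad_typeB _ _ (fun k => ?_) A B C D
    refine (ENNReal.tsum_le_tsum fun y => hyo _ _ _).trans ?_
    simp_rw [add_mul]
    rw [ENNReal.tsum_add]
  · rw [tsum_pair, tsum_pair_add2 (fun k => wt (-(2 * s)) k) (fun k => wt (-(2 * s)) k)]
    change Sw (2 * s) * Sw (2 * s) + Sw (2 * s) * Sw (2 * s) ≤ _
    rw [mul_pow, sq, sq, ← two_mul]
    gcongr
    norm_num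
  · have := tsum_pair (fun k => wt (-(2 * s)) k) (fun k => wt (-(2 * s)) k)
    simp_rw [mul_comm (wt (-(2 * s)) (Prod.snd _)) _]
    rw [this, tsum_pair_add1 (fun k => wt (-(2 * s)) k) (fun k => wt (-(2 * s)) k)]
    change Sw (2 * s) * Sw (2 * s) + Sw (2 * s) * Sw (2 * s) ≤ _
    rw [mul_pow, sq, sq, ← two_mul]
    gcongr
    norm_num

/-- A three-weight Young inequality: the exponents `(2e,1,1)` interpolate the three exponent
vectors with entries `1+e`, `1+e`, `0`. -/
lemma wt_young3 {e : ℝ} (he : 0 < e) (he1 : e < 1) (x y z : ℤ) :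
    wt (-(2 * e)) x * wt (-1) y * wt (-1) z ≤
      wt (-(1 + e)) y * wt (-(1 + e)) z + wt (-(1 + e)) x * wt (-(1 + e)) y
        + wt (-(1 + e)) x * wt (-(1 + e)) z := by
  have A : ∀ x y z : ℤ, (y : ℝ) ^ 2 ≤ (x : ℝ) ^ 2 → (z : ℝ) ^ 2 ≤ (x : ℝ) ^ 2 →
      wt (-(2 * e)) x * wt (-1) y * wt (-1) z ≤ wt (-(1 + e)) y * wt (-(1 + e)) z := by
    intro x y z h1 h2
    calc _ = (wt (-e) x * wt (-1) y) * (wt (-e) x * wt (-1) z) := by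
          rw [show -(2 * e) = -e + -e by ring, wt_add]; ring
      _ ≤ (wt (-e) y * wt (-1) y) * (wt (-e) z * wt (-1) z) := by
          gcongr
          · exact wt_anti (by linarith) h1
          · exact wt_anti (by linarith) h2
      _ = _ := by rw [← wt_add, ← wt_add]; ring_nf
  have B : ∀ x y z : ℤ, (x : ℝ) ^ 2 ≤ (y : ℝ) ^ 2 → (z : ℝ) ^ 2 ≤ (y : ℝ) ^ 2 →
      wt (-(2 * e)) x * wt (-1) y * wt (-1) z ≤ wt (-(1 + e)) x * wt (-(1 + e)) z := by
    intro x y z h1 h2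
    calc _ = wt (-(2 * e)) x * (wt (-(1 - e)) y * wt (-e) y) * wt (-1) z := by
          rw [← wt_add]; ring_nf
      _ ≤ wt (-(2 * e)) x * (wt (-(1 - e)) x * wt (-e) z) * wt (-1) z := by
          gcongr
          · exact wt_anti (by linarith) h1
          · exact wt_anti (by linarith) h2
      _ = (wt (-(2 * e)) x * wt (-(1 - e)) x) * (wt (-e) z * wt (-1) z) := by ring
      _ = _ := by rw [← wt_add, ← wt_add]; ring_nf
  rcases le_total ((x : ℝ) ^ 2) ((y : ℝ) ^ 2) with h1 | h1
  · rcases le_total ((y : ℝ) ^ 2) ((z : ℝ) ^ 2) with h2 | h2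
    · have := B x z y (h1.trans h2) h2
      rw [mul_right_comm] at this
      exact this.trans (le_add_self.trans le_self_add)
    · exact (B x y z h1 h2).trans le_add_self
  · rcases le_total ((x : ℝ) ^ 2) ((z : ℝ) ^ 2) with h2 | h2
    · have := B x z y h2 (h1.trans h2)
      rw [mul_right_comm] at this
      exact this.trans (le_add_self.trans le_self_add)
    · exact (A x y z h1 h2).trans (le_self_add.trans le_self_add)

/-- The product estimate `L² · H^{1/2} · H^{1/2} → H^{s-1}` for `s < 1`. -/
lemma trilin_half {s : ℝ} (hs : 0 < s) (hs1 : s < 1) (A B C : ℤ → ℝ≥0∞) :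
    l2 (fun k => wt (s - 1) k * tri A B C k) ≤
      (3 * Sw (2 - s)) * (l2 (fun k => wt 0 k * A k) * l2 (fun k => wt (1 / 2) k * B k) *
        l2 (fun k => wt (1 / 2) k * C k)) := by
  refine trilin_of_quad (s - 1) 0 (1 / 2) (1 / 2) _ (fun A B C D => ?_) A B C
  refine quad_typeB _ _ (fun p => ?_) A B C D
  have hyo : ∀ y : ℤ × ℤ, (wt (s - 1) (p + y.1 + y.2) * wt (-0) p * wt (-(1 / 2)) y.1
      * wt (-(1 / 2)) y.2) ^ 2 ≤ wt (-(2 - s)) y.1 * wt (-(2 - s)) y.2 +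
      wt (-(2 - s)) (p + y.1 + y.2) * wt (-(2 - s)) y.1 +
      wt (-(2 - s)) (p + y.1 + y.2) * wt (-(2 - s)) y.2 := by
    intro y
    have := wt_young3 (e := 1 - s) (by linarith) (by linarith) (p + y.1 + y.2) y.1 y.2
    rw [neg_zero, wt_zero, mul_one, mul_pow, mul_pow, wt_sq, wt_sq, wt_sq]
    rw [show 1 + (1 - s) = 2 - s by ring, show -(2 * (1 - s)) = 2 * (s - 1) by ring] at this
    rw [show (2 : ℝ) * -(1 / 2) = -1 by norm_num]
    exact this
  refine (ENNReal.tsum_le_tsum hyo).trans ?_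
  rw [ENNReal.tsum_add, ENNReal.tsum_add, tsum_pair,
    tsum_pair_add2 (fun k => wt (-(2 - s)) k) (fun k => wt (-(2 - s)) k),
    tsum_pair_add1 (fun k => wt (-(2 - s)) k) (fun k => wt (-(2 - s)) k)]
  change Sw (2 - s) * Sw (2 - s) + Sw (2 - s) * Sw (2 - s) + Sw (2 - s) * Sw (2 - s) ≤ _
  calc _ = 3 * (Sw (2 - s) * Sw (2 - s)) := by ring
    _ ≤ 9 * (Sw (2 - s) * Sw (2 - s)) := by gcongr; norm_num
    _ = _ := by ring

/-! ### Sobolev norms with values in `[0,∞]` -/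

/-- The `H^s` norm (without the factor `√(2π)`) as an extended nonnegative real. -/
def en (s : ℝ) (a : FSeq) : ℝ≥0∞ := l2 (fun k => wt s k * ‖a k‖ₑ)

/-- `a` belongs to `H^s` with norm (up to the factor `√(2π)`) at most `X`. -/
def Bd (s : ℝ) (a : FSeq) (X : ℝ) : Prop := 0 ≤ X ∧ en s a ≤ ENNReal.ofReal X

lemma en_sq (s : ℝ) (a : FSeq) :
    en s a ^ 2 = ∑' k : ℤ, ENNReal.ofReal ((1 + (k : ℝ) ^ 2) ^ s * ‖a k‖ ^ 2) := by
  unfold en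
  rw [l2_sq]
  refine tsum_congr fun k => ?_
  rw [mul_pow, wt_sq, wt, show 2 * s / 2 = s by ring, ENNReal.ofReal_mul (by positivity),
    ENNReal.ofReal_pow (norm_nonneg _), ofReal_norm]

lemma inHs_iff (s : ℝ) (a : FSeq) : InHs s a ↔ en s a ≠ ∞ := by
  have hnn : ∀ k : ℤ, 0 ≤ (1 + (k : ℝ) ^ 2) ^ s * ‖a k‖ ^ 2 := fun k => by positivity
  constructor
  · intro h h1
    have h2 := en_sq s a
    rw [h1] at h2
    have h3 := Summable.tsum_ofReal_ne_top (f := fun k : ℤ => (1 + (k : ℝ) ^ 2) ^ s * ‖a k‖ ^ 2) h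
    rw [← h2] at h3
    simp at h3
  · intro h
    have h2 := en_sq s a
    have h3 : en s a ^ 2 ≠ ∞ := ENNReal.pow_ne_top h
    rw [h2] at h3
    have h4 := ENNReal.summable_toReal h3
    unfold InHs
    convert h4 using 2 with k
    rw [ENNReal.toReal_ofReal (hnn k)]

lemma hnorm_eq (s : ℝ) (a : FSeq) : hnorm s a = Real.sqrt (2 * Real.pi) * (en s a).toReal := by
  have hnn : ∀ k : ℤ, 0 ≤ (1 + (k : ℝ) ^ 2) ^ s * ‖a k‖ ^ 2 := fun k => by positivity
  have h1 : ((en s a).toReal) ^ 2 = ∑' k : ℤ, (1 + (k : ℝ) ^ 2) ^ s * ‖a k‖ ^ 2 := by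
    rw [← ENNReal.toReal_pow, en_sq, ENNReal.tsum_toReal_eq (by simp)]
    refine tsum_congr fun k => ENNReal.toReal_ofReal (hnn k)
  unfold hnorm
  rw [← h1, Real.sqrt_mul (by positivity), Real.sqrt_sq ENNReal.toReal_nonneg]

lemma Bd.hnorm_le {s : ℝ} {a : FSeq} {X : ℝ} (h : Bd s a X) :
    hnorm s a ≤ Real.sqrt (2 * Real.pi) * X := by
  rw [hnorm_eq]
  gcongr
  exact ENNReal.toReal_le_of_le_ofReal h.1 h.2

lemma Bd_of_hnorm {s : ℝ} {a : FSeq} (ha : InHs s a) : Bd s a (hnorm s a) := by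
  refine ⟨Real.sqrt_nonneg _, ?_⟩
  rw [hnorm_eq, ← ENNReal.ofReal_toReal ((inHs_iff s a).1 ha)]
  rw [ENNReal.toReal_ofReal ENNReal.toReal_nonneg]
  apply ENNReal.ofReal_le_ofReal
  have h1 : 1 ≤ Real.sqrt (2 * Real.pi) := by
    rw [Real.one_le_sqrt]; linarith [Real.pi_gt_three]
  have := ENNReal.toReal_nonneg (a := en s a)
  nlinarith

lemma Bd.mono {s : ℝ} {a : FSeq} {X Y : ℝ} (h : Bd s a X) (hXY : X ≤ Y) : Bd s a Y :=
  ⟨h.1.trans hXY, h.2.trans (ENNReal.ofReal_le_ofReal hXY)⟩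

lemma en_le_of_norm_le {s : ℝ} {a b : FSeq} (h : ∀ k, ‖a k‖ ≤ ‖b k‖) : en s a ≤ en s b := by
  unfold en
  refine l2_mono fun k => ?_
  gcongr
  exact enorm_le_iff_norm_le.2 (h k)

lemma Bd.of_norm_le {s : ℝ} {a b : FSeq} {X : ℝ} (h : Bd s b X) (hab : ∀ k, ‖a k‖ ≤ ‖b k‖) :
    Bd s a X := ⟨h.1, (en_le_of_norm_le hab).trans h.2⟩

lemma Bd.lower {s t : ℝ} {a : FSeq} {X : ℝ} (h : Bd t a X) (hst : s ≤ t) : Bd s a X :=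
  ⟨h.1, (l2_mono fun k => by gcongr; exact wt_mono hst k).trans h.2⟩

lemma en_add_le (s : ℝ) (a b : FSeq) : en s (a + b) ≤ en s a + en s b := by
  unfold en
  refine (l2_mono fun k => ?_).trans (l2_add_le _ _)
  rw [← mul_add]
  gcongr
  exact enorm_add_le _ _

lemma Bd.add {s : ℝ} {a b : FSeq} {X Y : ℝ} (ha : Bd s a X) (hb : Bd s b Y) :
    Bd s (a + b) (X + Y) := by
  refine ⟨add_nonneg ha.1 hb.1, (en_add_le s a b).trans ?_⟩
  rw [ENNReal.ofReal_add ha.1 hb.1]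
  exact add_le_add ha.2 hb.2

lemma Bd.neg {s : ℝ} {a : FSeq} {X : ℝ} (ha : Bd s a X) : Bd s (-a) X :=
  ha.of_norm_le fun k => by simp

lemma Bd.sub {s : ℝ} {a b : FSeq} {X Y : ℝ} (ha : Bd s a X) (hb : Bd s b Y) :
    Bd s (a - b) (X + Y) := by
  rw [sub_eq_add_neg]; exact ha.add hb.neg

lemma Bd.smul {s : ℝ} {a : FSeq} {X : ℝ} (ha : Bd s a X) {c : ℝ} (hc : 0 ≤ c) {b : FSeq}
    (hb : ∀ k, ‖b k‖ ≤ c * ‖a k‖) : Bd s b (c * X) := by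
  refine ⟨mul_nonneg hc ha.1, ?_⟩
  calc en s b ≤ l2 (fun k => ENNReal.ofReal c * (wt s k * ‖a k‖ₑ)) := by
        refine l2_mono fun k => ?_
        rw [mul_left_comm]
        gcongr
        rw [← ofReal_norm, ← ofReal_norm, ← ENNReal.ofReal_mul hc]
        exact ENNReal.ofReal_le_ofReal (hb k)
    _ = ENNReal.ofReal c * en s a := by rw [l2_const_mul]; rfl
    _ ≤ _ := by rw [ENNReal.ofReal_mul hc]; gcongr; exact ha.2

lemma Bd.coeff_le {s : ℝ} {a : FSeq} {X : ℝ} (hs : 0 ≤ s) (h : Bd s a X) (k : ℤ) : ‖a k‖ ≤ X := by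
  have h1 : wt s k * ‖a k‖ₑ ≤ ENNReal.ofReal X := (le_l2 _ k).trans h.2
  have h2 : ‖a k‖ₑ ≤ wt s k * ‖a k‖ₑ := by
    calc ‖a k‖ₑ = wt 0 k * ‖a k‖ₑ := by rw [wt_zero, one_mul]
      _ ≤ _ := by gcongr; exact wt_mono hs k
  have h3 := h2.trans h1
  rw [← ofReal_norm, ENNReal.ofReal_le_ofReal_iff h.1] at h3
  exact h3

lemma en_conjS (s : ℝ) (a : FSeq) : en s (conjS a) = en s a := by
  unfold en l2
  congr 1
  rw [← (Equiv.neg ℤ).tsum_eq (fun k => (wt s k * ‖a k‖ₑ) ^ 2)]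
  refine tsum_congr fun k => ?_
  simp only [Equiv.neg_apply, conjS, wt_neg_arg, RCLike.enorm_conj]

lemma Bd.conjS {s : ℝ} {a : FSeq} {X : ℝ} (h : Bd s a X) : Bd s (conjS a) X :=
  ⟨h.1, (en_conjS s a).le.trans h.2⟩

lemma norm_phase (t : ℝ) (k : ℤ) : ‖Complex.exp (-Complex.I * (t : ℂ) * (k : ℂ) ^ 2)‖ = 1 := by
  have : -Complex.I * (t : ℂ) * (k : ℂ) ^ 2 = ((-(t * (k : ℝ) ^ 2) : ℝ) : ℂ) * Complex.I := by
    push_cast; ring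
  rw [this, Complex.norm_exp_ofReal_mul_I]

lemma norm_expD (t : ℝ) (a : FSeq) (k : ℤ) : ‖expD t a k‖ = ‖a k‖ := by
  unfold expD; rw [norm_mul, norm_phase, one_mul]

lemma Bd.expD {s : ℝ} {a : FSeq} {X : ℝ} (h : Bd s a X) (t : ℝ) : Bd s (expD t a) X :=
  h.of_norm_le fun k => (norm_expD t a k).le

lemma norm_piN_le (N : ℕ) (a : FSeq) (k : ℤ) : ‖piN N a k‖ ≤ ‖a k‖ := by
  unfold piN; split_ifs <;> simp

lemma Bd.piN {s : ℝ} {a : FSeq} {X : ℝ} (h : Bd s a X) (N : ℕ) : Bd s (piN N a) X :=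
  h.of_norm_le fun k => norm_piN_le N a k

/-- The algebra constant of `H^s`. -/
def cAlg (s : ℝ) : ℝ := (3 * Sw (2 * s)).toReal

lemma cAlg_nonneg (s : ℝ) : 0 ≤ cAlg s := ENNReal.toReal_nonneg

lemma ofReal_cAlg {s : ℝ} (hs : 1 / 2 < s) : ENNReal.ofReal (cAlg s) = 3 * Sw (2 * s) :=
  ENNReal.ofReal_toReal (ENNReal.mul_ne_top (by simp) (Sw_ne_top (by linarith)))

lemma enorm_conv_le (a b : FSeq) (k : ℤ) : ‖conv a b k‖ₑ ≤ ∑' j, ‖a (k - j)‖ₑ * ‖b j‖ₑ := by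
  unfold conv
  refine enorm_tsum_le_tsum_enorm.trans (le_of_eq ?_)
  simp_rw [enorm_mul]

lemma enorm_conv3_le (a b c : FSeq) (k : ℤ) :
    ‖conv (conv a b) c k‖ₑ ≤ tri (fun k => ‖a k‖ₑ) (fun k => ‖b k‖ₑ) (fun k => ‖c k‖ₑ) k := by
  calc _ ≤ ∑' r, (∑' q, ‖a (k - r - q)‖ₑ * ‖b q‖ₑ) * ‖c r‖ₑ := by
        refine (enorm_conv_le _ _ k).trans (ENNReal.tsum_le_tsum fun r => ?_)
        gcongr
        exact enorm_conv_le _ _ _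
    _ = ∑' y : ℤ × ℤ, ‖a (k - y.1 - y.2)‖ₑ * ‖b y.1‖ₑ * ‖c y.2‖ₑ := by
        rw [ENNReal.tsum_prod', ENNReal.tsum_comm]
        refine tsum_congr fun r => ?_
        rw [← ENNReal.tsum_mul_right]
        refine tsum_congr fun q => ?_
        rw [show k - r - q = k - q - r by ring]
    _ = _ := by
        unfold tri
        rw [← Equiv.tsum_eq shearEquiv.symm (fun x : ℤ × ℤ × ℤ => if x.1 + x.2.1 + x.2.2 = k then
          ‖a x.1‖ₑ * ‖b x.2.1‖ₑ * ‖c x.2.2‖ₑ else 0),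
          ENNReal.tsum_prod' (f := fun x : ℤ × ℤ × ℤ => _), ENNReal.tsum_comm]
        refine tsum_congr fun y => ?_
        simp only [shearEquiv, Equiv.coe_fn_symm_mk]
        have : ∀ l : ℤ, l - y.1 - y.2 + y.1 + y.2 = l := fun l => by ring
        simp_rw [this]
        rw [tsum_eq_single k (by intro l hl; simp [hl])]
        simp

lemma Bd.conv3 {s : ℝ} (hs : 1 / 2 < s) (hs1 : s ≤ 1) {a b c : FSeq} {X Y Z : ℝ}
    (ha : Bd s a X) (hb : Bd s b Y) (hc : Bd s c Z) :
    Bd s (conv (conv a b) c) (cAlg s * (X * Y * Z)) := by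
  have h0 := ha.1
  have h1 := hb.1
  have h2 := hc.1
  refine ⟨mul_nonneg (cAlg_nonneg s) (by positivity), ?_⟩
  calc en s (conv (conv a b) c) ≤ l2 (fun k => wt s k * tri (fun k => ‖a k‖ₑ) (fun k => ‖b k‖ₑ)
        (fun k => ‖c k‖ₑ) k) := l2_mono fun k => by gcongr; exact enorm_conv3_le a b c k
    _ ≤ _ := trilin_alg hs hs1 _ _ _
    _ ≤ (3 * Sw (2 * s)) * (ENNReal.ofReal X * ENNReal.ofReal Y * ENNReal.ofReal Z) := by
        gcongr
        · exact ha.2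
        · exact hb.2
        · exact hc.2
    _ = _ := by
        rw [ENNReal.ofReal_mul (cAlg_nonneg s), ofReal_cAlg hs, ENNReal.ofReal_mul (by positivity),
          ENNReal.ofReal_mul (by positivity)]

/-- Approximation by truncation: `‖a - Π_N a‖_{H^s} ≤ N^{s-t}‖a‖_{H^t}`. -/
lemma Bd.tail {s t : ℝ} (hst : s ≤ t) {a : FSeq} {X : ℝ} (h : Bd t a X) {N : ℕ} (hN : 0 < N) :
    Bd s (a - _root_.piN N a) ((N : ℝ) ^ (s - t) * X) := by
  have hN' : (0 : ℝ) < N := by exact_mod_cast hN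
  refine ⟨mul_nonneg (by positivity) h.1, ?_⟩
  calc en s (a - _root_.piN N a) ≤ l2 (fun k => ENNReal.ofReal ((N : ℝ) ^ (s - t)) * (wt t k * ‖a k‖ₑ)) := by
        refine l2_mono fun k => ?_
        simp only [Pi.sub_apply, _root_.piN]
        split_ifs with hk
        · simp
        · rw [sub_zero, show s = (s - t) + t by ring, wt_add, mul_assoc, show s - t + t - t = s - t by ring]
          gcongr
          unfold wt
          apply ENNReal.ofReal_le_ofReal
          have h1 : (N : ℝ) ^ 2 ≤ 1 + (k : ℝ) ^ 2 := by
            have h2 : (N : ℤ) < |k| := not_le.1 hk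
            have h3 : (N : ℝ) < |(k : ℝ)| := by exact_mod_cast h2
            have h4 := sq_abs (k : ℝ)
            nlinarith
          calc (1 + (k : ℝ) ^ 2) ^ ((s - t) / 2) ≤ ((N : ℝ) ^ 2) ^ ((s - t) / 2) :=
                Real.rpow_le_rpow_of_nonpos (by positivity) h1 (by linarith)
            _ = _ := by
              rw [← Real.rpow_natCast, ← Real.rpow_mul hN'.le]; congr 1; push_cast; ring
    _ = ENNReal.ofReal ((N : ℝ) ^ (s - t)) * en t a := by rw [l2_const_mul]; rfl
    _ ≤ _ := by rw [ENNReal.ofReal_mul (by positivity)]; gcongr; exact h.2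

/-- `H^s ⊂ ℓ¹` for `s > 1/2`. -/
lemma tsum_enorm_le {s : ℝ} (a : FSeq) :
    ∑' k, ‖a k‖ₑ ≤ l2 (wt (-s)) * en s a := by
  calc ∑' k, ‖a k‖ₑ = ∑' k, wt (-s) k * (wt s k * ‖a k‖ₑ) := by
        refine tsum_congr fun k => ?_
        rw [← mul_assoc, wt_neg_mul, one_mul]
    _ ≤ _ := tsum_mul_le_l2 _ _

lemma l2_wt_ne_top {s : ℝ} (hs : 1 / 2 < s) : l2 (wt (-s)) ≠ ∞ := by
  intro h
  have h1 := l2_sq (wt (-s))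
  simp_rw [wt_sq] at h1
  rw [h, show 2 * -s = -(2 * s) by ring] at h1
  exact Sw_ne_top (a := 2 * s) (by linarith) (by rw [Sw, ← h1]; simp)

lemma Bd.summable {s : ℝ} (hs : 1 / 2 < s) {a : FSeq} {X : ℝ} (h : Bd s a X) :
    Summable fun k => ‖a k‖ := by
  have h1 : ∑' k, ‖a k‖ₑ ≠ ∞ := by
    refine ne_top_of_le_ne_top ?_ (tsum_enorm_le (s := s) a)
    exact ENNReal.mul_ne_top (l2_wt_ne_top hs) (ne_top_of_le_ne_top ENNReal.ofReal_ne_top h.2)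
  have h2 := ENNReal.summable_toReal h1
  simpa using h2

lemma summable_conv {a b : FSeq} {X : ℝ} (ha : ∀ k, ‖a k‖ ≤ X) (hb : Summable fun k => ‖b k‖)
    (k : ℤ) : Summable fun j => a (k - j) * b j := by
  refine Summable.of_norm_bounded (hb.mul_left X) fun j => ?_
  rw [norm_mul]
  gcongr
  exact ha _

lemma norm_conv_le {a b : FSeq} {X : ℝ} (ha : ∀ k, ‖a k‖ ≤ X) (hb : Summable fun k => ‖b k‖)
    (k : ℤ) : ‖conv a b k‖ ≤ X * ∑' j, ‖b j‖ := by
  unfold conv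
  rw [← tsum_mul_left]
  refine tsum_of_norm_bounded (hb.mul_left X).hasSum fun j => ?_
  rw [norm_mul]
  gcongr
  exact ha _

lemma conv_sub_left {a a' b : FSeq} {X X' : ℝ} (ha : ∀ k, ‖a k‖ ≤ X) (ha' : ∀ k, ‖a' k‖ ≤ X')
    (hb : Summable fun k => ‖b k‖) : conv (a - a') b = conv a b - conv a' b := by
  funext k
  simp only [conv, Pi.sub_apply, sub_mul]
  exact (summable_conv ha hb k).tsum_sub (summable_conv ha' hb k)

lemma conv_sub_right {a b b' : FSeq} {X : ℝ} (ha : ∀ k, ‖a k‖ ≤ X)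
    (hb : Summable fun k => ‖b k‖) (hb' : Summable fun k => ‖b' k‖) :
    conv a (b - b') = conv a b - conv a b' := by
  funext k
  simp only [conv, Pi.sub_apply, mul_sub]
  exact (summable_conv ha hb k).tsum_sub (summable_conv ha hb' k)

lemma conjS_sub (a b : FSeq) : conjS (a - b) = conjS a - conjS b := by
  funext k; simp [conjS]

lemma cubicTerm_sub {s : ℝ} (hs : 1 / 2 < s) {a b : FSeq} {X Y : ℝ} (ha : Bd s a X)
    (hb : Bd s b Y) :
    cubicTerm a - cubicTerm b = conv (conv (conjS (a - b)) a) a + conv (conv (conjS b) (a - b)) a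
      + conv (conv (conjS b) b) (a - b) := by
  have hs0 : 0 ≤ s := by linarith
  have h1 := ha.conjS.coeff_le hs0
  have h2 := hb.conjS.coeff_le hs0
  have h3 := ha.summable hs
  have h4 := hb.summable hs
  rw [conjS_sub, conv_sub_left h1 h2 h3, conv_sub_right h2 h3 h4,
    conv_sub_left (norm_conv_le h1 h3) (norm_conv_le h2 h3) h3,
    conv_sub_left (norm_conv_le h2 h3) (norm_conv_le h2 h4) h3,
    conv_sub_right (norm_conv_le h2 h4) h3 h4]
  simp only [cubicTerm]
  abel

/-- Local Lipschitz bound for the cubic nonlinearity in `H^s`. -/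
lemma Bd.cubic_sub {s : ℝ} (hs : 1 / 2 < s) (hs1 : s ≤ 1) {a b : FSeq} {X δ : ℝ} (ha : Bd s a X)
    (hb : Bd s b X) (hab : Bd s (a - b) δ) :
    Bd s (cubicTerm a - cubicTerm b) (3 * cAlg s * X ^ 2 * δ) := by
  rw [cubicTerm_sub hs ha hb]
  refine (((hab.conjS.conv3 hs hs1 ha ha).add (hb.conjS.conv3 hs hs1 hab ha)).add
    (hb.conjS.conv3 hs hs1 hb hab)).mono (le_of_eq ?_)
  ring

lemma Bd.cubic {s : ℝ} (hs : 1 / 2 < s) (hs1 : s ≤ 1) {a : FSeq} {X : ℝ} (ha : Bd s a X) :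
    Bd s (cubicTerm a) (cAlg s * X ^ 3) :=
  (ha.conjS.conv3 hs hs1 ha ha).mono (le_of_eq (by ring))

/-- Minkowski's integral inequality for coefficientwise integrals. -/
lemma Bd.integral {s : ℝ} {t : ℝ} (ht : 0 ≤ t) {h : ℝ → FSeq} {X : ℝ}
    (hc : ∀ k, ContinuousOn (fun r => h r k) (Set.Icc 0 t))
    (hb : ∀ r ∈ Set.Icc 0 t, Bd s (h r) X) :
    Bd s (fun k => ∫ r in (0 : ℝ)..t, h r k) (t * X) := by
  have hX : 0 ≤ X := (hb 0 ⟨le_rfl, ht⟩).1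
  refine ⟨mul_nonneg ht hX, ?_⟩
  unfold en
  rw [l2_le_iff]
  set μ := volume.restrict (Set.Ioc 0 t) with hμ
  have hμt : μ Set.univ = ENNReal.ofReal t := by simp [hμ]
  have hmeas : ∀ k, AEStronglyMeasurable (fun r => h r k) μ := fun k =>
    ((hc k).mono Set.Ioc_subset_Icc_self).aestronglyMeasurable measurableSet_Ioc
  have h1 : ∀ k, (wt s k * ‖∫ r in (0 : ℝ)..t, h r k‖ₑ) ^ 2 ≤
      ENNReal.ofReal t * ∫⁻ r, (wt s k * ‖h r k‖ₑ) ^ 2 ∂μ := by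
    intro k
    rw [intervalIntegral.integral_of_le ht]
    have h2 : ‖∫ r in Set.Ioc 0 t, h r k‖ₑ ≤ ∫⁻ r, ‖h r k‖ₑ ∂μ :=
      enorm_integral_le_lintegral_enorm _
    have h3 : (∫⁻ r, ‖h r k‖ₑ ∂μ) ^ 2 ≤ ENNReal.ofReal t * ∫⁻ r, ‖h r k‖ₑ ^ 2 ∂μ := by
      have h4 := ENNReal.lintegral_mul_le_Lp_mul_Lq μ Real.HolderConjugate.two_two
        (f := fun r => ‖h r k‖ₑ) (g := fun _ => 1) (hmeas k).enorm aemeasurable_const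
      simp only [Pi.mul_apply, mul_one, ENNReal.rpow_ofNat] at h4
      calc _ ≤ _ := pow_le_pow_left' h4 2
        _ = _ := by
          rw [mul_pow, ← ENNReal.rpow_natCast, ← ENNReal.rpow_natCast, ← ENNReal.rpow_mul,
            ← ENNReal.rpow_mul]
          norm_num
          rw [mul_comm, hμt]
    calc _ ≤ (wt s k * ∫⁻ r, ‖h r k‖ₑ ∂μ) ^ 2 := by gcongr
      _ ≤ wt s k ^ 2 * (ENNReal.ofReal t * ∫⁻ r, ‖h r k‖ₑ ^ 2 ∂μ) := by
          rw [mul_pow]; gcongr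
      _ = _ := by
          simp_rw [mul_pow]
          rw [lintegral_const_mul' _ _ (ENNReal.pow_ne_top (wt_ne_top s k))]
          ring
  calc _ ≤ ∑' k, ENNReal.ofReal t * ∫⁻ r, (wt s k * ‖h r k‖ₑ) ^ 2 ∂μ := ENNReal.tsum_le_tsum h1
    _ = ENNReal.ofReal t * ∫⁻ r, ∑' k, (wt s k * ‖h r k‖ₑ) ^ 2 ∂μ := by
        rw [ENNReal.tsum_mul_left, lintegral_tsum]
        intro k
        exact ((hmeas k).enorm.const_mul _).pow_const 2
    _ ≤ ENNReal.ofReal t * ∫⁻ _, ENNReal.ofReal X ^ 2 ∂μ := by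
        refine mul_le_mul' le_rfl ?_
        refine setLIntegral_mono measurable_const fun r hr => ?_
        rw [← l2_le_iff]
        exact (hb r (Set.Ioc_subset_Icc_self hr)).2
    _ = _ := by
        rw [lintegral_const, hμt, ENNReal.ofReal_mul ht]
        ring

/-! ### The exact solution: regularity of the Fourier coefficients -/

lemma Bd.inHs {s : ℝ} {a : FSeq} {X : ℝ} (h : Bd s a X) : InHs s a :=
  (inHs_iff s a).2 (ne_top_of_le_ne_top ENNReal.ofReal_ne_top h.2)

/-- A solution is bounded in `H¹` on its compact time interval (qualitatively). -/
lemma sol_bounded {lam T : ℝ} {u0 : FSeq} {u : ℝ → FSeq} (hu : IsNLSSolution lam T u0 u) :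
    ∃ M : ℝ, ∀ t ∈ Set.Icc (0 : ℝ) T, Bd 1 (u t) M := by
  obtain ⟨-, h1, h2, -⟩ := hu
  refine isCompact_Icc.induction_on (p := fun S => ∃ M : ℝ, ∀ t ∈ S ∩ Set.Icc (0 : ℝ) T, Bd 1 (u t) M)
    ⟨0, by simp⟩ ?_ ?_ ?_ |>.imp fun M hM t ht => hM t ⟨ht, ht⟩
  · rintro S S' hS ⟨M, hM⟩
    exact ⟨M, fun t ht => hM t ⟨hS ht.1, ht.2⟩⟩
  · rintro S S' ⟨M, hM⟩ ⟨M', hM'⟩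
    refine ⟨max M M', ?_⟩
    rintro t ⟨ht | ht, ht'⟩
    · exact (hM t ⟨ht, ht'⟩).mono (le_max_left _ _)
    · exact (hM' t ⟨ht, ht'⟩).mono (le_max_right _ _)
  · intro t₀ ht₀
    refine ⟨_, (h2 t₀ ht₀).eventually_le_const (zero_lt_one), hnorm 1 (u t₀) + 1, ?_⟩
    rintro t ⟨ht, ht'⟩
    have ha := Bd_of_hnorm (h1 t₀ ht₀)
    have hb := (Bd_of_hnorm ((Bd_of_hnorm (h1 t ht')).sub ha).inHs).mono ht
    simpa using ha.add hb

lemma sol_diff_bd {lam T : ℝ} {u0 : FSeq} {u : ℝ → FSeq} (hu : IsNLSSolution lam T u0 u) {t t' : ℝ}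
    (ht : t ∈ Set.Icc 0 T) (ht' : t' ∈ Set.Icc 0 T) : Bd 1 (u t - u t') (hnorm 1 (u t - u t')) :=
  Bd_of_hnorm ((Bd_of_hnorm (hu.2.1 t ht)).sub (Bd_of_hnorm (hu.2.1 t' ht'))).inHs

lemma continuousOn_of_bound {T : ℝ} {d : ℝ → ℝ → ℝ} {C : ℝ}
    (hd : ∀ t₀ ∈ Set.Icc (0 : ℝ) T, Filter.Tendsto (fun t => d t t₀)
      (nhdsWithin t₀ (Set.Icc (0 : ℝ) T)) (nhds 0)) {f : ℝ → ℂ}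
    (hf : ∀ t ∈ Set.Icc (0 : ℝ) T, ∀ t' ∈ Set.Icc (0 : ℝ) T, ‖f t - f t'‖ ≤ C * d t t') :
    ContinuousOn f (Set.Icc 0 T) := by
  intro t₀ ht₀
  rw [ContinuousWithinAt, tendsto_iff_norm_sub_tendsto_zero]
  have h := (hd t₀ ht₀).const_mul C
  rw [mul_zero] at h
  refine squeeze_zero' (Filter.Eventually.of_forall fun t => norm_nonneg _) ?_ h
  filter_upwards [self_mem_nhdsWithin] with t ht
  exact hf t ht t₀ ht₀

lemma sol_continuousOn {lam T : ℝ} {u0 : FSeq} {u : ℝ → FSeq} (hu : IsNLSSolution lam T u0 u) (k : ℤ) :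
    ContinuousOn (fun t => u t k) (Set.Icc 0 T) :=
  continuousOn_of_bound (C := 1) hu.2.2.1 fun t ht t' ht' => by
    rw [one_mul]
    exact (sol_diff_bd hu ht ht').coeff_le zero_le_one k

lemma sol_cubic_continuousOn {lam T : ℝ} {u0 : FSeq} {u : ℝ → FSeq} (hu : IsNLSSolution lam T u0 u)
    (k : ℤ) : ContinuousOn (fun t => cubicTerm (u t) k) (Set.Icc 0 T) := by
  obtain ⟨M, hM⟩ := sol_bounded hu
  exact continuousOn_of_bound (C := 3 * cAlg 1 * M ^ 2) hu.2.2.1 fun t ht t' ht' =>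
    (Bd.cubic_sub (by norm_num) le_rfl (hM t ht) (hM t' ht') (sol_diff_bd hu ht ht')).coeff_le
      zero_le_one k

/-- Each Fourier coefficient solves the ordinary differential equation
`u_k' = -ik² u_k - iλ (|u|²u)_k`. -/
lemma sol_hasDerivAt {lam T : ℝ} {u0 : FSeq} {u : ℝ → FSeq} (hu : IsNLSSolution lam T u0 u)
    (k : ℤ) {t : ℝ} (ht : t ∈ Set.Ioo 0 T) :
    HasDerivAt (fun t => u t k) (-I * (k : ℂ) ^ 2 * u t k - I * lam * cubicTerm (u t) k) t := by
  have hT : (0 : ℝ) ≤ T := (ht.1.trans ht.2).le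

  set g : ℝ → ℂ := Set.IccExtend hT ((Set.Icc 0 T).domRestrict fun r => cubicTerm (u r) k) with hg
  have hgc : Continuous g := (sol_cubic_continuousOn hu k).domRestrict.Icc_extend'
  have hge : ∀ r ∈ Set.Icc 0 T, g r = cubicTerm (u r) k := fun r hr => by
    rw [hg, Set.IccExtend_of_mem _ _ hr]; rfl
  have hG : ∀ t : ℝ, HasDerivAt (fun t => ∫ r in (0 : ℝ)..t, exp (I * (r : ℂ) * (k : ℂ) ^ 2) * g r)
      (exp (I * (t : ℂ) * (k : ℂ) ^ 2) * g t) t := fun t =>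
    (Continuous.integral_hasStrictDerivAt (by fun_prop) 0 t).hasDerivAt
  have hE : HasDerivAt (fun t : ℝ => exp (-I * (t : ℂ) * (k : ℂ) ^ 2))
      (exp (-I * (t : ℂ) * (k : ℂ) ^ 2) * (-I * (k : ℂ) ^ 2)) t := by
    have h1 : HasDerivAt (fun t : ℝ => -I * (t : ℂ) * (k : ℂ) ^ 2) (-I * 1 * (k : ℂ) ^ 2) t :=
      ((Complex.ofRealCLM.hasDerivAt (x := t)).const_mul (-I)).mul_const _
    simpa using h1.cexp
  have hF := hE.mul (((hG t).const_mul (I * lam)).const_sub (u0 k))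
  have heq : ∀ r ∈ Set.Icc 0 T, u r k = exp (-I * (r : ℂ) * (k : ℂ) ^ 2) *
      (u0 k - I * lam * ∫ r in (0 : ℝ)..r, exp (I * (r : ℂ) * (k : ℂ) ^ 2) * g r) := by
    intro r hr
    rw [hu.2.2.2 r hr k, mul_sub, mul_left_comm (exp (-I * (r : ℂ) * (k : ℂ) ^ 2)) (I * lam),
      ← intervalIntegral.integral_const_mul (exp (-I * (r : ℂ) * (k : ℂ) ^ 2))]
    congr 2
    refine intervalIntegral.integral_congr fun q hq => ?_
    rw [Set.uIcc_of_le hr.1] at hq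
    rw [hge q ⟨hq.1, hq.2.trans hr.2⟩, ← mul_assoc, ← Complex.exp_add]
    congr 2
    push_cast
    ring
  have hev : (fun t => u t k) =ᶠ[nhds t] fun r : ℝ => exp (-I * (r : ℂ) * (k : ℂ) ^ 2) *
      (u0 k - I * lam * ∫ r in (0 : ℝ)..r, exp (I * (r : ℂ) * (k : ℂ) ^ 2) * g r) := by
    filter_upwards [Ioo_mem_nhds ht.1 ht.2] with r hr
    exact heq r (Set.Ioo_subset_Icc_self hr)
  refine (HasDerivAt.congr_of_eventuallyEq hF hev).congr_deriv ?_
  rw [heq t (Set.Ioo_subset_Icc_self ht), hge t (Set.Ioo_subset_Icc_self ht)]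
  have h1 : exp (-I * (t : ℂ) * (k : ℂ) ^ 2) * exp (I * (t : ℂ) * (k : ℂ) ^ 2) = 1 := by
    rw [← Complex.exp_add]; simp
  linear_combination (-I * lam * cubicTerm (u t) k) * h1

/-! ### Finite frequency boxes -/

/-- The frequencies `|k| ≤ N`. -/
def bx (N : ℕ) : Finset ℤ := Finset.Icc (-(N : ℤ)) N

lemma mem_bx {N : ℕ} {k : ℤ} : k ∈ bx N ↔ |k| ≤ (N : ℤ) := by
  rw [bx, Finset.mem_Icc, abs_le]

lemma neg_mem_bx {N : ℕ} {k : ℤ} : -k ∈ bx N ↔ k ∈ bx N := by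
  rw [mem_bx, mem_bx, abs_neg]

/-- `a` is a trigonometric polynomial with modes in `B`. -/
def Supp (B : Finset ℤ) (a : FSeq) : Prop := ∀ k, k ∉ B → a k = 0

lemma supp_piN (N : ℕ) (a : FSeq) : Supp (bx N) (piN N a) := fun k hk => by
  rw [mem_bx] at hk; simp [piN, hk]

lemma piN_of_supp {N : ℕ} {a : FSeq} (h : Supp (bx N) a) : piN N a = a := by
  funext k
  unfold piN
  split_ifs with hk
  · rfl
  · exact (h k (by rwa [mem_bx])).symm

lemma Supp.conjS {N : ℕ} {a : FSeq} (h : Supp (bx N) a) : Supp (bx N) (conjS a) := fun k hk => by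
  unfold _root_.conjS
  rw [h (-k) (by rwa [neg_mem_bx]), map_zero]

lemma Supp.mul {B : Finset ℤ} {a : FSeq} (h : Supp B a) (μ : ℤ → ℂ) :
    Supp B (fun k => μ k * a k) := fun k hk => by simp only; rw [h k hk, mul_zero]

lemma sum_bx_neg {N : ℕ} (f : ℤ → ℂ) : ∑ k ∈ bx N, f (-k) = ∑ k ∈ bx N, f k :=
  Finset.sum_equiv (Equiv.neg ℤ) (fun i => by simp [neg_mem_bx]) (fun i _ => rfl)

lemma conv_comm (a b : FSeq) : conv a b = conv b a := by
  funext k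
  unfold conv
  rw [← (Equiv.subLeft k).tsum_eq]
  refine tsum_congr fun j => ?_
  simp [mul_comm]

lemma conv_eq_sum {B : Finset ℤ} (a : FSeq) {b : FSeq} (hb : Supp B b) (k : ℤ) :
    conv a b k = ∑ j ∈ B, a (k - j) * b j :=
  tsum_eq_sum fun j hj => by rw [hb j hj, mul_zero]

/-- The trilinear sum `∑_{p+q+r=k} m(p,q,r) a_p b_q c_r` over a box. -/
def triS (B : Finset ℤ) (m : ℤ → ℤ → ℤ → ℂ) (a b c : FSeq) (k : ℤ) : ℂ :=
  ∑ p ∈ B, ∑ q ∈ B, ∑ r ∈ B, if p + q + r = k then m p q r * (a p * b q * c r) else 0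

lemma conv_conv_eq {B : Finset ℤ} {a b c : FSeq} (ha : Supp B a) (hb : Supp B b) (hc : Supp B c)
    (μ : ℤ → ℂ) (k : ℤ) :
    conv (fun m => μ m * conv a b m) c k = triS B (fun p q _ => μ (p + q)) a b c k := by
  rw [conv_eq_sum _ hc, triS]
  simp_rw [conv_eq_sum _ hb]
  rw [Finset.sum_comm' (t' := B) (s' := fun _ => B) (by simp)]
  rw [Finset.sum_congr rfl fun q _ => Finset.sum_comm]
  rw [Finset.sum_comm]
  refine Finset.sum_congr rfl fun r _ => ?_
  rw [Finset.mul_sum, Finset.sum_mul]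
  refine Finset.sum_congr rfl fun q _ => ?_
  have h1 : ∀ p, (if p + q + r = k then μ (p + q) * (a p * b q * c r) else 0) =
      if p = k - r - q then μ (k - r) * (a (k - r - q) * b q) * c r else 0 := by
    intro p
    by_cases h : p = k - r - q
    · subst h
      rw [if_pos (by ring), if_pos rfl, show k - r - q + q = k - r by ring]; ring
    · rw [if_neg h, if_neg (fun h' => h (by rw [← h']; ring))]
  simp_rw [h1]
  rw [Finset.sum_ite_eq' B]
  split_ifs with h
  · rfl
  · rw [ha _ h]; ring

/-! ### Symmetries of the quartic form -/

/-- The quartic form `∑_{i+j=l+m} conj x_i conj y_j z_l v_m` over a finite set of frequencies. -/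
def quart (B : Finset ℤ) (x y z v : FSeq) : ℂ :=
  ∑ i ∈ B, ∑ j ∈ B, ∑ l ∈ B, ∑ m ∈ B,
    if i + j = l + m then conj (x i) * conj (y j) * z l * v m else 0

lemma quart_swap (B : Finset ℤ) (x y z v : FSeq) : quart B x y z v = quart B y x z v := by
  unfold quart
  rw [Finset.sum_comm]
  refine Finset.sum_congr rfl fun i _ => Finset.sum_congr rfl fun j _ =>
    Finset.sum_congr rfl fun l _ => Finset.sum_congr rfl fun m _ => ?_
  rw [add_comm j i, mul_comm (conj (x j))]

lemma quart_swap' (B : Finset ℤ) (x y z v : FSeq) : quart B x y z v = quart B x y v z := by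
  unfold quart
  refine Finset.sum_congr rfl fun i _ => Finset.sum_congr rfl fun j _ => ?_
  rw [Finset.sum_comm]
  refine Finset.sum_congr rfl fun l _ => Finset.sum_congr rfl fun m _ => ?_
  rw [add_comm m l, mul_right_comm]

lemma conj_quart (B : Finset ℤ) (x y z v : FSeq) :
    conj (quart B x y z v) = quart B z v x y := by
  unfold quart
  simp only [map_sum]
  have h1 : ∀ F : ℤ → ℤ → ℤ → ℤ → ℂ, (∑ i ∈ B, ∑ j ∈ B, ∑ l ∈ B, ∑ m ∈ B, F i j l m) =
      ∑ l ∈ B, ∑ m ∈ B, ∑ i ∈ B, ∑ j ∈ B, F i j l m := by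
    intro F
    calc _ = ∑ i ∈ B, ∑ l ∈ B, ∑ j ∈ B, ∑ m ∈ B, F i j l m :=
          Finset.sum_congr rfl fun i _ => Finset.sum_comm
      _ = ∑ l ∈ B, ∑ i ∈ B, ∑ m ∈ B, ∑ j ∈ B, F i j l m := by
          rw [Finset.sum_comm]
          exact Finset.sum_congr rfl fun i _ => Finset.sum_congr rfl fun l _ => Finset.sum_comm
      _ = _ := Finset.sum_congr rfl fun i _ => Finset.sum_comm
  rw [h1]
  refine Finset.sum_congr rfl fun l _ => Finset.sum_congr rfl fun m _ =>
    Finset.sum_congr rfl fun i _ => Finset.sum_congr rfl fun j _ => ?_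
  by_cases h : i + j = l + m
  · rw [if_pos h, if_pos h.symm]; simp; ring
  · rw [if_neg h, if_neg (Ne.symm h), map_zero]

/-- Mass and momentum are conserved by the truncated cubic term. -/
lemma quart_im {B : Finset ℤ} {w : FSeq} :
    (quart B w w w w).im = 0 ∧ (quart B (fun k => (k : ℂ) * w k) w w w).im = 0 := by
  constructor
  · rw [← Complex.conj_eq_iff_im, conj_quart]
  · rw [← Complex.conj_eq_iff_im, conj_quart]
    have h1 : quart B (fun k => (k : ℂ) * w k) w w w + quart B w (fun k => (k : ℂ) * w k) w w =
        quart B w w (fun k => (k : ℂ) * w k) w + quart B w w w (fun k => (k : ℂ) * w k) := by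
      unfold quart
      simp only [← Finset.sum_add_distrib]
      refine Finset.sum_congr rfl fun i _ => Finset.sum_congr rfl fun j _ =>
        Finset.sum_congr rfl fun l _ => Finset.sum_congr rfl fun m _ => ?_
      by_cases h : i + j = l + m
      · have h' : (i : ℂ) + j = l + m := by exact_mod_cast h
        simp only [if_pos h, map_mul, map_intCast]
        linear_combination (conj (w i) * conj (w j) * w l * w m) * h'
      · simp only [if_neg h]
    rw [quart_swap B w, quart_swap' B w w w] at h1
    linear_combination -h1 / 2

lemma sum_conj_cubic {K : ℕ} (x w : FSeq) (hw : Supp (bx K) w) :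
    ∑ k ∈ bx K, conj (x k) * cubicTerm w k = quart (bx K) x w w w := by
  unfold quart
  refine Finset.sum_congr rfl fun k _ => ?_
  have h1 := conv_conv_eq hw.conjS hw hw (fun _ => 1) k
  simp only [one_mul, triS] at h1
  rw [show cubicTerm w k = conv (fun m => conv (conjS w) w m) w k from rfl, h1, Finset.mul_sum,
    ← sum_bx_neg]
  refine Finset.sum_congr rfl fun b _ => ?_
  simp_rw [Finset.mul_sum]
  refine Finset.sum_congr rfl fun l _ => Finset.sum_congr rfl fun m _ => ?_
  by_cases h : k + b = l + m
  · rw [if_pos h, if_pos (by linarith)]; simp [conjS]; ring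
  · rw [if_neg h, if_neg (fun h' => h (by linarith)), mul_zero]

lemma hasDerivAt_quart {B : Finset ℤ} {w : ℝ → FSeq} {w' : FSeq} {t : ℝ}
    (h : ∀ k, HasDerivAt (fun t => w t k) (w' k) t) :
    HasDerivAt (fun t => (quart B (w t) (w t) (w t) (w t)).re)
      (4 * (quart B w' (w t) (w t) (w t)).re) t := by
  have hc : ∀ k, HasDerivAt (fun t => conj (w t k)) (conj (w' k)) t := fun k => (h k).star
  have h1 : HasDerivAt (fun t => quart B (w t) (w t) (w t) (w t))
      (quart B w' (w t) (w t) (w t) + quart B (w t) w' (w t) (w t) + quart B (w t) (w t) w' (w t)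
        + quart B (w t) (w t) (w t) w') t := by
    unfold quart
    simp only [← Finset.sum_add_distrib]
    refine HasDerivAt.fun_sum fun i _ => HasDerivAt.fun_sum fun j _ =>
      HasDerivAt.fun_sum fun l _ => HasDerivAt.fun_sum fun m _ => ?_
    by_cases hh : i + j = l + m
    · simp only [if_pos hh]
      exact ((((hc i).mul (hc j)).mul (h l)).mul (h m)).congr_deriv (by simp only [Pi.mul_apply]; ring)
    · simp only [if_neg hh]
      simpa using hasDerivAt_const t (0 : ℂ)
  have h2 : HasDerivAt (fun t => (quart B (w t) (w t) (w t) (w t)).re) _ t :=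
    Complex.reCLM.hasFDerivAt.comp_hasDerivAt t h1
  refine h2.congr_deriv ?_
  have e1 := quart_swap B (w t) w' (w t) (w t)
  have e2 := conj_quart B w' (w t) (w t) (w t)
  have e3 := quart_swap' B (w t) (w t) (w t) w'
  rw [e1, e3, ← e2]
  simp
  ring

/-! ### Conservation laws of the exact solution -/

/-- Cauchy–Schwarz for weighted pairings of two `H^s` sequences. -/
lemma pair_enorm_le {s : ℝ} {a b : FSeq} {X Y : ℝ} (ha : Bd s a X) (hb : Bd s b Y) {μ : ℤ → ℂ}
    (hμ : ∀ k : ℤ, ‖μ k‖ ≤ (1 + (k : ℝ) ^ 2) ^ s) :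
    ∑' k, ‖μ k * (conj (a k) * b k)‖ₑ ≤ ENNReal.ofReal (X * Y) := by
  calc _ ≤ ∑' k, (wt s k * ‖a k‖ₑ) * (wt s k * ‖b k‖ₑ) := by
        refine ENNReal.tsum_le_tsum fun k => ?_
        rw [enorm_mul, enorm_mul, RCLike.enorm_conj]
        have h1 : ‖μ k‖ₑ ≤ wt s k ^ 2 := by
          rw [wt_sq, wt, ← ofReal_norm, show 2 * s / 2 = s by ring]
          exact ENNReal.ofReal_le_ofReal (hμ k)
        calc _ ≤ wt s k ^ 2 * (‖a k‖ₑ * ‖b k‖ₑ) := by gcongr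
          _ = _ := by ring
    _ ≤ en s a * en s b := tsum_mul_le_l2 _ _
    _ ≤ _ := by
        rw [ENNReal.ofReal_mul ha.1]
        exact mul_le_mul' ha.2 hb.2

lemma pair_summable {s : ℝ} {a b : FSeq} {X Y : ℝ} (ha : Bd s a X) (hb : Bd s b Y) {μ : ℤ → ℂ}
    (hμ : ∀ k : ℤ, ‖μ k‖ ≤ (1 + (k : ℝ) ^ 2) ^ s) :
    Summable fun k => ‖μ k * (conj (a k) * b k)‖ := by
  have h2 := ENNReal.summable_toReal (ne_top_of_le_ne_top ENNReal.ofReal_ne_top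
    (pair_enorm_le ha hb hμ))
  simpa only [toReal_enorm] using h2

lemma pair_tsum_norm_le {s : ℝ} {a b : FSeq} {X Y : ℝ} (ha : Bd s a X) (hb : Bd s b Y) {μ : ℤ → ℂ}
    (hμ : ∀ k : ℤ, ‖μ k‖ ≤ (1 + (k : ℝ) ^ 2) ^ s) :
    ∑' k, ‖μ k * (conj (a k) * b k)‖ ≤ X * Y := by
  have h1 := pair_enorm_le ha hb hμ
  have h2 := ENNReal.toReal_le_of_le_ofReal (mul_nonneg ha.1 hb.1) h1
  rw [ENNReal.tsum_toReal_eq fun _ => enorm_ne_top] at h2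
  simpa only [toReal_enorm] using h2

lemma pair_sum_le {s : ℝ} {a b : FSeq} {X Y : ℝ} (ha : Bd s a X) (hb : Bd s b Y) {μ : ℤ → ℂ}
    (hμ : ∀ k : ℤ, ‖μ k‖ ≤ (1 + (k : ℝ) ^ 2) ^ s) (F : Finset ℤ) :
    ‖∑ k ∈ F, μ k * (conj (a k) * b k)‖ ≤ X * Y :=
  (norm_sum_le _ _).trans (((pair_summable ha hb hμ).sum_le_tsum F fun _ _ => norm_nonneg _).trans
    (pair_tsum_norm_le ha hb hμ))

lemma tendsto_bx : Filter.Tendsto bx Filter.atTop Filter.atTop := by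
  refine Filter.tendsto_atTop_finset_of_monotone (fun a b hab => ?_) fun k => ⟨k.natAbs, ?_⟩
  · intro k
    rw [mem_bx, mem_bx]
    intro h
    have : (a : ℤ) ≤ b := by exact_mod_cast hab
    linarith
  · rw [mem_bx]; simp

lemma tendsto_hnorm_tail {a : FSeq} (ha : InHs 1 a) :
    Filter.Tendsto (fun K => hnorm 1 (a - piN K a)) Filter.atTop (nhds 0) := by
  unfold hnorm
  have h : Filter.Tendsto (fun K => ∑' k : ℤ, (1 + (k : ℝ) ^ 2) ^ (1 : ℝ) * ‖(a - piN K a) k‖ ^ 2)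
      Filter.atTop (nhds (∑' _ : ℤ, (0 : ℝ))) := by
    refine tendsto_tsum_of_dominated_convergence ha (fun k => ?_) ?_
    · refine tendsto_const_nhds.congr' ?_
      filter_upwards [Filter.eventually_ge_atTop k.natAbs] with K hK
      have : |k| ≤ (K : ℤ) := by rw [Int.abs_eq_natAbs]; exact_mod_cast hK
      simp [piN, this]
    · refine Filter.Eventually.of_forall fun K k => ?_
      rw [Real.norm_of_nonneg (by positivity)]
      gcongr
      simp only [Pi.sub_apply, piN]
      split_ifs <;> simp
  rw [tsum_zero] at h
  have h2 := ((h.const_mul (2 * Real.pi)).sqrt)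
  simpa using h2

/-- A family of functions with uniformly bounded derivatives tending to zero pointwise is
asymptotically constant. -/
lemma tendsto_const_of_deriv {T C : ℝ} {G : ℕ → ℝ → ℝ} {D : ℕ → ℝ → ℝ}
    (hc : ∀ K, ContinuousOn (G K) (Set.Icc 0 T))
    (hd : ∀ K, ∀ t ∈ Set.Ioo 0 T, HasDerivAt (G K) (D K t) t)
    (hb : ∀ K, ∀ t ∈ Set.Ioo 0 T, |D K t| ≤ C)
    (hl : ∀ t ∈ Set.Ioo 0 T, Filter.Tendsto (fun K => D K t) Filter.atTop (nhds 0))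
    {t : ℝ} (ht : t ∈ Set.Icc 0 T) :
    Filter.Tendsto (fun K => G K t - G K 0) Filter.atTop (nhds 0) := by
  have hsub : Set.Ioo 0 t ⊆ Set.Ioo 0 T := Set.Ioo_subset_Ioo_right ht.2
  have hder : ∀ K, ∀ r ∈ Set.Ioo 0 t, deriv (G K) r = D K r := fun K r hr => (hd K r (hsub hr)).deriv
  have hae : ∀ᵐ r ∂volume, r ∈ Set.uIoc 0 t → r ∈ Set.Ioo 0 t := by
    have : ∀ᵐ r ∂(volume : Measure ℝ), r ≠ t := by simp [ae_iff]
    filter_upwards [this] with r hr hr'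
    rw [Set.uIoc_of_le ht.1] at hr'
    exact ⟨hr'.1, lt_of_le_of_ne hr'.2 hr⟩
  have hbd : ∀ K, ∀ᵐ r ∂volume, r ∈ Set.uIoc 0 t → ‖deriv (G K) r‖ ≤ C := fun K => by
    filter_upwards [hae] with r hr hr'
    rw [hder K r (hr hr')]
    exact hb K r (hsub (hr hr'))
  have h_ftc : ∀ K, ∫ r in (0 : ℝ)..t, deriv (G K) r = G K t - G K 0 := by
    intro K
    refine intervalIntegral.integral_eq_sub_of_hasDerivAt_of_le ht.1
      ((hc K).mono (Set.Icc_subset_Icc_right ht.2)) (fun r hr => ?_) ?_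
    · rw [hder K r hr]; exact hd K r (hsub hr)
    · refine (intervalIntegrable_const (c := C)).mono_fun' (stronglyMeasurable_deriv _).aestronglyMeasurable ?_
      exact (ae_restrict_iff' measurableSet_uIoc).2 (hbd K)
  have h := intervalIntegral.tendsto_integral_filter_of_dominated_convergence
    (μ := volume) (a := 0) (b := t) (F := fun K r => deriv (G K) r) (f := fun _ => (0 : ℝ))
    (l := Filter.atTop) (fun _ => C)
    (Filter.Eventually.of_forall fun K => (stronglyMeasurable_deriv _).aestronglyMeasurable)
    (Filter.Eventually.of_forall hbd) intervalIntegrable_const (by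
      filter_upwards [hae] with r hr hr'
      refine (hl r (hsub (hr hr'))).congr fun K => (hder K r (hr hr')).symm)
  simpa [h_ftc] using h

/-- Evolution of a frequency-localized quadratic quantity. -/
lemma sol_hasDerivAt_quad {lam T : ℝ} {u0 : FSeq} {u : ℝ → FSeq} (hu : IsNLSSolution lam T u0 u)
    (μ : ℤ → ℝ) (F : Finset ℤ) {t : ℝ} (ht : t ∈ Set.Ioo 0 T) :
    HasDerivAt (fun t => ∑ k ∈ F, μ k * ‖u t k‖ ^ 2)
      (2 * lam * (∑ k ∈ F, (μ k : ℂ) * (conj (u t k) * cubicTerm (u t) k)).im) t := by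
  rw [Complex.im_sum, Finset.mul_sum]
  refine HasDerivAt.fun_sum fun k _ => ?_
  refine ((sol_hasDerivAt hu k ht).norm_sq.const_mul (μ k)).congr_deriv ?_
  rw [Complex.inner]
  simp [pow_two]
  ring

/-- Bound for the defect of the truncated nonlinearity. -/
lemma cubic_trunc {a : FSeq} {M : ℝ} (ha : Bd 1 a M) (K : ℕ) :
    Bd 1 (cubicTerm a - cubicTerm (piN K a)) (3 * cAlg 1 * M ^ 2 * hnorm 1 (a - piN K a)) :=
  Bd.cubic_sub (by norm_num) le_rfl ha (ha.piN K) (Bd_of_hnorm (ha.sub (ha.piN K)).inHs)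

lemma hnorm_tail_le {a : FSeq} {M : ℝ} (ha : Bd 1 a M) (K : ℕ) :
    hnorm 1 (a - piN K a) ≤ Real.sqrt (2 * Real.pi) * M := by
  refine (ha.of_norm_le fun k => ?_).hnorm_le
  simp only [Pi.sub_apply, piN]
  split_ifs <;> simp

/-- Conservation of mass (`μ = 1`) and of momentum (`μ = k`). -/
lemma sol_quad_conserved {lam T : ℝ} {u0 : FSeq} {u : ℝ → FSeq} (hl : lam = 1 ∨ lam = -1)
    (hu : IsNLSSolution lam T u0 u) {μ : ℤ → ℝ} (hμ : (∀ k, μ k = 1) ∨ (∀ k, μ k = k))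
    {t : ℝ} (ht : t ∈ Set.Icc 0 T) :
    ∑' k, μ k * ‖u t k‖ ^ 2 = ∑' k, μ k * ‖u0 k‖ ^ 2 := by
  obtain ⟨M, hM⟩ := sol_bounded hu
  have hlam : |lam| = 1 := by rcases hl with rfl | rfl <;> simp
  have hμ1 : ∀ k : ℤ, ‖((μ k : ℝ) : ℂ)‖ ≤ (1 + (k : ℝ) ^ 2) ^ (1 : ℝ) := by
    intro k
    rw [Real.rpow_one, Complex.norm_real, Real.norm_eq_abs]
    rcases hμ with h | h <;> rw [h k]
    · simp; positivity
    · rw [abs_le]; constructor <;> nlinarith [sq_nonneg ((k : ℝ) - 1), sq_nonneg ((k : ℝ) + 1)]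
  have h0 : (0 : ℝ) ∈ Set.Icc 0 T := ⟨le_rfl, ht.1.trans ht.2⟩
  -- the nonlinearity of the truncated function contributes nothing, by symmetry; the truncation
  -- defect tends to zero with the `H¹` tail
  have hD : ∀ K : ℕ, ∀ t ∈ Set.Ioo 0 T,
      |2 * lam * (∑ k ∈ bx K, (μ k : ℂ) * (conj (u t k) * cubicTerm (u t) k)).im| ≤
        2 * (M * (3 * cAlg 1 * M ^ 2 * hnorm 1 (u t - piN K (u t)))) := by
    intro K t ht
    have hb := hM t (Set.Ioo_subset_Icc_self ht)
    have h1 : (∑ k ∈ bx K, (μ k : ℂ) * (conj (u t k) * cubicTerm (piN K (u t)) k)).im = 0 := by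
      have h2 := sum_conj_cubic (fun k => (μ k : ℂ) * piN K (u t) k) (piN K (u t)) (supp_piN K _)
      have h3 : (∑ k ∈ bx K, (μ k : ℂ) * (conj (u t k) * cubicTerm (piN K (u t)) k)) =
          ∑ k ∈ bx K, conj ((μ k : ℂ) * piN K (u t) k) * cubicTerm (piN K (u t)) k := by
        refine Finset.sum_congr rfl fun k hk => ?_
        rw [mem_bx] at hk
        simp [piN, hk, mul_assoc]
      rw [h3, h2]
      have h4 := quart_im (B := bx K) (w := piN K (u t))
      rcases hμ with h | h
      · simpa [h] using h4.1
      · simpa [h] using h4.2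
    have h2 : (∑ k ∈ bx K, (μ k : ℂ) * (conj (u t k) * cubicTerm (u t) k)).im =
        (∑ k ∈ bx K, (μ k : ℂ) * (conj (u t k) *
          (cubicTerm (u t) - cubicTerm (piN K (u t))) k)).im := by
      rw [← sub_zero (Complex.im _), ← h1, ← Complex.sub_im, ← Finset.sum_sub_distrib]
      congr 1
      refine Finset.sum_congr rfl fun k _ => ?_
      simp only [Pi.sub_apply]; ring
    rw [h2, abs_mul, abs_mul, hlam, abs_two, mul_one]
    gcongr
    exact (Complex.abs_im_le_norm _).trans (pair_sum_le hb (cubic_trunc hb K) hμ1 _)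
  have hc := cAlg_nonneg 1
  have hM0 : 0 ≤ M := (hM 0 h0).1
  have hlim := tendsto_const_of_deriv (T := T) (G := fun K t => ∑ k ∈ bx K, μ k * ‖u t k‖ ^ 2)
    (C := 2 * (M * (3 * cAlg 1 * M ^ 2 * (Real.sqrt (2 * Real.pi) * M))))
    (fun K => continuousOn_finsetSum _ fun k _ =>
      continuousOn_const.mul ((sol_continuousOn hu k).norm.pow 2))
    (fun K t ht => sol_hasDerivAt_quad hu μ (bx K) ht)
    (fun K t ht => (hD K t ht).trans (by
      gcongr
      exact hnorm_tail_le (hM t (Set.Ioo_subset_Icc_self ht)) K))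
    (fun t ht => by
      have hb := hM t (Set.Ioo_subset_Icc_self ht)
      refine squeeze_zero_norm (hD · t ht) ?_
      have := ((((tendsto_hnorm_tail hb.inHs).const_mul (3 * cAlg 1 * M ^ 2)).const_mul M).const_mul 2)
      simpa using this) ht
  have hsum : ∀ t ∈ Set.Icc 0 T, Filter.Tendsto (fun K => ∑ k ∈ bx K, μ k * ‖u t k‖ ^ 2)
      Filter.atTop (nhds (∑' k, μ k * ‖u t k‖ ^ 2)) := by
    intro t ht
    have h1 : Summable fun k => μ k * ‖u t k‖ ^ 2 := by
      refine Summable.of_norm ((pair_summable (hM t ht) (hM t ht) hμ1).congr fun k => ?_)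
      simp [pow_two]
    exact h1.hasSum.comp tendsto_bx
  have h2 := tendsto_nhds_unique hlim ((hsum t ht).sub (hsum 0 h0))
  rw [hu.1] at h2
  linarith

/-! ### Conservation of energy and the uniform `H¹` bound -/

/-- The energy truncated to the modes `|k| ≤ K`. -/
def energyK (lam : ℝ) (K : ℕ) (a : FSeq) : ℝ :=
  ∑ k ∈ bx K, (k : ℝ) ^ 2 * ‖a k‖ ^ 2 + lam / 2 * (quart (bx K) a a a a).re

lemma quart_congr {K : ℕ} {x x' y y' z z' v v' : FSeq} (hx : ∀ k ∈ bx K, x k = x' k)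
    (hy : ∀ k ∈ bx K, y k = y' k) (hz : ∀ k ∈ bx K, z k = z' k) (hv : ∀ k ∈ bx K, v k = v' k) :
    quart (bx K) x y z v = quart (bx K) x' y' z' v' := by
  unfold quart
  refine Finset.sum_congr rfl fun i hi => Finset.sum_congr rfl fun j hj =>
    Finset.sum_congr rfl fun l hl => Finset.sum_congr rfl fun m hm => ?_
  rw [hx i hi, hy j hj, hz l hl, hv m hm]

lemma continuousOn_quart {B : Finset ℤ} {w : ℝ → FSeq} {S : Set ℝ}
    (h : ∀ k, ContinuousOn (fun t => w t k) S) :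
    ContinuousOn (fun t => (quart B (w t) (w t) (w t) (w t)).re) S := by
  refine Complex.continuous_re.comp_continuousOn ?_
  have hc : ∀ k, ContinuousOn (fun t => conj (w t k)) S := fun k =>
    Complex.continuous_conj.comp_continuousOn (h k)
  unfold quart
  refine continuousOn_finsetSum _ fun i _ => continuousOn_finsetSum _ fun j _ =>
    continuousOn_finsetSum _ fun l _ => continuousOn_finsetSum _ fun m _ => ?_
  split_ifs
  · exact (((hc i).mul (hc j)).mul (h l)).mul (h m)
  · exact continuousOn_const

/-- Conservation of energy, in the form that the truncated energies change by `o(1)` as the cutoff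
tends to infinity. -/
lemma energy_almost_conserved {lam T : ℝ} {u0 : FSeq} {u : ℝ → FSeq} (hl : lam = 1 ∨ lam = -1)
    (hu : IsNLSSolution lam T u0 u) {t : ℝ} (ht : t ∈ Set.Icc 0 T) :
    Filter.Tendsto (fun K => energyK lam K (u t) - energyK lam K (u 0)) Filter.atTop (nhds 0) := by
  obtain ⟨M, hM⟩ := sol_bounded hu
  have hlam : |lam| = 1 := by rcases hl with rfl | rfl <;> simp
  have hc := cAlg_nonneg 1
  have h0 : (0 : ℝ) ∈ Set.Icc 0 T := ⟨le_rfl, ht.1.trans ht.2⟩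
  have hM0 : 0 ≤ M := (hM 0 h0).1
  have hμ1 : ∀ k : ℤ, ‖((((k : ℝ) ^ 2 : ℝ)) : ℂ)‖ ≤ (1 + (k : ℝ) ^ 2) ^ (1 : ℝ) := by
    intro k
    rw [Real.rpow_one, Complex.norm_real, Real.norm_eq_abs, abs_of_nonneg (by positivity)]
    linarith
  have hμ2 : ∀ k : ℤ, ‖(1 : ℂ)‖ ≤ (1 + (k : ℝ) ^ 2) ^ (1 : ℝ) := by
    intro k
    rw [Real.rpow_one, norm_one]
    nlinarith
  -- the derivative of the truncated energy only sees the truncation defect of the nonlinearity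
  set D : ℕ → ℝ → ℝ := fun K t =>
    2 * lam * (∑ k ∈ bx K, (((k : ℝ) ^ 2 : ℝ) : ℂ) * (conj (u t k) *
        (cubicTerm (u t) - cubicTerm (piN K (u t))) k)).im
      + 2 * lam ^ 2 * (∑ k ∈ bx K, (1 : ℂ) * (conj (cubicTerm (u t) k) *
        (cubicTerm (u t) - cubicTerm (piN K (u t))) k)).im with hDdef
  have hD : ∀ K, ∀ t ∈ Set.Ioo 0 T, |D K t| ≤
      (2 * M + 2 * (cAlg 1 * M ^ 3)) * (3 * cAlg 1 * M ^ 2 * hnorm 1 (u t - piN K (u t))) := by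
    intro K t ht
    have hb := hM t (Set.Ioo_subset_Icc_self ht)
    refine (abs_add_le _ _).trans ?_
    rw [abs_mul, abs_mul, abs_mul, abs_mul, abs_pow, hlam, abs_two, add_mul]
    have h1 := (Complex.abs_im_le_norm _).trans
      (pair_sum_le hb (cubic_trunc hb K) hμ1 (bx K))
    have h2 := (Complex.abs_im_le_norm _).trans (pair_sum_le
      (Bd.cubic (by norm_num) le_rfl hb) (cubic_trunc hb K) (μ := fun _ => 1) hμ2 (bx K))
    simp only [one_pow, mul_one]
    linarith
  refine tendsto_const_of_deriv (T := T) (G := fun K t => energyK lam K (u t)) (D := D)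
    (C := (2 * M + 2 * (cAlg 1 * M ^ 3)) * (3 * cAlg 1 * M ^ 2 * (Real.sqrt (2 * Real.pi) * M)))
    (fun K => ?_) (fun K t ht => ?_) (fun K t ht => (hD K t ht).trans ?_) (fun t ht => ?_) ht
  · refine ContinuousOn.add (continuousOn_finsetSum _ fun k _ =>
      continuousOn_const.mul ((sol_continuousOn hu k).norm.pow 2)) ?_
    exact continuousOn_const.mul (continuousOn_quart (sol_continuousOn hu))
  · have h1 := sol_hasDerivAt_quad hu (fun k => (k : ℝ) ^ 2) (bx K) ht
    have h2 := (hasDerivAt_quart (B := bx K) (fun k => sol_hasDerivAt hu k ht)).const_mul (lam / 2)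
    refine (h1.add h2).congr_deriv ?_
    have h3 := sum_conj_cubic (fun k => -I * (k : ℂ) ^ 2 * u t k - I * lam * cubicTerm (u t) k)
      (piN K (u t)) (supp_piN K _)
    have h4 : ∀ k ∈ bx K, u t k = piN K (u t) k := fun k hk => by
      rw [mem_bx] at hk; simp [piN, hk]
    rw [quart_congr (fun _ _ => rfl) h4 h4 h4, ← h3]
    simp only [hDdef, Complex.im_sum, Complex.re_sum, Finset.mul_sum, ← Finset.sum_add_distrib]
    refine Finset.sum_congr rfl fun k _ => ?_
    simp [pow_two]
    ring
  · gcongr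
    exact hnorm_tail_le (hM t (Set.Ioo_subset_Icc_self ht)) K
  · have hb := hM t (Set.Ioo_subset_Icc_self ht)
    refine squeeze_zero_norm (hD · t ht) ?_
    have := (((tendsto_hnorm_tail hb.inHs).const_mul (3 * cAlg 1 * M ^ 2)).const_mul
      (2 * M + 2 * (cAlg 1 * M ^ 3)))
    simpa using this

/-- Bound `‖a‖_{L⁴}⁴ ≤ ‖a‖_{ℓ¹}² ‖a‖_{ℓ²}²` of the quartic form. -/
lemma norm_quart_le (B : Finset ℤ) (a : FSeq) :
    ‖quart B a a a a‖ ≤ (∑ k ∈ B, ‖a k‖) ^ 2 * ∑ k ∈ B, ‖a k‖ ^ 2 := by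
  have h1 : ∀ i l : ℤ, ∑ j ∈ B, ∑ m ∈ B, (if i + j = l + m then ‖a j‖ * ‖a m‖ else 0) ≤
      ∑ k ∈ B, ‖a k‖ ^ 2 := by
    intro i l
    have h2 : ∀ j ∈ B, ∀ m ∈ B, (if i + j = l + m then ‖a j‖ * ‖a m‖ else 0) ≤
        (if m = i + j - l then ‖a j‖ ^ 2 / 2 else 0) + (if j = l + m - i then ‖a m‖ ^ 2 / 2 else 0) := by
      intro j _ m _
      by_cases h : i + j = l + m
      · rw [if_pos h, if_pos (by linarith), if_pos (by linarith)]
        nlinarith [sq_nonneg (‖a j‖ - ‖a m‖)]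
      · rw [if_neg h, if_neg (fun h' => h (by linarith)), if_neg (fun h' => h (by linarith)), add_zero]
    refine (Finset.sum_le_sum fun j hj => Finset.sum_le_sum (h2 j hj)).trans ?_
    simp_rw [Finset.sum_add_distrib]
    rw [Finset.sum_comm (f := fun j m => if j = l + m - i then ‖a m‖ ^ 2 / 2 else 0)]
    simp_rw [Finset.sum_ite_eq']
    have h3 : ∀ g : ℤ → ℤ, ∑ j ∈ B, (if g j ∈ B then ‖a j‖ ^ 2 / 2 else 0) ≤ ∑ k ∈ B, ‖a k‖ ^ 2 / 2 :=
      fun g => Finset.sum_le_sum fun j _ => by split_ifs <;> [exact le_rfl; positivity]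
    have h4 := h3 (fun j => i + j - l)
    have h5 := h3 (fun m => l + m - i)
    rw [← Finset.sum_div] at h4 h5
    linarith
  calc ‖quart B a a a a‖ ≤ ∑ i ∈ B, ∑ j ∈ B, ∑ l ∈ B, ∑ m ∈ B,
        (if i + j = l + m then ‖a i‖ * ‖a j‖ * ‖a l‖ * ‖a m‖ else 0) := by
        unfold quart
        refine norm_sum_le_of_le _ fun i _ => norm_sum_le_of_le _ fun j _ =>
          norm_sum_le_of_le _ fun l _ => norm_sum_le_of_le _ fun m _ => ?_
        split_ifs <;> simp
    _ = ∑ i ∈ B, ∑ l ∈ B, ‖a i‖ * ‖a l‖ * ∑ j ∈ B, ∑ m ∈ B,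
        (if i + j = l + m then ‖a j‖ * ‖a m‖ else 0) := by
        refine Finset.sum_congr rfl fun i _ => ?_
        rw [Finset.sum_comm]
        refine Finset.sum_congr rfl fun l _ => ?_
        simp_rw [Finset.mul_sum]
        refine Finset.sum_congr rfl fun j _ => Finset.sum_congr rfl fun m _ => ?_
        split_ifs
        · ring
        · simp
    _ ≤ ∑ i ∈ B, ∑ l ∈ B, ‖a i‖ * ‖a l‖ * ∑ k ∈ B, ‖a k‖ ^ 2 := by
        refine Finset.sum_le_sum fun i _ => Finset.sum_le_sum fun l _ => ?_
        exact mul_le_mul_of_nonneg_left (h1 i l) (by positivity)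
    _ = _ := by
        rw [pow_two, Finset.sum_mul_sum, Finset.sum_mul]
        simp_rw [Finset.sum_mul]

/-- The sum of `⟨k⟩^{-3/2}`. -/
def S32 : ℝ := (Sw (3 / 2)).toReal

lemma sum_le_S32 (B : Finset ℤ) : ∑ k ∈ B, (1 + (k : ℝ) ^ 2) ^ (-(3 / 4) : ℝ) ≤ S32 := by
  have h1 : Sw (3 / 2) ≠ ∞ := Sw_ne_top (by norm_num)
  have h2 : ∀ k : ℤ, wt (-(3 / 2)) k = ENNReal.ofReal ((1 + (k : ℝ) ^ 2) ^ (-(3 / 4) : ℝ)) := by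
    intro k; unfold wt; norm_num
  rw [S32, ← ENNReal.ofReal_le_iff_le_toReal h1, ENNReal.ofReal_sum_of_nonneg (fun k _ => by positivity)]
  simp_rw [← h2]
  exact ENNReal.sum_le_tsum B

lemma S32_nonneg : 0 ≤ S32 := ENNReal.toReal_nonneg

/-- Gagliardo–Nirenberg type bound of the `ℓ¹` norm with a free parameter. -/
lemma sq_sum_le (B : Finset ℤ) (a : FSeq) {A : ℝ} (hA : 1 ≤ A) :
    (∑ k ∈ B, ‖a k‖) ^ 2 ≤ A ^ (-(1 / 2) : ℝ) * S32 *
      (A ^ 2 * ∑ k ∈ B, ‖a k‖ ^ 2 + ∑ k ∈ B, (k : ℝ) ^ 2 * ‖a k‖ ^ 2) := by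
  have hA0 : 0 < A := by linarith
  have h1 : (∑ k ∈ B, ‖a k‖) ^ 2 ≤ (∑ k ∈ B, (A ^ 2 + (k : ℝ) ^ 2)⁻¹) *
      ∑ k ∈ B, (A ^ 2 + (k : ℝ) ^ 2) * ‖a k‖ ^ 2 := by
    refine Finset.sum_sq_le_sum_mul_sum_of_sq_le_mul _ (fun k _ => by positivity)
      (fun k _ => by positivity) fun k _ => ?_
    have : A ^ 2 + (k : ℝ) ^ 2 ≠ 0 := by positivity
    exact (by field_simp : _ = _).le
  have h2 : ∑ k ∈ B, (A ^ 2 + (k : ℝ) ^ 2)⁻¹ ≤ A ^ (-(1 / 2) : ℝ) * S32 := by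
    refine le_trans ?_ (mul_le_mul_of_nonneg_left (sum_le_S32 B) (by positivity))
    rw [Finset.mul_sum]
    refine Finset.sum_le_sum fun k _ => ?_
    have h3 : 0 < A ^ 2 + (k : ℝ) ^ 2 := by positivity
    have h4 : (A ^ 2 + (k : ℝ) ^ 2)⁻¹ =
        (A ^ 2 + (k : ℝ) ^ 2) ^ (-(1 / 4) : ℝ) * (A ^ 2 + (k : ℝ) ^ 2) ^ (-(3 / 4) : ℝ) := by
      rw [← Real.rpow_add h3, ← Real.rpow_neg_one]; norm_num
    have h5 : A ^ (-(1 / 2) : ℝ) = (A ^ 2) ^ (-(1 / 4) : ℝ) := by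
      rw [← Real.rpow_natCast, ← Real.rpow_mul hA0.le]; norm_num
    rw [h4, h5]
    gcongr ?_ * ?_
    · exact Real.rpow_le_rpow_of_nonpos (by positivity) (by nlinarith [sq_nonneg (k : ℝ)]) (by norm_num)
    · exact Real.rpow_le_rpow_of_nonpos (by positivity) (by nlinarith) (by norm_num)
  calc _ ≤ _ := h1
    _ ≤ (A ^ (-(1 / 2) : ℝ) * S32) * ∑ k ∈ B, (A ^ 2 + (k : ℝ) ^ 2) * ‖a k‖ ^ 2 :=
        mul_le_mul_of_nonneg_right h2 (Finset.sum_nonneg fun k _ => by positivity)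
    _ = _ := by simp_rw [add_mul]; rw [Finset.sum_add_distrib, Finset.mul_sum]

/-- The parameter of the Gagliardo–Nirenberg inequality for data of size `R`. -/
def gnA (R : ℝ) : ℝ := max 1 ((R ^ 2 * S32) ^ 2)

/-- The a priori `H¹` bound for solutions with data of size `R`. -/
def h1Bound (R : ℝ) : ℝ := Real.sqrt (2 * Real.pi * (4 * R ^ 2 + 2 * gnA R ^ 2 * R ^ 2))

lemma gnA_spec (R : ℝ) : gnA R ^ (-(1 / 2) : ℝ) * S32 * R ^ 2 ≤ 1 := by
  have hA : 1 ≤ gnA R := le_max_left _ _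
  have hA0 : 0 < gnA R := by linarith
  have h1 : R ^ 2 * S32 ≤ gnA R ^ (1 / 2 : ℝ) := by
    rw [← Real.sqrt_eq_rpow]
    exact Real.le_sqrt_of_sq_le (le_max_right _ _)
  rw [Real.rpow_neg hA0.le, mul_assoc, mul_comm S32, inv_mul_le_iff₀ (by positivity)]
  linarith

lemma norm_quart_le' {K : ℕ} {a : FSeq} {R : ℝ} (hm : ∑ k ∈ bx K, ‖a k‖ ^ 2 ≤ R ^ 2) :
    |(quart (bx K) a a a a).re| ≤
      gnA R ^ 2 * R ^ 2 + ∑ k ∈ bx K, (k : ℝ) ^ 2 * ‖a k‖ ^ 2 := by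
  have hA : 1 ≤ gnA R := le_max_left _ _
  have hA0 : 0 < gnA R := by linarith
  have hS := S32_nonneg
  have h0 : 0 ≤ ∑ k ∈ bx K, (k : ℝ) ^ 2 * ‖a k‖ ^ 2 := Finset.sum_nonneg fun k _ => by positivity
  have hm0 : 0 ≤ ∑ k ∈ bx K, ‖a k‖ ^ 2 := Finset.sum_nonneg fun k _ => by positivity
  calc _ ≤ _ := Complex.abs_re_le_norm _
    _ ≤ _ := norm_quart_le _ _
    _ ≤ (gnA R ^ (-(1 / 2) : ℝ) * S32 * (gnA R ^ 2 * R ^ 2 +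
          ∑ k ∈ bx K, (k : ℝ) ^ 2 * ‖a k‖ ^ 2)) * R ^ 2 := by
        refine mul_le_mul ((sq_sum_le _ _ hA).trans ?_) hm hm0 (by positivity)
        gcongr
    _ = (gnA R ^ (-(1 / 2) : ℝ) * S32 * R ^ 2) * (gnA R ^ 2 * R ^ 2 +
          ∑ k ∈ bx K, (k : ℝ) ^ 2 * ‖a k‖ ^ 2) := by ring
    _ ≤ _ := mul_le_of_le_one_left (by positivity) (gnA_spec R)

/-- The a priori `H¹` bound, depending on the size of the data only. -/
lemma sol_H1 {lam T R : ℝ} {u0 : FSeq} {u : ℝ → FSeq} (hl : lam = 1 ∨ lam = -1)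
    (h0 : InHs 1 u0) (hR : hnorm 1 u0 ≤ R) (hu : IsNLSSolution lam T u0 u)
    {t : ℝ} (ht : t ∈ Set.Icc 0 T) : Bd 1 (u t) (h1Bound R) := by
  have hb0 : Bd 1 u0 R := (Bd_of_hnorm h0).mono hR
  have hut := Bd_of_hnorm (hu.2.1 t ht)
  have hμ2 : ∀ k : ℤ, ‖(1 : ℂ)‖ ≤ (1 + (k : ℝ) ^ 2) ^ (1 : ℝ) := by
    intro k
    rw [Real.rpow_one, norm_one]
    nlinarith
  have hμ3 : ∀ k : ℤ, ‖((k : ℂ) ^ 2)‖ ≤ (1 + (k : ℝ) ^ 2) ^ (1 : ℝ) := by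
    intro k
    rw [Real.rpow_one, norm_pow, Complex.norm_intCast, sq_abs]
    linarith
  have hsq : ∀ a : FSeq, ∀ k, ‖(1 : ℂ) * (conj (a k) * a k)‖ = ‖a k‖ ^ 2 := fun a k => by
    simp [pow_two]
  have hsq2 : ∀ a : FSeq, ∀ k : ℤ, ‖(k : ℂ) ^ 2 * (conj (a k) * a k)‖ = (k : ℝ) ^ 2 * ‖a k‖ ^ 2 := by
    intro a k
    rw [norm_mul, norm_mul, norm_pow, Complex.norm_intCast, sq_abs, RCLike.norm_conj]; ring
  have hm0 : ∑' k, ‖u0 k‖ ^ 2 ≤ R ^ 2 := by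
    have := pair_tsum_norm_le hb0 hb0 (μ := fun _ => 1) hμ2
    simp only [hsq] at this
    linarith
  have hms : ∀ {a : FSeq} {X : ℝ}, Bd 1 a X → Summable fun k => ‖a k‖ ^ 2 := fun h => by
    have := pair_summable h h (μ := fun _ => 1) hμ2
    simpa only [hsq] using this
  have hmt : ∑' k, ‖u t k‖ ^ 2 ≤ R ^ 2 := by
    have := sol_quad_conserved hl hu (μ := fun _ => 1) (Or.inl fun _ => rfl) ht
    simp only [one_mul] at this
    rw [this]; exact hm0
  have hK0 : ∀ K, ∑ k ∈ bx K, ‖u0 k‖ ^ 2 ≤ R ^ 2 := fun K =>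
    ((hms hb0).sum_le_tsum _ fun _ _ => by positivity).trans hm0
  have hKt : ∀ K, ∑ k ∈ bx K, ‖u t k‖ ^ 2 ≤ R ^ 2 := fun K =>
    ((hms hut).sum_le_tsum _ fun _ _ => by positivity).trans hmt
  have hH0 : ∀ K, ∑ k ∈ bx K, (k : ℝ) ^ 2 * ‖u0 k‖ ^ 2 ≤ R ^ 2 := by
    intro K
    have h1 := pair_summable hb0 hb0 (μ := fun k => (k : ℂ) ^ 2) hμ3
    have h2 := pair_tsum_norm_le hb0 hb0 (μ := fun k => (k : ℂ) ^ 2) hμ3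
    simp only [hsq2] at h1 h2
    have := h1.sum_le_tsum (bx K) fun _ _ => by positivity
    linarith
  have hE := energy_almost_conserved hl hu ht
  rw [hu.1] at hE
  -- in the focusing case the quartic term is absorbed into half of the kinetic energy
  have hmain : ∀ K, ∑ k ∈ bx K, (1 + (k : ℝ) ^ 2) ^ (1 : ℝ) * ‖u t k‖ ^ 2 ≤
      2 * (energyK lam K (u t) - energyK lam K u0) + (4 * R ^ 2 + 2 * gnA R ^ 2 * R ^ 2) := by
    intro K
    have h1 := abs_le.1 (norm_quart_le' (hK0 K))
    have h2 := abs_le.1 (norm_quart_le' (hKt K))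
    have h3 := hH0 K
    have h4 := hKt K
    simp only [Real.rpow_one, add_mul, one_mul, Finset.sum_add_distrib, energyK]
    rcases hl with rfl | rfl <;> linarith
  have hlim := (hE.const_mul 2).add_const (4 * R ^ 2 + 2 * gnA R ^ 2 * R ^ 2)
  have htot : ∑' k : ℤ, (1 + (k : ℝ) ^ 2) ^ (1 : ℝ) * ‖u t k‖ ^ 2 ≤
      4 * R ^ 2 + 2 * gnA R ^ 2 * R ^ 2 := by
    have hs : Filter.Tendsto (fun K => ∑ k ∈ bx K, (1 + (k : ℝ) ^ 2) ^ (1 : ℝ) * ‖u t k‖ ^ 2)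
        Filter.atTop (nhds (∑' k : ℤ, (1 + (k : ℝ) ^ 2) ^ (1 : ℝ) * ‖u t k‖ ^ 2)) :=
      (hu.2.1 t ht).hasSum.comp tendsto_bx
    have := le_of_tendsto_of_tendsto' hs hlim hmain
    simpa using this
  refine hut.mono ?_
  unfold hnorm h1Bound
  exact Real.sqrt_le_sqrt (mul_le_mul_of_nonneg_left htot (by positivity))

/-! ### Expansion of the one-step map into trilinear Fourier sums -/

/-- The oscillatory integral `∫₀^τ e^{iσφ} dσ` for an integer phase `φ`. -/
def osc (τ : ℝ) (φ : ℤ) : ℂ := ∫ σ in (0 : ℝ)..τ, exp (I * (σ : ℂ) * (φ : ℂ))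

lemma osc_zero (τ : ℝ) : osc τ 0 = τ := by simp [osc]

lemma osc_mul (τ : ℝ) (φ : ℤ) : I * (φ : ℂ) * osc τ φ = exp (I * (τ : ℂ) * (φ : ℂ)) - 1 := by
  by_cases h : (φ : ℂ) = 0
  · simp [h]
  · unfold osc
    have h1 : ∀ σ : ℝ, I * (σ : ℂ) * (φ : ℂ) = (I * φ) * σ := fun σ => by ring
    simp_rw [h1]
    have h2 : I * (φ : ℂ) ≠ 0 := mul_ne_zero I_ne_zero h
    rw [integral_exp_mul_complex h2]
    field_simp
    simp

lemma exp_osc (τ : ℝ) (φ : ℤ) : exp (I * (τ : ℂ) * (φ : ℂ)) = I * (φ : ℂ) * osc τ φ + 1 := by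
  rw [osc_mul]; ring

lemma triS_congr {B : Finset ℤ} {m m' : ℤ → ℤ → ℤ → ℂ} {a b c a' b' c' : FSeq} {k : ℤ}
    (h : ∀ p ∈ B, ∀ q ∈ B, ∀ r ∈ B, p + q + r = k →
      m p q r * (a p * b q * c r) = m' p q r * (a' p * b' q * c' r)) :
    triS B m a b c k = triS B m' a' b' c' k := by
  unfold triS
  refine Finset.sum_congr rfl fun p hp => Finset.sum_congr rfl fun q hq =>
    Finset.sum_congr rfl fun r hr => ?_
  split_ifs with hk
  · exact h p hp q hq r hr hk
  · rfl

lemma mul_triS {B : Finset ℤ} (x : ℂ) (m : ℤ → ℤ → ℤ → ℂ) (a b c : FSeq) (k : ℤ) :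
    x * triS B m a b c k = triS B (fun p q r => x * m p q r) a b c k := by
  unfold triS
  simp_rw [Finset.mul_sum]
  refine Finset.sum_congr rfl fun p hp => Finset.sum_congr rfl fun q hq =>
    Finset.sum_congr rfl fun r hr => ?_
  split_ifs <;> ring

lemma triS_add {B : Finset ℤ} (m m' : ℤ → ℤ → ℤ → ℂ) (a b c : FSeq) (k : ℤ) :
    triS B m a b c k + triS B m' a b c k = triS B (fun p q r => m p q r + m' p q r) a b c k := by
  unfold triS
  simp_rw [← Finset.sum_add_distrib]
  refine Finset.sum_congr rfl fun p hp => Finset.sum_congr rfl fun q hq =>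
    Finset.sum_congr rfl fun r hr => ?_
  split_ifs <;> ring

lemma triS_sub {B : Finset ℤ} (m m' : ℤ → ℤ → ℤ → ℂ) (a b c : FSeq) (k : ℤ) :
    triS B m a b c k - triS B m' a b c k = triS B (fun p q r => m p q r - m' p q r) a b c k := by
  unfold triS
  simp_rw [← Finset.sum_sub_distrib]
  refine Finset.sum_congr rfl fun p hp => Finset.sum_congr rfl fun q hq =>
    Finset.sum_congr rfl fun r hr => ?_
  split_ifs <;> ring

lemma triS_rot {B : Finset ℤ} (m : ℤ → ℤ → ℤ → ℂ) (a b c : FSeq) (k : ℤ) :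
    triS B m a b c k = triS B (fun p q r => m q r p) c a b k := by
  unfold triS
  rw [Finset.sum_congr rfl fun p _ => Finset.sum_comm, Finset.sum_comm]
  refine Finset.sum_congr rfl fun p hp => Finset.sum_congr rfl fun q hq =>
    Finset.sum_congr rfl fun r hr => ?_
  rw [show q + r + p = p + q + r by ring]
  split_ifs <;> ring

lemma triS_swap {B : Finset ℤ} (m : ℤ → ℤ → ℤ → ℂ) (a b c : FSeq) (k : ℤ) :
    triS B m a b c k = triS B (fun p q r => m p r q) a c b k := by
  unfold triS
  refine Finset.sum_congr rfl fun p _ => ?_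
  rw [Finset.sum_comm]
  refine Finset.sum_congr rfl fun q hq => Finset.sum_congr rfl fun r hr => ?_
  rw [show p + r + q = p + q + r by ring]
  split_ifs <;> ring

/-- The product `conj f · M(f₁ f₂)` with `M` a Fourier multiplier. -/
lemma conv_conv_eq' {B : Finset ℤ} {a b c : FSeq} (ha : Supp B a) (hb : Supp B b) (hc : Supp B c)
    (μ : ℤ → ℂ) (k : ℤ) :
    conv a (fun m => μ m * conv b c m) k = triS B (fun _ q r => μ (q + r)) a b c k := by
  rw [conv_comm, conv_conv_eq hb hc ha, triS_rot]

lemma conv_pi0 (a f : FSeq) (k : ℤ) : conv a (pi0 f) k = a k * f 0 := by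
  unfold conv
  rw [tsum_eq_single 0 (fun j hj => by simp [pi0, hj])]
  simp [pi0]

lemma supp_pi0 {N : ℕ} (f : FSeq) : Supp (bx N) (pi0 f) := fun k hk => by
  have : k ≠ 0 := by rintro rfl; exact hk (by rw [mem_bx]; simp)
  simp [pi0, this]

/-- The linear part of the one-step map as a Fourier multiplier. -/
def mainMult (lam τ : ℝ) (M P : ℂ) (k : ℤ) : ℂ :=
  if k = 0 then 1 else exp (I * (τ : ℂ) *
      (-2 * (lam : ℂ) * P / (I * (k : ℂ)) - 2 * (lam : ℂ) * M - (k : ℂ) ^ 2))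

/-- The multiplier of the cubic part of the one-step map, symmetrized in the last two frequencies
and taken relative to the free flow. -/
def mm (lam τ : ℝ) (N : ℕ) (p q r : ℤ) : ℂ :=
  if p + q + r = 0 then (if |p + q| ≤ (N : ℤ) then -(I * lam * τ) else 0)
  else (if p + q ≠ 0 ∧ |p + q| ≤ (N : ℤ) then
      -(2 * I * lam * ((p + r : ℤ) / (p + q + r : ℤ)) * osc τ (2 * (p + q) * (p + r))) else 0)
    + (if |q + r| ≤ (N : ℤ) then I * lam * ((p : ℂ) / (p + q + r : ℤ)) *
        (osc τ (2 * p * (p + q + r)) + osc τ (2 * q * r) - τ) else 0)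

lemma dxInv_ne (a : FSeq) {k : ℤ} (hk : k ≠ 0) : dxInv a k = -I / k * a k := by
  have hk' : (k : ℂ) ≠ 0 := by exact_mod_cast hk
  rw [dxInv, if_neg hk]
  field_simp
  simp

lemma piN_le (a : FSeq) {N : ℕ} {k : ℤ} (hk : |k| ≤ (N : ℤ)) : piN N a k = a k := if_pos hk

lemma conjS_expD (τ : ℝ) (f : FSeq) : conjS (expD τ f) = expD (-τ) (conjS f) := by
  funext k
  simp only [conjS, expD, map_mul, ← Complex.exp_conj]
  congr 2
  simp

section terms
variable {τ : ℝ} {N : ℕ} {f : FSeq}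

/-- The two terms of the scheme that integrate the phase `2(p+q)(p+r)` exactly. -/
lemma term1 (hf : Supp (bx N) f) {k : ℤ} (hk : k ≠ 0) (hkN : |k| ≤ (N : ℤ)) :
    dxInv (piN N (conv (expD τ f) (dxInv (piN N (modSq (expD τ f)))))) k
      - expD τ (dxInv (piN N (conv f (dxInv (piN N (modSq f)))))) k
    = exp (-I * (τ : ℂ) * (k : ℂ) ^ 2) * triS (bx N) (fun p q r =>
        if p + q ≠ 0 ∧ |p + q| ≤ (N : ℤ) then
          -(2 * I * ((p + r : ℤ) / (k : ℂ)) * osc τ (2 * (p + q) * (p + r))) else 0)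
        (conjS f) f f k := by
  have hk' : (k : ℂ) ≠ 0 := by exact_mod_cast hk
  set μ : ℤ → ℂ := fun m => if m ≠ 0 ∧ |m| ≤ (N : ℤ) then -I / (m : ℂ) else 0 with hμ
  have hg : ∀ g : FSeq, dxInv (piN N (modSq g)) = fun m => μ m * conv (conjS g) g m := by
    intro g
    funext m
    by_cases h0 : m = 0
    · simp [h0, dxInv, hμ]
    · rw [dxInv_ne _ h0]
      by_cases h1 : |m| ≤ (N : ℤ)
      · simp [h0, h1, hμ, piN, modSq]
      · simp [h1, hμ, piN]
  have hF : Supp (bx N) (expD τ f) := hf.mul _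
  have e1 : ∀ g : FSeq, Supp (bx N) g → conv g (dxInv (piN N (modSq g))) k =
      triS (bx N) (fun p q _ => μ (p + q)) (conjS g) g g k := by
    intro g hg'
    rw [hg, conv_comm, conv_conv_eq hg'.conjS hg' hg']
  have e2 : triS (bx N) (fun p q _ => μ (p + q)) (conjS (expD τ f)) (expD τ f) (expD τ f) k =
      triS (bx N) (fun p q r => μ (p + q) * (exp (-I * (τ : ℂ) * (k : ℂ) ^ 2) *
        exp (I * τ * (2 * (p + q) * (p + r) : ℤ)))) (conjS f) f f k := by
    refine triS_congr fun p _ q _ r _ hs => ?_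
    have : exp (-I * ((-τ : ℝ) : ℂ) * (p : ℂ) ^ 2) * exp (-I * (τ : ℂ) * (q : ℂ) ^ 2) *
        exp (-I * (τ : ℂ) * (r : ℂ) ^ 2) =
        exp (-I * (τ : ℂ) * (k : ℂ) ^ 2) * exp (I * τ * (2 * (p + q) * (p + r) : ℤ)) := by
      rw [← Complex.exp_add, ← Complex.exp_add, ← Complex.exp_add, ← hs]
      congr 1
      push_cast
      ring
    rw [← this, conjS_expD]
    simp only [expD]
    ring
  simp only [expD]
  rw [dxInv_ne _ hk, dxInv_ne _ hk, piN_le _ hkN, piN_le _ hkN, e1 f hf]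
  change -I / k * conv (expD τ f) (dxInv (piN N (modSq (expD τ f)))) k - _ = _
  rw [e1 _ hF, e2, mul_triS, mul_triS, mul_triS, mul_triS, triS_sub]
  refine triS_congr fun p _ q _ r _ hs => ?_
  congr 1
  by_cases h : p + q ≠ 0 ∧ |p + q| ≤ (N : ℤ)
  · have hpq : (p : ℂ) + q ≠ 0 := by exact_mod_cast h.1
    simp only [hμ, if_pos h]
    rw [exp_osc]
    push_cast
    field_simp
    simp
    linear_combination (2 * ((p : ℂ) + q) * (p + r) * osc τ (2 * (p + q) * (p + r))) * I_sq
  · simp [hμ, if_neg h]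

/-- The two terms of the scheme that integrate the phase `2pk` exactly. -/
lemma term2 (hf : Supp (bx N) f) {k : ℤ} (hk : k ≠ 0) (hkN : |k| ≤ (N : ℤ)) :
    dxInv (dxInv (piN N (conv (expD (-τ) (conjS f)) (expD τ (piN N (sqS f)))))) k
        - expD τ (dxInv (dxInv (piN N (conv (conjS f) (piN N (sqS f)))))) k
    = exp (-I * (τ : ℂ) * (k : ℂ) ^ 2) * triS (bx N) (fun p q r =>
        if |q + r| ≤ (N : ℤ) then -(2 * I * ((p : ℂ) / (k : ℂ)) * osc τ (2 * p * k)) else 0)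
        (conjS f) f f k := by
  have hk' : (k : ℂ) ≠ 0 := by exact_mod_cast hk
  have e0 : piN N (sqS f) = fun m => (if |m| ≤ (N : ℤ) then 1 else 0) * conv f f m := by
    funext m; simp [piN, sqS]
  have e0' : expD τ (piN N (sqS f)) = fun m => (if |m| ≤ (N : ℤ) then
      exp (-I * (τ : ℂ) * (m : ℂ) ^ 2) else 0) * conv f f m := by
    funext m; simp [piN, sqS, expD]
  have hF : Supp (bx N) (expD (-τ) (conjS f)) := hf.conjS.mul _
  rw [dxInv_ne _ hk, dxInv_ne _ hk, piN_le _ hkN, e0', conv_conv_eq' hF hf hf]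
  simp only [expD]
  rw [dxInv_ne _ hk, dxInv_ne _ hk, piN_le _ hkN, e0, conv_conv_eq' hf.conjS hf hf]
  simp only [mul_triS]
  have e2 : ∀ x : ℂ, triS (bx N) (fun p q r => x * (x * if |q + r| ≤ (N : ℤ) then
      exp (-I * (τ : ℂ) * ((q + r : ℤ) : ℂ) ^ 2) else 0)) (expD (-τ) (conjS f)) f f k =
      triS (bx N) (fun p q r => x * (x * if |q + r| ≤ (N : ℤ) then (exp (-I * (τ : ℂ) * (k : ℂ) ^ 2) *
        exp (I * τ * (2 * p * k : ℤ))) else 0)) (conjS f) f f k := by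
    intro x
    refine triS_congr fun p _ q _ r _ hs => ?_
    have : exp (-I * (τ : ℂ) * ((q + r : ℤ) : ℂ) ^ 2) * exp (-I * ((-τ : ℝ) : ℂ) * (p : ℂ) ^ 2)  =
        exp (-I * (τ : ℂ) * (k : ℂ) ^ 2) * exp (I * τ * (2 * p * k : ℤ)) := by
      rw [← Complex.exp_add, ← Complex.exp_add, ← hs]
      congr 1
      push_cast
      ring
    rw [← this]
    simp only [expD]
    split_ifs <;> ring
  rw [e2, triS_sub]
  refine triS_congr fun p _ q _ r _ hs => ?_
  congr 1
  split_ifs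
  · rw [exp_osc]
    push_cast
    field_simp
    simp
    linear_combination (2 * (k : ℂ) * p * osc τ (2 * p * k)) * I_sq
  · simp

/-- The term of the scheme that integrates the phase `2qr` exactly. The modes with `q = 0` or `r = 0`
are lost because `∂ₓ⁻¹` kills constants. -/
lemma term3 (hf : Supp (bx N) f) {k : ℤ} (hk : k ≠ 0) (hkN : |k| ≤ (N : ℤ)) :
    expD τ (dxInv (piN N (conv (dx (conjS f))
      (expD (-τ) (piN N (sqS (expD τ (dxInv f)))) - piN N (sqS (dxInv f)))))) k
    = exp (-I * (τ : ℂ) * (k : ℂ) ^ 2) * triS (bx N) (fun p q r =>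
        if |q + r| ≤ (N : ℤ) then (if q = 0 ∨ r = 0 then 0 else
          -(2 * I * ((p : ℂ) / (k : ℂ)) * osc τ (2 * q * r))) else 0)
        (conjS f) f f k := by
  have hk' : (k : ℂ) ≠ 0 := by exact_mod_cast hk
  have e0 : ∀ g : FSeq, piN N (sqS g) = fun m => (if |m| ≤ (N : ℤ) then 1 else 0) * conv g g m := by
    intro g; funext m; simp [piN, sqS]
  have e0' : ∀ g : FSeq, expD (-τ) (piN N (sqS g)) = fun m => (if |m| ≤ (N : ℤ) then
      exp (-I * ((-τ : ℝ) : ℂ) * (m : ℂ) ^ 2) else 0) * conv g g m := by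
    intro g; funext m; simp [piN, sqS, expD]
  have hd : Supp (bx N) (dxInv f) := fun k hk => by
    unfold dxInv; rw [hf k hk]; simp
  have hD : Supp (bx N) (expD τ (dxInv f)) := hd.mul _
  have hp : Supp (bx N) (dx (conjS f)) := hf.conjS.mul _
  have e1 : ∀ a b : FSeq, conv (dx (conjS f)) (a - b) k =
      conv (dx (conjS f)) a k - conv (dx (conjS f)) b k := by
    intro a b
    rw [conv_comm, conv_comm _ a, conv_comm _ b, conv_eq_sum _ hp, conv_eq_sum _ hp,
      conv_eq_sum _ hp, ← Finset.sum_sub_distrib]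
    exact Finset.sum_congr rfl fun j _ => by simp only [Pi.sub_apply]; ring
  unfold expD
  rw [dxInv_ne _ hk, piN_le _ hkN]
  change _ * (_ * conv (dx (conjS f)) (expD (-τ) (piN N (sqS (expD τ (dxInv f)))) - piN N (sqS (dxInv f))) k) = _
  rw [e1, e0', e0, conv_conv_eq' hp hD hD, conv_conv_eq' hp hd hd]
  congr 1
  have e2 : triS (bx N) (fun p q r => if |q + r| ≤ (N : ℤ) then
        exp (-I * ((-τ : ℝ) : ℂ) * ((q + r : ℤ) : ℂ) ^ 2) else 0) (dx (conjS f)) (expD τ (dxInv f)) (expD τ (dxInv f)) k =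
      triS (bx N) (fun p q r => if |q + r| ≤ (N : ℤ) then exp (I * τ * (2 * q * r : ℤ)) else 0)
        (dx (conjS f)) (dxInv f) (dxInv f) k := by
    refine triS_congr fun p _ q _ r _ hs => ?_
    have : exp (I * τ * (2 * q * r : ℤ)) = exp (-I * ((-τ : ℝ) : ℂ) * ((q + r : ℤ) : ℂ) ^ 2) *
        exp (-I * (τ : ℂ) * (q : ℂ) ^ 2) * exp (-I * (τ : ℂ) * (r : ℂ) ^ 2) := by
      rw [← Complex.exp_add, ← Complex.exp_add]
      congr 1
      push_cast
      ring
    rw [this]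
    simp only [expD]
    split_ifs <;> ring
  rw [e2, triS_sub, mul_triS]
  refine triS_congr fun p _ q _ r _ hs => ?_
  by_cases hqr : q = 0 ∨ r = 0
  · simp only [if_pos hqr]
    rcases hqr with h | h <;> simp [h, dxInv]
  · rw [not_or] at hqr
    have hq' : (q : ℂ) ≠ 0 := by exact_mod_cast hqr.1
    have hr' : (r : ℂ) ≠ 0 := by exact_mod_cast hqr.2
    rw [dxInv_ne _ hqr.1, dxInv_ne _ hqr.2]
    simp only [hqr, or_self, if_false, dx]
    split_ifs
    · rw [exp_osc]
      push_cast
      field_simp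
      simp
      ring_nf
      simp
    · simp

lemma term4 (hf : Supp (bx N) f) {k : ℤ} (hk : k ≠ 0) (hkN : |k| ≤ (N : ℤ)) :
    expD τ (dxInv (piN N (conv (dx (conjS f)) (piN N (sqS f))))) k
    = exp (-I * (τ : ℂ) * (k : ℂ) ^ 2) * triS (bx N) (fun p q r =>
        if |q + r| ≤ (N : ℤ) then (p : ℂ) / (k : ℂ) else 0) (conjS f) f f k := by
  have hk' : (k : ℂ) ≠ 0 := by exact_mod_cast hk
  have e0 : piN N (sqS f) = fun m => (if |m| ≤ (N : ℤ) then 1 else 0) * conv f f m := by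
    funext m; simp [piN, sqS]
  have hp : Supp (bx N) (dx (conjS f)) := hf.conjS.mul _
  simp only [expD]
  rw [dxInv_ne _ hk, piN_le _ hkN, e0, conv_conv_eq' hp hf hf, mul_triS]
  congr 1
  refine triS_congr fun p _ q _ r _ hs => ?_
  simp only [dx]
  split_ifs
  · field_simp
    simp
  · simp

lemma term5 (hf : Supp (bx N) f) {k : ℤ} (hk : k ≠ 0) (hkN : |k| ≤ (N : ℤ)) :
    f 0 * expD τ (dxInv (piN N (conv (dx (conjS f)) f))) k
    = exp (-I * (τ : ℂ) * (k : ℂ) ^ 2) * triS (bx N) (fun p q _ =>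
        if q = 0 then (p : ℂ) / (k : ℂ) else 0) (conjS f) f f k := by
  have hk' : (k : ℂ) ≠ 0 := by exact_mod_cast hk
  have hp : Supp (bx N) (dx (conjS f)) := hf.conjS.mul _
  simp only [expD]
  rw [dxInv_ne _ hk, piN_le _ hkN]
  have e1 : f 0 * conv (dx (conjS f)) f k =
      triS (bx N) (fun _ _ _ => 1) (dx (conjS f)) (pi0 f) f k := by
    rw [← conv_conv_eq hp (supp_pi0 f) hf (fun _ => 1)]
    simp only [conv_pi0, one_mul]
    unfold conv
    rw [← tsum_mul_left]
    exact tsum_congr fun j => by ring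
  rw [mul_left_comm, mul_left_comm (f 0), e1, mul_triS]
  congr 1
  refine triS_congr fun p _ q _ r _ hs => ?_
  simp only [dx, pi0]
  split_ifs with h
  · subst h
    field_simp
    simp
  · simp

lemma term6 (hf : Supp (bx N) f) {k : ℤ} (hk : k ≠ 0) :
    f 0 ^ 2 * expD τ (piNe (conjS f)) k
    = exp (-I * (τ : ℂ) * (k : ℂ) ^ 2) * triS (bx N) (fun p q r =>
        if q = 0 ∧ r = 0 then (p : ℂ) / (k : ℂ) else 0) (conjS f) f f k := by
  have hk' : (k : ℂ) ≠ 0 := by exact_mod_cast hk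
  simp only [expD, piNe, if_neg hk]
  have e1 : f 0 ^ 2 * conjS f k = triS (bx N) (fun _ _ _ => 1) (conjS f) (pi0 f) (pi0 f) k := by
    rw [← conv_conv_eq hf.conjS (supp_pi0 f) (supp_pi0 f) (fun _ => 1)]
    simp only [conv_pi0, one_mul]
    ring
  rw [mul_left_comm, e1]
  congr 1
  refine triS_congr fun p _ q _ r _ hs => ?_
  simp only [pi0]
  by_cases h : q = 0 ∧ r = 0
  · obtain ⟨rfl, rfl⟩ := h
    have : p = k := by simpa using hs
    subst this
    simp [hk']
  · rw [if_neg h]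
    rw [not_and_or] at h
    rcases h with h | h <;> simp [h]
end terms

/-- The one-step map is the linear multiplier plus a trilinear Fourier sum. -/
lemma Psi_eq {lam τ : ℝ} {N : ℕ} {M P : ℂ} {f : FSeq} (hf : Supp (bx N) f) (k : ℤ) :
    Psi lam τ N M P f k = mainMult lam τ M P k * f k +
      (if |k| ≤ (N : ℤ) then exp (-I * (τ : ℂ) * (k : ℂ) ^ 2) *
        triS (bx N) (mm lam τ N) (conjS f) f f k else 0) := by
  by_cases hk : k = 0
  · subst hk
    have h1 : ∀ a, dxInv a 0 = 0 := fun a => by simp [dxInv]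
    have h2 : ∀ a, piNe a 0 = 0 := fun a => by simp [piNe]
    have h3 : ∀ a t, expD t a 0 = a 0 := fun a t => by simp [expD]
    have h4 : piN N (modSq f) = fun m => (if |m| ≤ (N : ℤ) then 1 else 0) * conv (conjS f) f m := by
      funext m; simp [piN, modSq]
    have h5 : conv (piN N (modSq f)) f 0 = triS (bx N) (fun p q _ =>
        if |p + q| ≤ (N : ℤ) then 1 else 0) (conjS f) f f 0 := by
      rw [h4, conv_conv_eq hf.conjS hf hf]
    simp only [Psi, Pi.add_apply, Pi.sub_apply, Pi.smul_apply, h1, h2, h3, smul_eq_mul, expMain,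
      if_true, pi0, mainMult, h5]
    rw [if_pos (by simp)]
    have h6 : triS (bx N) (mm lam τ N) (conjS f) f f 0 = triS (bx N) (fun p q _ =>
        -(I * lam * τ) * if |p + q| ≤ (N : ℤ) then 1 else 0) (conjS f) f f 0 := by
      refine triS_congr fun p _ q _ r _ hs => ?_
      simp [mm, hs]
    rw [h6, ← mul_triS, show -2 * (lam : ℂ) * M * I * τ = -2 * I * lam * τ * M by ring]
    simp only [Int.cast_zero]
    rw [show -I * (τ : ℂ) * 0 ^ 2 = 0 by ring, Complex.exp_zero]
    ring
  · by_cases hkN : |k| ≤ (N : ℤ)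
    · have hk' : (k : ℂ) ≠ 0 := by exact_mod_cast hk
      rw [if_pos hkN]
      simp only [Psi, Pi.add_apply, Pi.sub_apply, Pi.smul_apply, smul_eq_mul, expMain,
        if_neg hk, pi0, mainMult]
      have t1 := term1 (τ := τ) hf hk hkN
      have t2 := term2 (τ := τ) hf hk hkN
      have t3 := term3 (τ := τ) hf hk hkN
      have t4 := term4 (τ := τ) hf hk hkN
      have t5 := term5 (τ := τ) hf hk hkN
      have t5' := t5
      rw [triS_swap] at t5'
      have t6 := term6 (τ := τ) hf hk
      set E := exp (-I * (τ : ℂ) * (k : ℂ) ^ 2)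
      have key : triS (bx N) (mm lam τ N) (conjS f) f f k =
          lam * triS (bx N) (fun p q r => if p + q ≠ 0 ∧ |p + q| ≤ (N : ℤ) then
            -(2 * I * ((p + r : ℤ) / (k : ℂ)) * osc τ (2 * (p + q) * (p + r))) else 0) (conjS f) f f k
          + -(lam / 2) * triS (bx N) (fun p q r => if |q + r| ≤ (N : ℤ) then
            -(2 * I * ((p : ℂ) / (k : ℂ)) * osc τ (2 * p * k)) else 0) (conjS f) f f k
          + -(lam / 2) * triS (bx N) (fun p q r =>
            if |q + r| ≤ (N : ℤ) then (if q = 0 ∨ r = 0 then 0 else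
            -(2 * I * ((p : ℂ) / (k : ℂ)) * osc τ (2 * q * r))) else 0) (conjS f) f f k
          + -(I * lam * τ) * triS (bx N) (fun p q r =>
            if |q + r| ≤ (N : ℤ) then (p : ℂ) / (k : ℂ) else 0) (conjS f) f f k
          + (I * lam * τ) * triS (bx N) (fun p q _ =>
            if q = 0 then (p : ℂ) / (k : ℂ) else 0) (conjS f) f f k
          + (I * lam * τ) * triS (bx N) (fun p q r =>
            if r = 0 then (p : ℂ) / (k : ℂ) else 0) (conjS f) f f k
          + -(I * lam * τ) * triS (bx N) (fun p q r =>
            if q = 0 ∧ r = 0 then (p : ℂ) / (k : ℂ) else 0) (conjS f) f f k := by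
        simp only [mul_triS, triS_add]
        refine triS_congr fun p _ q hq r hr hs => ?_
        congr 1
        rw [mem_bx] at hq hr
        have hs' : p + q + r ≠ 0 := hs ▸ hk
        rw [mm, if_neg hs', hs]
        have hqr : q = 0 ∨ r = 0 → |q + r| ≤ (N : ℤ) ∧ osc τ (2 * q * r) = τ := by
          rintro (rfl | rfl)
          · simp [hr, osc_zero]
          · simp [hq, osc_zero]
        by_cases h0 : q = 0 ∨ r = 0
        · have h7 := hqr h0
          rw [if_pos h7.1, if_pos h7.1, if_pos h7.1, if_pos h7.1, if_pos h0, h7.2]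
          have h8 : (if q = 0 then (p : ℂ) / k else 0) + (if r = 0 then (p : ℂ) / k else 0)
              - (if q = 0 ∧ r = 0 then (p : ℂ) / k else 0) = p / k := by
            by_cases h9 : q = 0 <;> by_cases h10 : r = 0 <;> simp [h9, h10] at h0 ⊢
          rw [← sub_eq_zero]
          split_ifs at h8 ⊢ <;> linear_combination (-(I * lam * τ)) * h8
        · have h9 := not_or.1 h0
          simp only [h9.1, h9.2, if_false, false_and, or_self]
          split_ifs <;> ring
      rw [key]
      linear_combination (lam : ℂ) * t1 - (lam / 2 : ℂ) * t2 - (lam / 2 : ℂ) * t3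
        - (I * lam * τ) * t4 + (I * lam * τ) * t5 + (I * lam * τ) * t5' - (I * lam * τ) * t6
    · have hfk : f k = 0 := hf k (by rwa [mem_bx])
      have hfk' : f (-k) = 0 := hf _ (by rwa [mem_bx, abs_neg])
      simp [Psi, expMain, hk, hkN, hfk, hfk', dxInv, piN, piNe, expD, pi0, conjS]

/-! ### Sobolev bounds for trilinear Fourier sums -/

/-- The Japanese bracket `⟨k⟩ = (1+k²)^{1/2}`. -/
def jw (k : ℤ) : ℝ := (1 + (k : ℝ) ^ 2) ^ ((1 : ℝ) / 2)

lemma ofReal_jw (k : ℤ) : ENNReal.ofReal (jw k) = wt 1 k := rfl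

lemma jw_pos (k : ℤ) : 0 < jw k := Real.rpow_pos_of_pos (jb_pos k) _

lemma jw_eq (k : ℤ) : jw k = Real.sqrt (1 + (k : ℝ) ^ 2) := (Real.sqrt_eq_rpow _).symm

lemma one_le_jw (k : ℤ) : 1 ≤ jw k := by
  rw [jw_eq, Real.one_le_sqrt]; nlinarith [sq_nonneg (k : ℝ)]

lemma abs_le_jw (k : ℤ) : |(k : ℝ)| ≤ jw k := by
  rw [jw_eq, ← Real.sqrt_sq_eq_abs]
  exact Real.sqrt_le_sqrt (by linarith)

lemma jw_le {k : ℤ} (hk : k ≠ 0) : jw k ≤ 2 * |(k : ℝ)| := by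
  have h1 : (1 : ℝ) ≤ |(k : ℝ)| := by exact_mod_cast Int.one_le_abs hk
  rw [jw_eq, Real.sqrt_le_left (by positivity), mul_pow, sq_abs]
  nlinarith [sq_abs (k : ℝ)]

lemma enorm_triS_le {B : Finset ℤ} {m : ℤ → ℤ → ℤ → ℂ} {a b c : FSeq}
    {F : ℤ → ℤ → ℤ → ℝ≥0∞}
    (h : ∀ p ∈ B, ∀ q ∈ B, ∀ r ∈ B, ‖m p q r * (a p * b q * c r)‖ₑ * wt 1 (p + q + r) ≤ F p q r)
    (s : ℝ) (k : ℤ) :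
    wt s k * ‖triS B m a b c k‖ₑ ≤ wt (s - 1) k *
      ∑' x : ℤ × ℤ × ℤ, if x.1 + x.2.1 + x.2.2 = k then F x.1 x.2.1 x.2.2 else 0 := by
  have h1 : wt s k = wt (s - 1) k * wt 1 k := by rw [← wt_add]; ring_nf
  rw [h1, mul_assoc]
  gcongr
  unfold triS
  calc wt 1 k * ‖∑ p ∈ B, ∑ q ∈ B, ∑ r ∈ B,
          if p + q + r = k then m p q r * (a p * b q * c r) else 0‖ₑ
      ≤ wt 1 k * ∑ p ∈ B, ∑ q ∈ B, ∑ r ∈ B,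
          ‖if p + q + r = k then m p q r * (a p * b q * c r) else 0‖ₑ := by
        gcongr
        refine (enorm_sum_le _ _).trans (Finset.sum_le_sum fun p _ => ?_)
        refine (enorm_sum_le _ _).trans (Finset.sum_le_sum fun q _ => ?_)
        exact enorm_sum_le _ _
    _ ≤ ∑ p ∈ B, ∑ q ∈ B, ∑ r ∈ B, (if p + q + r = k then F p q r else 0) := by
        simp_rw [Finset.mul_sum]
        refine Finset.sum_le_sum fun p hp => Finset.sum_le_sum fun q hq =>
          Finset.sum_le_sum fun r hr => ?_
        split_ifs with hk
        · rw [mul_comm, ← hk]; exact h p hp q hq r hr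
        · simp
    _ = ∑ x ∈ B ×ˢ B ×ˢ B, (if x.1 + x.2.1 + x.2.2 = k then F x.1 x.2.1 x.2.2 else 0) := by
        rw [Finset.sum_product]
        refine Finset.sum_congr rfl fun p _ => ?_
        rw [Finset.sum_product]
    _ ≤ _ := ENNReal.sum_le_tsum _

lemma wt_shift (s t : ℝ) (x : ℝ≥0∞) (k : ℤ) : wt s k * (wt t k * x) = wt (s + t) k * x := by
  rw [wt_add, mul_assoc]

/-- Constant of the smoothing trilinear estimate. -/
def cNeg (s : ℝ) : ℝ := (15 * Sw (2 * s)).toReal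

lemma cNeg_nonneg (s : ℝ) : 0 ≤ cNeg s := ENNReal.toReal_nonneg

/-- A trilinear multiplier of size `(⟨p⟩+⟨q⟩+⟨r⟩)/⟨p+q+r⟩` is bounded on `H^s`. The auxiliary
majorants `a'`, `b'`, `c'` allow frequency restrictions to be absorbed in the arguments. -/
lemma Bd_triS_neg {s : ℝ} (hs : 1 / 2 < s) (hs1 : s < 1) {B : Finset ℤ}
    {m : ℤ → ℤ → ℤ → ℂ} {a b c a' b' c' : FSeq} {X Y Z κ : ℝ} (hκ : 0 ≤ κ)
    (h : ∀ p ∈ B, ∀ q ∈ B, ∀ r ∈ B, ‖m p q r * (a p * b q * c r)‖ * jw (p + q + r) ≤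
      κ * (jw p + jw q + jw r) * (‖a' p‖ * ‖b' q‖ * ‖c' r‖))
    (ha : Bd s a' X) (hb : Bd s b' Y) (hc : Bd s c' Z) :
    Bd s (triS B m a b c) (κ * cNeg s * (X * Y * Z)) := by
  have hX := ha.1
  have hY := hb.1
  have hZ := hc.1
  refine ⟨by have := cNeg_nonneg s; positivity, ?_⟩
  set A := fun k => ‖a' k‖ₑ
  set B' := fun k => ‖b' k‖ₑ
  set C := fun k => ‖c' k‖ₑ
  set K := ENNReal.ofReal κ
  have h1 := enorm_triS_le (B := B) (m := m) (a := a) (b := b) (c := c)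
    (F := fun p q r => K * ((wt 1 p * A p) * B' q * C r + A p * (wt 1 q * B' q) * C r +
      A p * B' q * (wt 1 r * C r))) (by
    intro p hp q hq r hr
    have h2 := ENNReal.ofReal_le_ofReal (h p hp q hq r hr)
    rw [ENNReal.ofReal_mul (norm_nonneg _), ofReal_norm, ofReal_jw] at h2
    refine h2.trans (le_of_eq ?_)
    have j1 := jw_pos p
    have j2 := jw_pos q
    have j3 := jw_pos r
    rw [ENNReal.ofReal_mul (by positivity), ENNReal.ofReal_mul hκ, ENNReal.ofReal_mul (by positivity),
      ENNReal.ofReal_mul (by positivity), ENNReal.ofReal_add (by positivity) (by positivity),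
      ENNReal.ofReal_add (by positivity) (by positivity), ofReal_norm, ofReal_norm, ofReal_norm,
      ofReal_jw, ofReal_jw, ofReal_jw]
    ring) s
  have h3 : ∀ k, wt s k * ‖triS B m a b c k‖ₑ ≤ K * (wt (s - 1) k * tri (fun p => wt 1 p * A p) B' C k
      + wt (s - 1) k * tri (fun p => wt 1 p * B' p) A C k
      + wt (s - 1) k * tri (fun p => wt 1 p * C p) B' A k) := by
    intro k
    refine (h1 k).trans (le_of_eq ?_)
    rw [tri_swap12 (fun p => wt 1 p * B' p) A C, tri_swap12 (fun p => wt 1 p * C p),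
      tri_swap23 B', tri_swap12 B' A]
    unfold tri
    rw [← mul_add, ← mul_add, mul_left_comm, ← ENNReal.tsum_add, ← ENNReal.tsum_add,
      ← ENNReal.tsum_mul_left (a := K)]
    congr 1
    refine tsum_congr fun x => ?_
    split_ifs <;> simp
  have h4 : ∀ A B C : ℤ → ℝ≥0∞, l2 (fun k => wt (s - 1) k * tri (fun p => wt 1 p * A p) B C k) ≤
      5 * Sw (2 * s) * (l2 (fun k => wt s k * A k) * l2 (fun k => wt s k * B k) *
        l2 (fun k => wt s k * C k)) := by
    intro A B C
    refine (trilin_neg hs hs1 _ B C).trans (le_of_eq ?_)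
    simp_rw [wt_shift, sub_add_cancel]
  calc en s (triS B m a b c) ≤ l2 (fun k => K * (wt (s - 1) k * tri (fun p => wt 1 p * A p) B' C k
      + wt (s - 1) k * tri (fun p => wt 1 p * B' p) A C k
      + wt (s - 1) k * tri (fun p => wt 1 p * C p) B' A k)) := l2_mono h3
    _ ≤ K * (5 * Sw (2 * s) * (en s a' * en s b' * en s c') +
          5 * Sw (2 * s) * (en s b' * en s a' * en s c') +
          5 * Sw (2 * s) * (en s c' * en s b' * en s a')) := by
        rw [l2_const_mul]
        gcongr
        refine (l2_add_le _ _).trans ?_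
        gcongr
        · refine (l2_add_le _ _).trans ?_
          gcongr
          · exact h4 _ _ _
          · exact h4 _ _ _
        · exact h4 _ _ _
    _ = K * (15 * Sw (2 * s)) * (en s a' * en s b' * en s c') := by ring
    _ ≤ K * (15 * Sw (2 * s)) * (ENNReal.ofReal X * ENNReal.ofReal Y * ENNReal.ofReal Z) := by
        gcongr
        · exact ha.2
        · exact hb.2
        · exact hc.2
    _ = ENNReal.ofReal (κ * cNeg s * (X * Y * Z)) := by
        rw [ENNReal.ofReal_mul (by have := cNeg_nonneg s; positivity), ENNReal.ofReal_mul hκ, cNeg,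
          ENNReal.ofReal_toReal (ENNReal.mul_ne_top (by simp) (Sw_ne_top (by linarith))),
          ENNReal.ofReal_mul (by positivity), ENNReal.ofReal_mul hX]

/-- Constant of the half-derivative trilinear estimate. -/
def cHalf (s : ℝ) : ℝ := (3 * Sw (2 - s)).toReal

lemma cHalf_nonneg (s : ℝ) : 0 ≤ cHalf s := ENNReal.toReal_nonneg

/-- A trilinear multiplier of size `⟨p⟩⟨q⟩^{1/2}⟨r⟩^{1/2}/⟨p+q+r⟩` maps `H¹` to `H^s`. -/
lemma Bd_triS_half {s : ℝ} (hs : 0 < s) (hs1 : s < 1) {B : Finset ℤ}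
    {m : ℤ → ℤ → ℤ → ℂ} {a b c : FSeq} {X Y Z κ : ℝ} (hκ : 0 ≤ κ)
    (h : ∀ p ∈ B, ∀ q ∈ B, ∀ r ∈ B, ‖m p q r‖ * jw (p + q + r) ≤
      κ * (jw p * (1 + (q : ℝ) ^ 2) ^ ((1 : ℝ) / 2 / 2) * (1 + (r : ℝ) ^ 2) ^ ((1 : ℝ) / 2 / 2)))
    (ha : Bd 1 a X) (hb : Bd 1 b Y) (hc : Bd 1 c Z) :
    Bd s (triS B m a b c) (κ * cHalf s * (X * Y * Z)) := by
  have hX := ha.1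
  have hY := hb.1
  have hZ := hc.1
  refine ⟨by have := cHalf_nonneg s; positivity, ?_⟩
  set A := fun k => ‖a k‖ₑ
  set B' := fun k => ‖b k‖ₑ
  set C := fun k => ‖c k‖ₑ
  set K := ENNReal.ofReal κ
  have h1 := enorm_triS_le (B := B) (m := m) (a := a) (b := b) (c := c)
    (F := fun p q r => K * ((wt 1 p * A p) * (wt (1 / 2) q * B' q) * (wt (1 / 2) r * C r))) (by
    intro p hp q hq r hr
    have h2 := ENNReal.ofReal_le_ofReal (h p hp q hq r hr)
    have j1 := jw_pos p
    rw [ENNReal.ofReal_mul (norm_nonneg _), ofReal_norm, ofReal_jw, ENNReal.ofReal_mul hκ,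
      ENNReal.ofReal_mul (by positivity), ENNReal.ofReal_mul (by positivity), ofReal_jw] at h2
    change _ ≤ K * (wt 1 p * wt (1 / 2) q * wt (1 / 2) r) at h2
    calc _ = (‖m p q r‖ₑ * wt 1 (p + q + r)) * (A p * B' q * C r) := by
            simp only [enorm_mul]; ring
      _ ≤ K * (wt 1 p * wt (1 / 2) q * wt (1 / 2) r) * (A p * B' q * C r) := by gcongr
      _ = _ := by ring) s
  have h3 : ∀ k, wt s k * ‖triS B m a b c k‖ₑ ≤ K * (wt (s - 1) k *
      tri (fun p => wt 1 p * A p) (fun p => wt (1 / 2) p * B' p) (fun p => wt (1 / 2) p * C p) k) := by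
    intro k
    refine (h1 k).trans (le_of_eq ?_)
    unfold tri
    rw [mul_left_comm, ← ENNReal.tsum_mul_left (a := K)]
    congr 1
    refine tsum_congr fun x => ?_
    split_ifs <;> simp
  calc en s (triS B m a b c) ≤ l2 (fun k => K * (wt (s - 1) k *
      tri (fun p => wt 1 p * A p) (fun p => wt (1 / 2) p * B' p) (fun p => wt (1 / 2) p * C p) k)) :=
        l2_mono h3
    _ ≤ K * (3 * Sw (2 - s) * (en 1 a * en 1 b * en 1 c)) := by
        rw [l2_const_mul]
        gcongr
        refine (trilin_half hs hs1 _ _ _).trans (le_of_eq ?_)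
        simp_rw [wt_shift]
        norm_num
        rfl
    _ ≤ K * (3 * Sw (2 - s) * (ENNReal.ofReal X * ENNReal.ofReal Y * ENNReal.ofReal Z)) := by
        gcongr
        · exact ha.2
        · exact hb.2
        · exact hc.2
    _ = ENNReal.ofReal (κ * cHalf s * (X * Y * Z)) := by
        rw [ENNReal.ofReal_mul (by have := cHalf_nonneg s; positivity), ENNReal.ofReal_mul hκ, cHalf,
          ENNReal.ofReal_toReal (ENNReal.mul_ne_top (by simp) (Sw_ne_top (by linarith))),
          ENNReal.ofReal_mul (by positivity), ENNReal.ofReal_mul hX]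
        exact (mul_assoc _ _ _).symm

/-! ### Elementary bounds for the oscillatory integrals and multipliers -/

lemma norm_exp_sub_one_le (x : ℝ) : ‖exp (I * x) - 1‖ ≤ |x| := by
  have := Real.norm_exp_I_mul_ofReal_sub_one_le (x := x)
  simpa using this

lemma norm_exp_sub_one_le_two (x : ℝ) : ‖exp (I * x) - 1‖ ≤ 2 := by
  refine (norm_sub_le _ _).trans ?_
  rw [mul_comm, Complex.norm_exp_ofReal_mul_I]
  norm_num

/-- Interpolation between the trivial bound `2` and the bound `|x|`. -/
lemma norm_exp_sub_one_le_sqrt (x : ℝ) : ‖exp (I * x) - 1‖ ≤ Real.sqrt (2 * |x|) := by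
  refine Real.le_sqrt_of_sq_le ?_
  rw [sq]
  exact mul_le_mul (norm_exp_sub_one_le_two x) (norm_exp_sub_one_le x) (norm_nonneg _) (by norm_num)

lemma norm_osc_le {τ : ℝ} (hτ : 0 ≤ τ) (φ : ℤ) : ‖osc τ φ‖ ≤ τ := by
  have := intervalIntegral.norm_integral_le_of_norm_le_const (a := 0) (b := τ) (C := 1)
    (f := fun σ : ℝ => exp (I * (σ : ℂ) * (φ : ℂ))) (fun σ _ => by
      rw [show I * (σ : ℂ) * φ = ((σ * φ : ℝ) : ℂ) * I by push_cast; ring,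
        Complex.norm_exp_ofReal_mul_I])
  simpa [osc, abs_of_nonneg hτ] using this

lemma osc_integrable (τ : ℝ) (φ : ℤ) :
    IntervalIntegrable (fun σ : ℝ => exp (I * (σ : ℂ) * (φ : ℂ))) volume 0 τ :=
  (by fun_prop : Continuous fun σ : ℝ => exp (I * (σ : ℂ) * (φ : ℂ))).intervalIntegrable _ _

/-- The half-derivative bound `|e^{2iσqr}-1| ≲ σ^{1/2}⟨q⟩^{1/2}⟨r⟩^{1/2}`. -/
lemma phase_half {τ σ : ℝ} (hσ : σ ∈ Set.Icc 0 τ) (q r : ℤ) :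
    ‖exp (I * (σ : ℂ) * ((2 * q * r : ℤ) : ℂ)) - 1‖ ≤ 2 * Real.sqrt τ *
      ((1 + (q : ℝ) ^ 2) ^ ((1 : ℝ) / 2 / 2) * (1 + (r : ℝ) ^ 2) ^ ((1 : ℝ) / 2 / 2)) := by
  have h1 : I * (σ : ℂ) * ((2 * q * r : ℤ) : ℂ) = I * ((σ * (2 * q * r) : ℝ) : ℂ) := by
    push_cast; ring
  rw [h1]
  refine (norm_exp_sub_one_le_sqrt _).trans ?_
  have h2 : 2 * |σ * (2 * (q : ℝ) * r)| ≤ 2 ^ 2 * τ * (jw q * jw r) := by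
    rw [abs_mul, abs_of_nonneg hσ.1, abs_mul, abs_mul, abs_two]
    calc 2 * (σ * (2 * |(q : ℝ)| * |(r : ℝ)|)) = 2 ^ 2 * σ * (|(q : ℝ)| * |(r : ℝ)|) := by ring
      _ ≤ 2 ^ 2 * τ * (jw q * jw r) := by
        have := hσ.1.trans hσ.2
        gcongr
        · exact hσ.2
        · exact (jw_pos q).le
        · exact abs_le_jw q
        · exact abs_le_jw r
  refine (Real.sqrt_le_sqrt h2).trans (le_of_eq ?_)
  have h3 : ∀ k : ℤ, Real.sqrt (jw k) = (1 + (k : ℝ) ^ 2) ^ ((1 : ℝ) / 2 / 2) := by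
    intro k
    rw [Real.sqrt_eq_rpow, jw, ← Real.rpow_mul (jb_pos k).le]
    norm_num
  have := hσ.1.trans hσ.2
  rw [Real.sqrt_mul (by positivity), Real.sqrt_mul (by positivity), Real.sqrt_sq (by norm_num),
    Real.sqrt_mul (jw_pos q).le, h3, h3]

lemma osc_sub_half {τ : ℝ} (hτ : 0 ≤ τ) (q r : ℤ) :
    ‖(τ : ℂ) - osc τ (2 * q * r)‖ ≤ 2 * (τ * Real.sqrt τ) *
      ((1 + (q : ℝ) ^ 2) ^ ((1 : ℝ) / 2 / 2) * (1 + (r : ℝ) ^ 2) ^ ((1 : ℝ) / 2 / 2)) := by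
  have h1 : osc τ (2 * q * r) - τ = ∫ σ in (0 : ℝ)..τ, (exp (I * (σ : ℂ) * ((2 * q * r : ℤ) : ℂ)) - 1) := by
    rw [intervalIntegral.integral_sub (osc_integrable _ _) (by simp)]
    simp [osc]
  rw [norm_sub_rev, h1]
  have h2 := intervalIntegral.norm_integral_le_of_norm_le_const (a := 0) (b := τ)
    (f := fun σ : ℝ => exp (I * (σ : ℂ) * ((2 * q * r : ℤ) : ℂ)) - 1) (fun σ hσ => by
      rw [Set.uIoc_of_le hτ] at hσ
      exact phase_half ⟨hσ.1.le, hσ.2⟩ q r)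
  refine h2.trans (le_of_eq ?_)
  rw [sub_zero, abs_of_nonneg hτ]
  ring

/-- The resonance-based approximation `e^{i(x+y)} ≈ e^{ix}+e^{iy}-1` costs
`(e^{ix}-1)(e^{iy}-1)`, which is bounded using half a derivative on each of `q`, `r`. -/
lemma osc_split {τ : ℝ} (hτ : 0 ≤ τ) (x q r : ℤ) :
    ‖osc τ x + osc τ (2 * q * r) - τ - osc τ (x + 2 * q * r)‖ ≤ 4 * (τ * Real.sqrt τ) *
      ((1 + (q : ℝ) ^ 2) ^ ((1 : ℝ) / 2 / 2) * (1 + (r : ℝ) ^ 2) ^ ((1 : ℝ) / 2 / 2)) := by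
  have h1 : osc τ x + osc τ (2 * q * r) - τ - osc τ (x + 2 * q * r) = ∫ σ in (0 : ℝ)..τ,
      -((exp (I * (σ : ℂ) * ((x : ℤ) : ℂ)) - 1) * (exp (I * (σ : ℂ) * ((2 * q * r : ℤ) : ℂ)) - 1)) := by
    have e : ∀ σ : ℝ, -((exp (I * (σ : ℂ) * ((x : ℤ) : ℂ)) - 1) *
        (exp (I * (σ : ℂ) * ((2 * q * r : ℤ) : ℂ)) - 1)) =
        exp (I * (σ : ℂ) * ((x : ℤ) : ℂ)) + exp (I * (σ : ℂ) * ((2 * q * r : ℤ) : ℂ)) - 1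
          - exp (I * (σ : ℂ) * ((x + 2 * q * r : ℤ) : ℂ)) := by
      intro σ
      have : exp (I * (σ : ℂ) * ((x + 2 * q * r : ℤ) : ℂ)) = exp (I * (σ : ℂ) * ((x : ℤ) : ℂ)) *
          exp (I * (σ : ℂ) * ((2 * q * r : ℤ) : ℂ)) := by
        rw [← Complex.exp_add]; congr 1; push_cast; ring
      rw [this]; ring
    simp_rw [e]
    rw [intervalIntegral.integral_sub (((osc_integrable _ _).add (osc_integrable _ _)).sub (by simp))
      (osc_integrable _ _), intervalIntegral.integral_sub ((osc_integrable _ _).add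
      (osc_integrable _ _)) (by simp), intervalIntegral.integral_add (osc_integrable _ _)
      (osc_integrable _ _)]
    simp [osc]
  rw [h1]
  have h2 := intervalIntegral.norm_integral_le_of_norm_le_const (a := 0) (b := τ)
    (f := fun σ : ℝ => -((exp (I * (σ : ℂ) * ((x : ℤ) : ℂ)) - 1) *
      (exp (I * (σ : ℂ) * ((2 * q * r : ℤ) : ℂ)) - 1)))
    (C := 2 * (2 * Real.sqrt τ *
      ((1 + (q : ℝ) ^ 2) ^ ((1 : ℝ) / 2 / 2) * (1 + (r : ℝ) ^ 2) ^ ((1 : ℝ) / 2 / 2)))) (fun σ hσ => by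
      rw [Set.uIoc_of_le hτ] at hσ
      rw [norm_neg, norm_mul]
      refine mul_le_mul ?_ (phase_half ⟨hσ.1.le, hσ.2⟩ q r) (norm_nonneg _) (by norm_num)
      have := norm_exp_sub_one_le_two (σ * x)
      rwa [show I * ((σ * x : ℝ) : ℂ) = I * (σ : ℂ) * (x : ℂ) by push_cast; ring] at this)
  refine h2.trans (le_of_eq ?_)
  rw [sub_zero, abs_of_nonneg hτ]
  ring

/-! ### Stability of the one-step map -/

lemma norm_div_mul_jw (x : ℂ) {k : ℤ} (hk : k ≠ 0) : ‖x / (k : ℂ)‖ * jw k ≤ 2 * ‖x‖ := by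
  have h1 : (0 : ℝ) < |(k : ℝ)| := by positivity
  rw [norm_div, Complex.norm_intCast, div_mul_eq_mul_div, div_le_iff₀ h1]
  nlinarith [jw_le hk, norm_nonneg x]

lemma norm_intCast_le_jw (x : ℤ) : ‖(x : ℂ)‖ ≤ jw x := by
  rw [Complex.norm_intCast]; exact abs_le_jw x

lemma norm_add_le_jw (x y : ℤ) : ‖((x + y : ℤ) : ℂ)‖ ≤ jw x + jw y := by
  rw [Int.cast_add]
  exact (norm_add_le _ _).trans (add_le_add (norm_intCast_le_jw x) (norm_intCast_le_jw y))

lemma norm_frac_mul {x y : ℂ} {k : ℤ} (hk : k ≠ 0) {X Y : ℝ} (hx : ‖x‖ ≤ X) (hy : ‖y‖ ≤ Y) :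
    ‖x / (k : ℂ) * y‖ * jw k ≤ 2 * X * Y := by
  have h1 := norm_div_mul_jw x hk
  have h2 := norm_nonneg x
  rw [norm_mul, mul_right_comm]
  exact mul_le_mul (by linarith) hy (norm_nonneg _) (by linarith)

lemma jw_zero : jw 0 = 1 := by simp [jw]

lemma norm_lam {lam : ℝ} (hl : lam = 1 ∨ lam = -1) : ‖(lam : ℂ)‖ = 1 := by
  rcases hl with rfl | rfl <;> simp

/-- The trilinear multiplier of the scheme loses at most one derivative, which `∂ₓ⁻¹` gives back. -/
lemma norm_mm_le {lam τ : ℝ} (hl : lam = 1 ∨ lam = -1) (hτ : 0 ≤ τ) (N : ℕ) (p q r : ℤ) :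
    ‖mm lam τ N p q r‖ * jw (p + q + r) ≤ 10 * τ * (jw p + jw q + jw r) := by
  have hp := one_le_jw p
  have hq := jw_pos q
  have hr := jw_pos r
  have hl' := norm_lam hl
  unfold mm
  by_cases hk : p + q + r = 0
  · rw [if_pos hk, hk, jw_zero, mul_one]
    have h1 : ‖(if |p + q| ≤ (N : ℤ) then -(I * lam * τ) else 0 : ℂ)‖ ≤ τ := by
      split_ifs
      · rw [norm_neg, norm_mul, norm_mul, hl', norm_I, Complex.norm_real, Real.norm_of_nonneg hτ]
        simp
      · simpa using hτ
    nlinarith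
  · rw [if_neg hk]
    have h0 := (jw_pos (p + q + r)).le
    have h1 : ‖(if p + q ≠ 0 ∧ |p + q| ≤ (N : ℤ) then -(2 * I * lam * ((p + r : ℤ) / (p + q + r : ℤ)) *
        osc τ (2 * (p + q) * (p + r))) else 0 : ℂ)‖ * jw (p + q + r) ≤ 4 * τ * (jw p + jw r) := by
      split_ifs
      · have e1 := norm_frac_mul hk (norm_add_le_jw p r) (norm_osc_le hτ (2 * (p + q) * (p + r)))
        rw [mul_assoc (2 * I * (lam : ℂ)), norm_neg, norm_mul, norm_mul, norm_mul, hl', norm_I,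
          norm_ofNat]
        linarith
      · rw [norm_zero, zero_mul]; positivity
    have h2 : ‖(if |q + r| ≤ (N : ℤ) then I * lam * ((p : ℂ) / (p + q + r : ℤ)) *
        (osc τ (2 * p * (p + q + r)) + osc τ (2 * q * r) - τ) else 0 : ℂ)‖ * jw (p + q + r) ≤
        6 * τ * jw p := by
      split_ifs
      · have e2 : ‖osc τ (2 * p * (p + q + r)) + osc τ (2 * q * r) - τ‖ ≤ τ + τ + τ := by
          refine (norm_sub_le _ _).trans (add_le_add ((norm_add_le _ _).trans
            (add_le_add (norm_osc_le hτ _) (norm_osc_le hτ _))) ?_)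
          simp [abs_of_nonneg hτ]
        have e1 := norm_frac_mul hk (norm_intCast_le_jw p) e2
        rw [mul_assoc (I * (lam : ℂ)), norm_mul, norm_mul, hl', norm_I]
        linarith
      · rw [norm_zero, zero_mul]; positivity
    refine (mul_le_mul_of_nonneg_right (norm_add_le _ _) h0).trans ?_
    rw [add_mul]
    nlinarith [mul_nonneg hτ hq.le, mul_nonneg hτ hr.le]

lemma triS_sub_args {B : Finset ℤ} (m : ℤ → ℤ → ℤ → ℂ) (a b c a' b' c' : FSeq) :
    triS B m a b c - triS B m a' b' c' =
      triS B m (a - a') b c + triS B m a' (b - b') c + triS B m a' b' (c - c') := by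
  funext k
  simp only [Pi.sub_apply, Pi.add_apply]
  unfold triS
  simp_rw [← Finset.sum_sub_distrib, ← Finset.sum_add_distrib]
  refine Finset.sum_congr rfl fun p _ => Finset.sum_congr rfl fun q _ =>
    Finset.sum_congr rfl fun r _ => ?_
  split_ifs
  · simp only [Pi.sub_apply]; ring
  · simp

/-- The phase correction produced by the (real) mass `Mr` and momentum `J`. -/
def yph (lam τ Mr J : ℝ) (k : ℤ) : ℝ := 2 * lam * τ * (Mr - J / k)

/-- With real mass `Mr` and momentum `P = -iJ`, the linear multiplier is unimodular. -/
lemma mainMult_eq (lam τ Mr J : ℝ) {k : ℤ} (hk : k ≠ 0) :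
    mainMult lam τ Mr (-(I * J)) k =
      exp (-I * (τ : ℂ) * (k : ℂ) ^ 2) * exp (I * ((-yph lam τ Mr J k : ℝ) : ℂ)) := by
  have hk' : (k : ℂ) ≠ 0 := by exact_mod_cast hk
  rw [mainMult, if_neg hk, ← Complex.exp_add, yph]
  congr 1
  push_cast
  have := I_ne_zero
  field_simp
  ring

lemma norm_mainMult (lam τ Mr J : ℝ) (k : ℤ) : ‖mainMult lam τ Mr (-(I * J)) k‖ = 1 := by
  by_cases hk : k = 0
  · simp [mainMult, hk]
  · rw [mainMult_eq _ _ _ _ hk, norm_mul, norm_phase, mul_comm I, Complex.norm_exp_ofReal_mul_I,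
      one_mul]

lemma Psi_supp {lam τ : ℝ} {N : ℕ} {M P : ℂ} {f : FSeq} (hf : Supp (bx N) f) :
    Supp (bx N) (Psi lam τ N M P f) := fun k hk => by
  rw [Psi_eq hf, hf k hk, if_neg (by rwa [mem_bx] at hk)]
  simp

/-- The one-step map is Lipschitz on `H^s`-bounded sets with constant `1 + O(τ)`. -/
lemma Psi_stable {s : ℝ} (hs : 1 / 2 < s) (hs1 : s < 1) {lam τ : ℝ} (hl : lam = 1 ∨ lam = -1)
    (hτ : 0 ≤ τ) {N : ℕ} (Mr J : ℝ) {f g : FSeq} {X d : ℝ} (hf : Supp (bx N) f)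
    (hg : Supp (bx N) g) (hfX : Bd s f X) (hgX : Bd s g X) (hd : Bd s (f - g) d) :
    Bd s (Psi lam τ N Mr (-(I * J)) f - Psi lam τ N Mr (-(I * J)) g)
      (d + 30 * τ * cNeg s * X ^ 2 * d) := by
  have hm : ∀ a b c : FSeq, ∀ p ∈ bx N, ∀ q ∈ bx N, ∀ r ∈ bx N,
      ‖mm lam τ N p q r * (a p * b q * c r)‖ * jw (p + q + r) ≤
      10 * τ * (jw p + jw q + jw r) * (‖a p‖ * ‖b q‖ * ‖c r‖) := by
    intro a b c p _ q _ r _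
    rw [norm_mul, norm_mul, norm_mul, mul_right_comm]
    exact mul_le_mul_of_nonneg_right (norm_mm_le hl hτ N p q r) (by positivity)
  have hτ' : (0 : ℝ) ≤ 10 * τ := by linarith
  have h1 := Bd_triS_neg hs hs1 hτ' (hm (conjS f - conjS g) f f)
    (by rw [← conjS_sub]; exact hd.conjS) hfX hfX
  have h2 := Bd_triS_neg hs hs1 hτ' (hm (conjS g) (f - g) f) hgX.conjS hd hfX
  have h3 := Bd_triS_neg hs hs1 hτ' (hm (conjS g) g (f - g)) hgX.conjS hgX hd
  have h4 := (h1.add h2).add h3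
  rw [← triS_sub_args] at h4
  have h5 : Bd s (fun k => mainMult lam τ Mr (-(I * J)) k * (f - g) k) d :=
    hd.of_norm_le fun k => by rw [norm_mul, norm_mainMult, one_mul]
  have h6 : Bd s (fun k => if |k| ≤ (N : ℤ) then exp (-I * (τ : ℂ) * (k : ℂ) ^ 2) *
      (triS (bx N) (mm lam τ N) (conjS f) f f - triS (bx N) (mm lam τ N) (conjS g) g g) k else 0) _ :=
    h4.of_norm_le fun k => by
      split_ifs
      · rw [norm_mul, norm_phase, one_mul]
      · simp
  have h7 := h5.add h6
  have e : Psi lam τ N Mr (-(I * J)) f - Psi lam τ N Mr (-(I * J)) g =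
      (fun k => mainMult lam τ Mr (-(I * J)) k * (f - g) k) + (fun k => if |k| ≤ (N : ℤ) then
        exp (-I * (τ : ℂ) * (k : ℂ) ^ 2) * (triS (bx N) (mm lam τ N) (conjS f) f f -
          triS (bx N) (mm lam τ N) (conjS g) g g) k else 0) := by
    funext k
    rw [Pi.sub_apply, Psi_eq hf, Psi_eq hg, Pi.add_apply]
    simp only [Pi.sub_apply]
    split_ifs <;> ring
  rw [e]
  exact h7.mono (le_of_eq (by ring))

/-! ### Splitting of the Picard multiplier -/

/-- The symmetrized exact multiplier of the first Picard iterate. -/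
def mW (lam τ : ℝ) (p q r : ℤ) : ℂ :=
  if p + q + r = 0 then -(I * lam * osc τ (2 * (p + q) * (p + r)))
  else -(2 * I * lam * ((p + r : ℤ) / (p + q + r : ℤ)) * osc τ (2 * (p + q) * (p + r)))
    + I * lam * ((p : ℂ) / (p + q + r : ℤ)) * osc τ (2 * (p + q) * (p + r))

lemma triS_mW {B : Finset ℤ} (lam τ : ℝ) (a b : FSeq) (k : ℤ) :
    triS B (fun p q r => -(I * lam * osc τ (2 * (p + q) * (p + r)))) a b b k =
      triS B (mW lam τ) a b b k := by
  have h1 : triS B (fun p q r => mW lam τ p r q) a b b k = triS B (mW lam τ) a b b k :=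
    (triS_swap _ _ _ _ _).symm
  have h2 : triS B (fun p q r => mW lam τ p q r + mW lam τ p r q) a b b k =
      2 * triS B (mW lam τ) a b b k := by
    rw [← triS_add, h1, two_mul]
  have h3 : triS B (fun p q r => mW lam τ p q r + mW lam τ p r q) a b b k =
      2 * triS B (fun p q r => -(I * lam * osc τ (2 * (p + q) * (p + r)))) a b b k := by
    rw [mul_triS]
    refine triS_congr fun p _ q _ r _ _ => ?_
    congr 1
    have e1 : p + r + q = p + q + r := by ring
    have e2 : 2 * (p + r) * (p + q) = 2 * (p + q) * (p + r) := by ring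
    unfold mW
    rw [e1, e2]
    split_ifs with h
    · ring
    · have h' : (p : ℂ) + q + r ≠ 0 := by exact_mod_cast h
      push_cast
      field_simp
      ring
  have h4 := h2.symm.trans h3
  exact (mul_left_cancel₀ two_ne_zero h4).symm

/-- Resonant part `p + q = 0` of the multiplier defect, compensated by the linear flow. -/
def mZ (lam τ : ℝ) (p q r : ℤ) : ℂ :=
  if p + q + r ≠ 0 ∧ p + q = 0 then 2 * I * lam * τ * ((p + r : ℤ) / (p + q + r : ℤ)) else 0

/-- Truncation part of the multiplier defect, supported on `|p + q| > N`. -/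
def mA (lam τ : ℝ) (N : ℕ) (p q r : ℤ) : ℂ :=
  if |p + q| ≤ (N : ℤ) then 0 else if p + q + r = 0 then I * lam * osc τ (2 * (p + q) * (p + r))
  else 2 * I * lam * ((p + r : ℤ) / (p + q + r : ℤ)) * osc τ (2 * (p + q) * (p + r))

/-- Truncation part of the multiplier defect, supported on `|q + r| > N`. -/
def mB (lam τ : ℝ) (N : ℕ) (p q r : ℤ) : ℂ :=
  if |q + r| ≤ (N : ℤ) then 0 else if p + q + r = 0 then 0
  else -(I * lam * ((p : ℂ) / (p + q + r : ℤ)) * osc τ (2 * (p + q) * (p + r)))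

/-- Time-discretization part of the multiplier defect. -/
def mE (lam τ : ℝ) (N : ℕ) (p q r : ℤ) : ℂ :=
  if p + q + r = 0 then (if |p + q| ≤ (N : ℤ) then
    -(I * lam * (τ - osc τ (2 * (p + q) * (p + r)))) else 0)
  else if |q + r| ≤ (N : ℤ) then I * lam * ((p : ℂ) / (p + q + r : ℤ)) *
    (osc τ (2 * p * (p + q + r)) + osc τ (2 * q * r) - τ - osc τ (2 * (p + q) * (p + r))) else 0

lemma mm_sub_mW (lam τ : ℝ) (N : ℕ) (p q r : ℤ) :
    mm lam τ N p q r - mW lam τ p q r =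
      mZ lam τ p q r + mA lam τ N p q r + mB lam τ N p q r + mE lam τ N p q r := by
  unfold mm mW mZ mA mB mE
  by_cases hk : p + q + r = 0
  · simp only [hk, if_true, ne_eq, not_true, false_and, if_false]
    split_ifs <;> ring
  · simp only [hk, if_false, ne_eq, not_false_iff, true_and]
    by_cases h0 : p + q = 0
    · simp only [h0, abs_zero, Nat.cast_nonneg, if_true, not_true, false_and, if_false]
      rw [show 2 * 0 * (p + r) = 0 by ring, osc_zero]
      split_ifs <;> ring
    · simp only [h0, not_false_iff, true_and, if_false]
      split_ifs <;> ring

/-! ### The multiplier defect and the local error of the scheme -/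

lemma half_rpow_le {s : ℝ} (hs : 0 < s) (hs1 : s < 1) {N : ℕ} (hN : 2 ≤ N) :
    ((N / 2 : ℕ) : ℝ) ^ (s - 1) ≤ 4 * (N : ℝ) ^ (s - 1) := by
  have hN' : (2 : ℝ) ≤ N := by exact_mod_cast hN
  have h1 : (N : ℝ) / 4 ≤ ((N / 2 : ℕ) : ℝ) := by
    have : N ≤ 4 * (N / 2) := by omega
    have : (N : ℝ) ≤ 4 * ((N / 2 : ℕ) : ℝ) := by exact_mod_cast this
    linarith
  have h2 : (0 : ℝ) < (N : ℝ) / 4 := by linarith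
  refine (Real.rpow_le_rpow_of_nonpos h2 h1 (by linarith)).trans ?_
  rw [Real.div_rpow (by linarith) (by norm_num), div_eq_mul_inv, mul_comm,
    ← Real.rpow_neg (by norm_num)]
  have h3 : (4 : ℝ) ^ (-(s - 1)) ≤ 4 := by
    calc (4 : ℝ) ^ (-(s - 1)) ≤ 4 ^ (1 : ℝ) :=
          Real.rpow_le_rpow_of_exponent_le (by norm_num) (by linarith)
      _ = 4 := Real.rpow_one _
  have : 0 ≤ (N : ℝ) ^ (s - 1) := by positivity
  gcongr

lemma norm_tail {a : FSeq} {K : ℕ} {p : ℤ} (h : ¬ |p| ≤ (K : ℤ)) : (a - piN K a) p = a p := by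
  simp [piN, h]

/-- A multiplier supported on `|p + q| > N` gains the factor `N^{s-1}` on `H¹` functions: one of
`p`, `q` exceeds `N/2`. -/
lemma Bd_triS_high {s : ℝ} (hs : 1 / 2 < s) (hs1 : s < 1) {B : Finset ℤ} {N : ℕ} (hN : 2 ≤ N)
    {m : ℤ → ℤ → ℤ → ℂ} {a b c : FSeq} {X κ : ℝ} (hκ : 0 ≤ κ)
    (h0 : ∀ p q r, |p + q| ≤ (N : ℤ) → m p q r = 0)
    (h : ∀ p q r, ‖m p q r‖ * jw (p + q + r) ≤ κ * (jw p + jw q + jw r))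
    (ha : Bd 1 a X) (hb : Bd 1 b X) (hc : Bd 1 c X) :
    Bd s (triS B m a b c) (8 * κ * cNeg s * X ^ 3 * (N : ℝ) ^ (s - 1)) := by
  have hX := ha.1
  have hK : 0 < N / 2 := by omega
  have hmul : ∀ p q r, ‖m p q r * (a p * b q * c r)‖ * jw (p + q + r) ≤
      κ * (jw p + jw q + jw r) * (‖a p‖ * ‖b q‖ * ‖c r‖) := by
    intro p q r
    rw [norm_mul, norm_mul, norm_mul, mul_right_comm]
    exact mul_le_mul_of_nonneg_right (h p q r) (by positivity)
  have hpos : ∀ p q r, 0 ≤ κ * (jw p + jw q + jw r) := fun p q r => by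
    have := jw_pos p; have := jw_pos q; have := jw_pos r; positivity
  have h1 := Bd_triS_neg (B := B) (m := fun p q r => if |p| ≤ ((N / 2 : ℕ) : ℤ) then 0 else m p q r)
    (a := a) (b := b) (c := c) hs hs1 hκ (fun p _ q _ r _ => by
      by_cases hp : |p| ≤ ((N / 2 : ℕ) : ℤ)
      · rw [if_pos hp, zero_mul, norm_zero, zero_mul]
        exact mul_nonneg (hpos p q r) (by positivity)
      · rw [if_neg hp, norm_tail hp]; exact hmul p q r)
    (ha.tail hs1.le hK) (hb.lower hs1.le) (hc.lower hs1.le)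
  have h2 := Bd_triS_neg (B := B) (m := fun p q r => if |p| ≤ ((N / 2 : ℕ) : ℤ) then m p q r else 0)
    (a := a) (b := b) (c := c) (a' := a) (c' := c) hs hs1 hκ (fun p _ q _ r _ => by
      by_cases hp : |p| ≤ ((N / 2 : ℕ) : ℤ)
      · rw [if_pos hp]
        by_cases hq : |q| ≤ ((N / 2 : ℕ) : ℤ)
        · have hpq : |p + q| ≤ (N : ℤ) := by
            have h3 := abs_add_le p q
            omega
          rw [h0 _ _ _ hpq, zero_mul, norm_zero, zero_mul]
          exact mul_nonneg (hpos p q r) (by positivity)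
        · rw [norm_tail hq]; exact hmul p q r
      · rw [if_neg hp, zero_mul, norm_zero, zero_mul]
        exact mul_nonneg (hpos p q r) (by positivity))
    (ha.lower hs1.le) (hb.tail hs1.le hK) (hc.lower hs1.le)
  have h3 := h1.add h2
  have e : triS B m a b c = triS B (fun p q r => if |p| ≤ ((N / 2 : ℕ) : ℤ) then 0 else m p q r) a b c
      + triS B (fun p q r => if |p| ≤ ((N / 2 : ℕ) : ℤ) then m p q r else 0) a b c := by
    funext k
    rw [Pi.add_apply, triS_add]
    refine triS_congr fun p _ q _ r _ _ => ?_
    split_ifs <;> simp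
  rw [e]
  refine h3.mono ?_
  have h4 := half_rpow_le (by linarith) hs1 hN
  have h5 := cNeg_nonneg s
  calc _ = 2 * κ * cNeg s * X ^ 3 * ((N / 2 : ℕ) : ℝ) ^ (s - 1) := by ring
    _ ≤ 2 * κ * cNeg s * X ^ 3 * (4 * (N : ℝ) ^ (s - 1)) := by gcongr
    _ = _ := by ring

lemma norm_mA_le {lam τ : ℝ} (hl : lam = 1 ∨ lam = -1) (hτ : 0 ≤ τ) (N : ℕ) (p q r : ℤ) :
    ‖mA lam τ N p q r‖ * jw (p + q + r) ≤ 4 * τ * (jw p + jw q + jw r) := by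
  have hp := one_le_jw p
  have hq := jw_pos q
  have hr := jw_pos r
  have hl' := norm_lam hl
  unfold mA
  split_ifs with h1 h2
  · rw [norm_zero, zero_mul]; positivity
  · rw [h2, jw_zero, norm_mul, norm_mul, hl', norm_I]
    nlinarith [norm_osc_le hτ (2 * (p + q) * (p + r))]
  · have e1 := norm_frac_mul h2 (norm_add_le_jw p r) (norm_osc_le hτ (2 * (p + q) * (p + r)))
    rw [mul_assoc (2 * I * (lam : ℂ)), norm_mul, norm_mul, norm_mul, hl', norm_I, norm_ofNat]
    nlinarith [mul_nonneg hτ hq.le]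

lemma norm_mB_le {lam τ : ℝ} (hl : lam = 1 ∨ lam = -1) (hτ : 0 ≤ τ) (N : ℕ) (p q r : ℤ) :
    ‖mB lam τ N p q r‖ * jw (p + q + r) ≤ 4 * τ * (jw p + jw q + jw r) := by
  have hp := one_le_jw p
  have hq := jw_pos q
  have hr := jw_pos r
  have hl' := norm_lam hl
  unfold mB
  split_ifs with h1 h2
  · rw [norm_zero, zero_mul]; positivity
  · rw [norm_zero, zero_mul]; positivity
  · have e1 := norm_frac_mul h2 (norm_intCast_le_jw p) (norm_osc_le hτ (2 * (p + q) * (p + r)))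
    rw [mul_assoc (I * (lam : ℂ)), norm_neg, norm_mul, norm_mul, hl', norm_I]
    nlinarith [mul_nonneg hτ hq.le, mul_nonneg hτ hr.le, mul_nonneg hτ (jw_pos p).le]

lemma norm_mE_le {lam τ : ℝ} (hl : lam = 1 ∨ lam = -1) (hτ : 0 ≤ τ) (N : ℕ) (p q r : ℤ) :
    ‖mE lam τ N p q r‖ * jw (p + q + r) ≤ 8 * (τ * Real.sqrt τ) *
      (jw p * (1 + (q : ℝ) ^ 2) ^ ((1 : ℝ) / 2 / 2) * (1 + (r : ℝ) ^ 2) ^ ((1 : ℝ) / 2 / 2)) := by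
  have hp := one_le_jw p
  have hl' := norm_lam hl
  have hqr : 0 ≤ (1 + (q : ℝ) ^ 2) ^ ((1 : ℝ) / 2 / 2) * (1 + (r : ℝ) ^ 2) ^ ((1 : ℝ) / 2 / 2) := by
    positivity
  have ht : 0 ≤ τ * Real.sqrt τ := by positivity
  set Q := (1 + (q : ℝ) ^ 2) ^ ((1 : ℝ) / 2 / 2)
  set R := (1 + (r : ℝ) ^ 2) ^ ((1 : ℝ) / 2 / 2)
  have hb := mul_nonneg ht hqr
  rw [mul_assoc (jw p)]
  unfold mE
  split_ifs with h1 h2 h3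
  · have e1 : 2 * (p + q) * (p + r) = 2 * q * r := by linear_combination (2 * p) * h1
    rw [h1, jw_zero, e1, norm_neg, norm_mul, norm_mul, hl', norm_I]
    have e3 : _ ≤ 2 * (τ * Real.sqrt τ) * (Q * R) := osc_sub_half hτ q r
    nlinarith [mul_le_mul_of_nonneg_right hp hb]
  · rw [norm_zero, zero_mul]; positivity
  · have e1 : 2 * (p + q) * (p + r) = 2 * p * (p + q + r) + 2 * q * r := by ring
    have e3 : _ ≤ 4 * (τ * Real.sqrt τ) * (Q * R) := osc_split hτ (2 * p * (p + q + r)) q r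
    have e2 := norm_frac_mul h1 (norm_intCast_le_jw p) e3
    rw [e1, mul_assoc (I * (lam : ℂ)), norm_mul, norm_mul, hl', norm_I]
    linarith
  · rw [norm_zero, zero_mul]; positivity

/-- Mass of a band-limited function. -/
def massN (N : ℕ) (g : FSeq) : ℝ := ∑ q ∈ bx N, ‖g q‖ ^ 2

/-- Momentum of a band-limited function. -/
def momN (N : ℕ) (g : FSeq) : ℝ := ∑ q ∈ bx N, (q : ℝ) * ‖g q‖ ^ 2

/-- The resonant sum is a phase rotation determined by mass and momentum. -/
lemma triS_mZ (lam τ : ℝ) {N : ℕ} (g : FSeq) {k : ℤ} (hk : k ≠ 0) (hkN : |k| ≤ (N : ℤ)) :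
    triS (bx N) (mZ lam τ) (conjS g) g g k = I * (yph lam τ (massN N g) (momN N g) k : ℂ) * g k := by
  have hk' : (k : ℂ) ≠ 0 := by exact_mod_cast hk
  have h1 : triS (bx N) (mZ lam τ) (conjS g) g g k =
      ∑ p ∈ bx N, 2 * I * lam * τ * ((p + k : ℤ) / (k : ℂ)) * (conj (g (-p)) * g (-p) * g k) := by
    unfold triS
    refine Finset.sum_congr rfl fun p hp => ?_
    rw [Finset.sum_eq_single (-p)]
    · rw [Finset.sum_eq_single k]
      · simp [mZ, hk, conjS]
      · intro r _ hr
        rw [if_neg]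
        intro h; apply hr; linarith
      · intro h; exact absurd (mem_bx.2 hkN) h
    · intro q _ hq
      refine Finset.sum_eq_zero fun r _ => ?_
      have : ¬ (p + q = 0) := fun h => hq (by linarith)
      simp [mZ, this]
    · intro h; exact absurd (neg_mem_bx.2 hp) h
  rw [h1, ← sum_bx_neg, yph, massN, momN]
  have h2 : ∀ p : ℤ, conj (g p) * g p = ((‖g p‖ ^ 2 : ℝ) : ℂ) := fun p => by
    rw [mul_comm, Complex.mul_conj, Complex.normSq_eq_norm_sq]
  simp_rw [neg_neg, h2]
  push_cast
  rw [Finset.sum_div, ← Finset.sum_sub_distrib, Finset.mul_sum, Finset.mul_sum, Finset.sum_mul]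
  refine Finset.sum_congr rfl fun p _ => ?_
  field_simp
  ring

lemma norm_exp_sub_lin (x : ℝ) : ‖exp (I * x) - 1 - I * x‖ ≤ 3 * x ^ 2 := by
  have hn : ‖I * (x : ℂ)‖ = |x| := by simp
  rcases le_total |x| 1 with h | h
  · have := Complex.norm_exp_sub_one_sub_id_le (x := I * x) (by rw [hn]; exact h)
    rw [hn, sq_abs] at this
    nlinarith [sq_nonneg x]
  · refine (norm_sub_le _ _).trans ?_
    rw [hn]
    have := norm_exp_sub_one_le_two x
    nlinarith [sq_abs x]

/-- First Picard iterate of the truncated flow over one time step, started from `g`. -/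
def picard (lam τ : ℝ) (N : ℕ) (g : FSeq) : FSeq := fun k =>
  if |k| ≤ (N : ℤ) then exp (-I * (τ : ℂ) * (k : ℂ) ^ 2) * (g k +
    triS (bx N) (fun p q r => -(I * lam * osc τ (2 * (p + q) * (p + r)))) (conjS g) g g k) else 0

lemma abs_div_int_le (x : ℝ) {k : ℤ} (hk : k ≠ 0) : |x / (k : ℝ)| ≤ |x| := by
  have h1 : (1 : ℝ) ≤ |(k : ℝ)| := by exact_mod_cast Int.one_le_abs hk
  rw [abs_div]
  exact div_le_self (abs_nonneg _) h1

lemma yph_abs_le {lam τ : ℝ} (hl : lam = 1 ∨ lam = -1) (hτ : 0 ≤ τ) (Mr J : ℝ) {k : ℤ}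
    (hk : k ≠ 0) : |yph lam τ Mr J k| ≤ 2 * τ * (|Mr| + |J|) := by
  have hl' : |lam| = 1 := by rcases hl with rfl | rfl <;> simp
  rw [yph, abs_mul, abs_mul, abs_mul, abs_two, hl', abs_of_nonneg hτ, mul_one]
  have := abs_sub Mr (J / k)
  have := abs_div_int_le J hk
  gcongr
  linarith

lemma mainMult_defect {lam τ Y δ Mr J Mg Jg : ℝ} (hl : lam = 1 ∨ lam = -1) (hτ : 0 ≤ τ)
    (hM : |Mr| ≤ Y) (hJ : |J| ≤ Y) (hMd : |Mr - Mg| ≤ δ) (hJd : |J - Jg| ≤ δ) {k : ℤ} (hk : k ≠ 0) :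
    ‖exp (I * ((-yph lam τ Mr J k : ℝ) : ℂ)) - 1 + I * (yph lam τ Mg Jg k : ℂ)‖ ≤
      48 * τ ^ 2 * Y ^ 2 + 4 * τ * δ := by
  have h1 := norm_exp_sub_lin (-yph lam τ Mr J k)
  have h2 := yph_abs_le hl hτ Mr J hk
  have h3 := yph_abs_le hl hτ (Mr - Mg) (J - Jg) hk
  have h4 : yph lam τ (Mr - Mg) (J - Jg) k = yph lam τ Mr J k - yph lam τ Mg Jg k := by
    unfold yph; ring
  rw [h4] at h3
  have e : exp (I * ((-yph lam τ Mr J k : ℝ) : ℂ)) - 1 + I * (yph lam τ Mg Jg k : ℂ) =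
      (exp (I * ((-yph lam τ Mr J k : ℝ) : ℂ)) - 1 - I * ((-yph lam τ Mr J k : ℝ) : ℂ)) -
        I * ((yph lam τ Mr J k - yph lam τ Mg Jg k : ℝ) : ℂ) := by
    push_cast; ring
  rw [e]
  refine (norm_sub_le _ _).trans ?_
  have h5 : ‖I * ((yph lam τ Mr J k - yph lam τ Mg Jg k : ℝ) : ℂ)‖ =
      |yph lam τ Mr J k - yph lam τ Mg Jg k| := by
    rw [norm_mul, norm_I, one_mul, Complex.norm_real, Real.norm_eq_abs]
  rw [h5]
  have h6 : (-yph lam τ Mr J k) ^ 2 ≤ (4 * τ * Y) ^ 2 := by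
    rw [neg_sq, ← sq_abs]
    have : |yph lam τ Mr J k| ≤ 4 * τ * Y := by nlinarith
    gcongr
  nlinarith

/-- Local error of the scheme relative to the first Picard iterate. -/
lemma Psi_picard {s : ℝ} (hs : 1 / 2 < s) (hs1 : s < 1) {lam τ : ℝ} (hl : lam = 1 ∨ lam = -1)
    (hτ : 0 ≤ τ) {N : ℕ} (hN : 2 ≤ N) {g : FSeq} (hg : Supp (bx N) g) {X Y δ Mr J : ℝ}
    (hX : Bd 1 g X) (hM : |Mr| ≤ Y) (hJ : |J| ≤ Y) (hMd : |Mr - massN N g| ≤ δ)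
    (hJd : |J - momN N g| ≤ δ) :
    Bd s (Psi lam τ N Mr (-(I * J)) g - picard lam τ N g)
      ((48 * τ ^ 2 * Y ^ 2 + 4 * τ * δ) * X + 64 * τ * cNeg s * X ^ 3 * (N : ℝ) ^ (s - 1)
        + 8 * (τ * Real.sqrt τ) * cHalf s * X ^ 3) := by
  have hτ4 : (0 : ℝ) ≤ 4 * τ := by linarith
  have hδ : 0 ≤ δ := (abs_nonneg _).trans hMd
  -- `hA`, `hB`: truncation parts; `hE`: time-discretization part; `hL`: the defect between the phase
  -- of the linear multiplier and its first-order expansion, which includes the resonant part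
  have hA := Bd_triS_high (B := bx N) hs hs1 hN hτ4 (m := mA lam τ N)
    (fun p q r h => by simp [mA, h]) (norm_mA_le hl hτ N) hX.conjS hX hX
  have hB : Bd s (triS (bx N) (mB lam τ N) (conjS g) g g)
      (8 * (4 * τ) * cNeg s * X ^ 3 * (N : ℝ) ^ (s - 1)) := by
    have h1 := Bd_triS_high (B := bx N) hs hs1 hN hτ4 (m := fun p q r => mB lam τ N r p q)
      (fun p q r h => by simp [mB, h]) (fun p q r => by
        have := norm_mB_le hl hτ N r p q
        rw [show r + p + q = p + q + r by ring] at this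
        linarith) hX hX hX.conjS
    -- the restriction `|q + r| > N` becomes one on the first two arguments after a rotation
    have e : triS (bx N) (mB lam τ N) (conjS g) g g =
        triS (bx N) (fun p q r => mB lam τ N r p q) g g (conjS g) := by
      funext k
      rw [triS_rot, triS_rot]
    rw [e]
    exact h1
  have hE := Bd_triS_half (B := bx N) (by linarith) hs1
    (by positivity : 0 ≤ 8 * (τ * Real.sqrt τ)) (m := mE lam τ N)
    (fun p _ q _ r _ => norm_mE_le hl hτ N p q r) hX.conjS hX hX
  have hL : Bd s (fun k => if k = 0 ∨ ¬ |k| ≤ (N : ℤ) then 0 else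
      (exp (I * ((-yph lam τ Mr J k : ℝ) : ℂ)) - 1 + I * (yph lam τ (massN N g) (momN N g) k : ℂ))
        * g k) ((48 * τ ^ 2 * Y ^ 2 + 4 * τ * δ) * X) := by
    have hc : 0 ≤ 48 * τ ^ 2 * Y ^ 2 + 4 * τ * δ := by positivity
    refine (hX.lower hs1.le).smul hc fun k => ?_
    split_ifs with h
    · rw [norm_zero]; positivity
    · rw [norm_mul]
      gcongr
      exact mainMult_defect hl hτ hM hJ hMd hJd (fun h0 => h (Or.inl h0))
  have hsum := hL.add ((hA.add hB).add hE)
  have key : ∀ k, ‖(Psi lam τ N Mr (-(I * J)) g - picard lam τ N g) k‖ ≤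
      ‖((fun k => if k = 0 ∨ ¬ |k| ≤ (N : ℤ) then 0 else
      (exp (I * ((-yph lam τ Mr J k : ℝ) : ℂ)) - 1 + I * (yph lam τ (massN N g) (momN N g) k : ℂ))
        * g k) + (triS (bx N) (mA lam τ N) (conjS g) g g + triS (bx N) (mB lam τ N) (conjS g) g g +
          triS (bx N) (mE lam τ N) (conjS g) g g)) k‖ := by
    intro k
    rw [Pi.sub_apply, Psi_eq hg, picard]
    by_cases hkN : |k| ≤ (N : ℤ)
    · rw [if_pos hkN, if_pos hkN, triS_mW]
      simp only [Pi.add_apply]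
      have e1 : triS (bx N) (mm lam τ N) (conjS g) g g k - triS (bx N) (mW lam τ) (conjS g) g g k =
          triS (bx N) (mZ lam τ) (conjS g) g g k + triS (bx N) (mA lam τ N) (conjS g) g g k
          + triS (bx N) (mB lam τ N) (conjS g) g g k + triS (bx N) (mE lam τ N) (conjS g) g g k := by
        simp only [triS_sub, triS_add, mm_sub_mW]
      by_cases hk : k = 0
      · have e2 : triS (bx N) (mZ lam τ) (conjS g) g g k = triS (bx N) (fun _ _ _ => 0)
            (conjS g) g g k := triS_congr fun p _ q _ r _ hs => by simp [mZ, hs, hk]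
        have e3 : triS (bx N) (fun _ _ _ => 0) (conjS g) g g k = 0 := by simp [triS]
        rw [e2, e3] at e1
        subst hk
        simp only [mainMult, if_true, true_or, Int.cast_zero]
        rw [show -I * (τ : ℂ) * 0 ^ 2 = 0 by ring, Complex.exp_zero]
        apply le_of_eq
        congr 1
        linear_combination e1
      · rw [triS_mZ _ _ _ hk hkN] at e1
        rw [if_neg (by tauto), mainMult_eq _ _ _ _ hk]
        set E := exp (-I * (τ : ℂ) * (k : ℂ) ^ 2) with hE'
        have hE1 : ‖E‖ = 1 := norm_phase τ k
        rw [← one_mul ‖_ + _‖, ← hE1, ← norm_mul]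
        apply le_of_eq
        congr 1
        linear_combination E * e1
    · have : g k = 0 := hg k (by rwa [mem_bx])
      simp [hkN, this]
  refine (hsum.of_norm_le key).mono (le_of_eq ?_)
  ring

/-! ### One step of the exact flow -/

/-- Duhamel's formula in the interaction picture. -/
lemma sol_twist {lam T : ℝ} {u0 : FSeq} {u : ℝ → FSeq} (hu : IsNLSSolution lam T u0 u) (k : ℤ)
    {t : ℝ} (ht : t ∈ Set.Icc 0 T) :
    exp (I * (t : ℂ) * (k : ℂ) ^ 2) * u t k = u0 k - I * lam * ∫ r in (0 : ℝ)..t,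
      exp (I * (r : ℂ) * (k : ℂ) ^ 2) * cubicTerm (u r) k := by
  have e : ∀ r : ℝ, exp (I * (r : ℂ) * (k : ℂ) ^ 2) * cubicTerm (u r) k =
      exp (I * (t : ℂ) * (k : ℂ) ^ 2) *
        (exp (-I * ((t - r : ℝ) : ℂ) * (k : ℂ) ^ 2) * cubicTerm (u r) k) := fun r => by
    rw [← mul_assoc, ← Complex.exp_add]
    congr 2
    push_cast; ring
  simp_rw [e]
  rw [intervalIntegral.integral_const_mul, hu.2.2.2 t ht k]
  have e2 : exp (I * (t : ℂ) * (k : ℂ) ^ 2) * exp (-I * (t : ℂ) * (k : ℂ) ^ 2) = 1 := by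
    rw [← Complex.exp_add, ← Complex.exp_zero]; congr 1; ring
  linear_combination u0 k * e2

lemma twist_continuousOn {lam T : ℝ} {u0 : FSeq} {u : ℝ → FSeq} (hu : IsNLSSolution lam T u0 u)
    (k : ℤ) : ContinuousOn (fun r : ℝ => exp (I * (r : ℂ) * (k : ℂ) ^ 2) * cubicTerm (u r) k)
      (Set.Icc 0 T) :=
  ContinuousOn.mul (Continuous.continuousOn (by fun_prop)) (sol_cubic_continuousOn hu k)

/-- Duhamel's formula restarted at time `t`. -/
lemma sol_restart {lam T : ℝ} {u0 : FSeq} {u : ℝ → FSeq} (hu : IsNLSSolution lam T u0 u) (k : ℤ)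
    {t σ : ℝ} (ht : 0 ≤ t) (hσ : 0 ≤ σ) (hT : t + σ ≤ T) :
    u (t + σ) k = exp (-I * (σ : ℂ) * (k : ℂ) ^ 2) * (u t k - I * lam * ∫ r in (0 : ℝ)..σ,
      exp (I * (r : ℂ) * (k : ℂ) ^ 2) * cubicTerm (u (t + r)) k) := by
  have hc := twist_continuousOn hu k
  have i1 : IntervalIntegrable (fun r : ℝ => exp (I * (r : ℂ) * (k : ℂ) ^ 2) * cubicTerm (u r) k)
      volume 0 t := ContinuousOn.intervalIntegrable (hc.mono (by
        rw [Set.uIcc_of_le ht]; exact Set.Icc_subset_Icc le_rfl (by linarith)))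
  have i2 : IntervalIntegrable (fun r : ℝ => exp (I * (r : ℂ) * (k : ℂ) ^ 2) * cubicTerm (u r) k)
      volume t (t + σ) := ContinuousOn.intervalIntegrable (hc.mono (by
        rw [Set.uIcc_of_le (by linarith)]; exact Set.Icc_subset_Icc ht hT))
  have h1 := sol_twist hu k (t := t) ⟨ht, by linarith⟩
  have h2 := sol_twist hu k (t := t + σ) ⟨by linarith, hT⟩
  rw [← intervalIntegral.integral_add_adjacent_intervals i1 i2] at h2
  have h3 : ∫ r in t..t + σ, exp (I * (r : ℂ) * (k : ℂ) ^ 2) * cubicTerm (u r) k =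
      exp (I * (t : ℂ) * (k : ℂ) ^ 2) * ∫ r in (0 : ℝ)..σ,
        exp (I * (r : ℂ) * (k : ℂ) ^ 2) * cubicTerm (u (t + r)) k := by
    rw [← intervalIntegral.integral_const_mul]
    have h4 := intervalIntegral.integral_comp_add_left (a := 0) (b := σ)
      (fun r : ℝ => exp (I * (r : ℂ) * (k : ℂ) ^ 2) * cubicTerm (u r) k) t
    rw [add_zero] at h4
    rw [← h4]
    refine intervalIntegral.integral_congr fun r _ => ?_
    rw [← mul_assoc, ← Complex.exp_add]
    congr 2
    push_cast; ring
  rw [h3] at h2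
  set K := ∫ r in (0 : ℝ)..σ, exp (I * (r : ℂ) * (k : ℂ) ^ 2) * cubicTerm (u (t + r)) k
  have e1 : exp (I * ((t + σ : ℝ) : ℂ) * (k : ℂ) ^ 2) =
      exp (I * (t : ℂ) * (k : ℂ) ^ 2) * exp (I * (σ : ℂ) * (k : ℂ) ^ 2) := by
    rw [← Complex.exp_add]; congr 1; push_cast; ring
  have e2 : exp (I * (t : ℂ) * (k : ℂ) ^ 2) * exp (-I * (t : ℂ) * (k : ℂ) ^ 2) = 1 := by
    rw [← Complex.exp_add, ← Complex.exp_zero]; congr 1; ring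
  have e3 : exp (I * (σ : ℂ) * (k : ℂ) ^ 2) * exp (-I * (σ : ℂ) * (k : ℂ) ^ 2) = 1 := by
    rw [← Complex.exp_add, ← Complex.exp_zero]; congr 1; ring
  rw [e1] at h2
  have hne := Complex.exp_ne_zero (I * (t : ℂ) * (k : ℂ) ^ 2)
  have h5 : exp (I * (σ : ℂ) * (k : ℂ) ^ 2) * u (t + σ) k = u t k - I * lam * K := by
    apply mul_left_cancel₀ hne
    linear_combination h2 - h1
  rw [← h5, ← mul_assoc, mul_comm (exp (-I * (σ : ℂ) * (k : ℂ) ^ 2)), e3, one_mul]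

lemma norm_phase' (t : ℝ) (k : ℤ) : ‖exp (I * (t : ℂ) * (k : ℂ) ^ 2)‖ = 1 := by
  have := norm_phase (-t) k
  rwa [show -I * ((-t : ℝ) : ℂ) * (k : ℂ) ^ 2 = I * (t : ℂ) * (k : ℂ) ^ 2 by push_cast; ring] at this

lemma shift_continuousOn {lam T : ℝ} {u0 : FSeq} {u : ℝ → FSeq} (hu : IsNLSSolution lam T u0 u)
    (k : ℤ) {t σ : ℝ} (ht : 0 ≤ t) (hT : t + σ ≤ T) :
    ContinuousOn (fun r : ℝ => exp (I * (r : ℂ) * (k : ℂ) ^ 2) * cubicTerm (u (t + r)) k)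
      (Set.Icc 0 σ) := by
  refine ContinuousOn.mul (Continuous.continuousOn (by fun_prop)) ?_
  refine (sol_cubic_continuousOn hu k).comp (f := fun r => t + r) (by fun_prop) fun r hr => ?_
  exact ⟨by linarith [hr.1], by linarith [hr.2]⟩

/-- In one step the solution stays `O(σ)`-close to the free flow, in `H¹`. -/
lemma sol_free {lam T : ℝ} (hl : lam = 1 ∨ lam = -1) {u0 : FSeq} {u : ℝ → FSeq}
    (hu : IsNLSSolution lam T u0 u) {B : ℝ} (hB : ∀ t ∈ Set.Icc 0 T, Bd 1 (u t) B)
    {t σ : ℝ} (ht : 0 ≤ t) (hσ : 0 ≤ σ) (hT : t + σ ≤ T) :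
    Bd 1 (u (t + σ) - expD σ (u t)) (σ * (cAlg 1 * B ^ 3)) := by
  have h1 := Bd.integral (s := 1) hσ (X := cAlg 1 * B ^ 3)
    (h := fun r k => exp (I * (r : ℂ) * (k : ℂ) ^ 2) * cubicTerm (u (t + r)) k)
    (fun k => shift_continuousOn hu k ht hT) (fun r hr => by
      have h2 := Bd.cubic (s := 1) (by norm_num) le_rfl
        (hB (t + r) ⟨by linarith [hr.1], by linarith [hr.2]⟩)
      refine h2.of_norm_le fun k => ?_
      rw [norm_mul, norm_phase', one_mul])
  refine h1.of_norm_le fun k => ?_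
  rw [Pi.sub_apply, sol_restart hu k ht hσ hT, expD]
  rw [show ∀ x y z : ℂ, x * (y - I * lam * z) - x * y = -(x * (I * lam * z)) by intros; ring,
    norm_neg, norm_mul, norm_mul, norm_mul, norm_phase, norm_I, norm_lam hl]
  simp

/-- The cubic term of a free flow, in the interaction picture, is an explicit trilinear sum. -/
lemma twist_cubic {N : ℕ} {g : FSeq} (hg : Supp (bx N) g) (σ : ℝ) (k : ℤ) :
    exp (I * (σ : ℂ) * (k : ℂ) ^ 2) * cubicTerm (expD σ g) k =
      triS (bx N) (fun p q r => exp (I * (σ : ℂ) * ((2 * (p + q) * (p + r) : ℤ) : ℂ)))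
        (conjS g) g g k := by
  have hs1 : Supp (bx N) (expD σ g) := fun k hk => by simp [expD, hg k hk]
  have hs2 : Supp (bx N) (conjS (expD σ g)) := hs1.conjS
  have h1 := conv_conv_eq hs2 hs1 hs1 (fun _ => 1) k
  simp only [one_mul] at h1
  rw [cubicTerm, h1, mul_triS]
  refine triS_congr fun p _ q _ r _ hk => ?_
  rw [conjS_expD]
  simp only [expD]
  rw [show ∀ A P Q R x y z : ℂ, A * 1 * (P * x * (Q * y) * (R * z)) =
    (A * P * Q * R) * (x * y * z) by intros; ring, ← Complex.exp_add, ← Complex.exp_add,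
    ← Complex.exp_add]
  congr 2
  rw [← hk]
  push_cast; ring

lemma triS_integral {B : Finset ℤ} (τ : ℝ) (lam : ℝ) (a b c : FSeq) (k : ℤ) :
    triS B (fun p q r => -(I * lam * osc τ (2 * (p + q) * (p + r)))) a b c k =
      -(I * lam * ∫ σ in (0 : ℝ)..τ,
        triS B (fun p q r => exp (I * (σ : ℂ) * ((2 * (p + q) * (p + r) : ℤ) : ℂ))) a b c k) := by
  have hc : ∀ p q r : ℤ, Continuous fun σ : ℝ => (if p + q + r = k then
      exp (I * (σ : ℂ) * ((2 * (p + q) * (p + r) : ℤ) : ℂ)) * (a p * b q * c r) else 0) := by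
    intro p q r; split_ifs <;> fun_prop
  unfold triS
  rw [intervalIntegral.integral_finsetSum (fun p _ => Continuous.intervalIntegrable (by fun_prop) _ _),
    ← neg_mul, ← neg_mul, Finset.mul_sum]
  refine Finset.sum_congr rfl fun p _ => ?_
  rw [intervalIntegral.integral_finsetSum (fun p _ => Continuous.intervalIntegrable (by fun_prop) _ _),
    Finset.mul_sum]
  refine Finset.sum_congr rfl fun q _ => ?_
  rw [intervalIntegral.integral_finsetSum (fun p _ => Continuous.intervalIntegrable (by fun_prop) _ _),
    Finset.mul_sum]
  refine Finset.sum_congr rfl fun r _ => ?_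
  split_ifs
  · rw [intervalIntegral.integral_mul_const]; unfold osc; ring
  · simp

/-- The truncated solution follows the first Picard iterate up to a local error. -/
lemma sol_picard {s : ℝ} (hs : 1 / 2 < s) (hs1 : s < 1) {lam T : ℝ} (hl : lam = 1 ∨ lam = -1)
    {u0 : FSeq} {u : ℝ → FSeq} (hu : IsNLSSolution lam T u0 u) {B : ℝ}
    (hB : ∀ t ∈ Set.Icc 0 T, Bd 1 (u t) B) {t τ : ℝ} (ht : 0 ≤ t) (hτ : 0 ≤ τ) (hT : t + τ ≤ T)
    {N : ℕ} (hN : 0 < N) :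
    Bd s (piN N (u (t + τ)) - picard lam τ N (piN N (u t)))
      (τ * (3 * cAlg s * B ^ 2 * (τ * (cAlg 1 * B ^ 3) + (N : ℝ) ^ (s - 1) * B))) := by
  have hBt := hB t ⟨ht, by linarith⟩
  have hB0 := hBt.1
  set g := piN N (u t) with hg
  have hgs : Supp (bx N) g := supp_piN N _
  have hc1 := cAlg_nonneg 1
  have h1 := Bd.integral (s := s) hτ
    (X := 3 * cAlg s * B ^ 2 * (τ * (cAlg 1 * B ^ 3) + (N : ℝ) ^ (s - 1) * B))
    (h := fun r k => exp (I * (r : ℂ) * (k : ℂ) ^ 2) * cubicTerm (u (t + r)) k -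
      exp (I * (r : ℂ) * (k : ℂ) ^ 2) * cubicTerm (expD r g) k)
    (fun k => (shift_continuousOn hu k ht hT).sub (by
      simp_rw [twist_cubic hgs]
      refine Continuous.continuousOn ?_
      unfold triS
      refine continuous_finsetSum _ fun p _ => continuous_finsetSum _ fun q _ =>
        continuous_finsetSum _ fun r _ => ?_
      split_ifs <;> fun_prop))
    (fun r hr => by
      have hr' : t + r ∈ Set.Icc 0 T := ⟨by linarith [hr.1], by linarith [hr.2]⟩
      -- `u(t+r)` is within `O(r)` of the free flow, and the truncation costs `N^{s-1}`
      have h2 := (sol_free hl hu hB ht hr.1 hr'.2).lower hs1.le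
      have h3 := (hBt.tail hs1.le hN).expD r
      have h4 : Bd s (u (t + r) - expD r g) (τ * (cAlg 1 * B ^ 3) + (N : ℝ) ^ (s - 1) * B) := by
        refine ((h2.add h3).of_norm_le fun k => le_of_eq ?_).mono ?_
        · congr 1
          simp only [Pi.sub_apply, Pi.add_apply, expD, hg]
          ring
        · have := hr.2
          gcongr
      have h5 := Bd.cubic_sub hs hs1.le ((hB _ hr').lower hs1.le)
        (((hBt.lower hs1.le).piN N).expD r) h4
      refine h5.of_norm_le fun k => ?_
      rw [← mul_sub, norm_mul, norm_phase', one_mul, Pi.sub_apply])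
  refine h1.of_norm_le fun k => ?_
  simp only [Pi.sub_apply, picard]
  by_cases hk : |k| ≤ (N : ℤ)
  · rw [if_pos hk, triS_integral, piN, if_pos hk, sol_restart hu k ht hτ hT]
    have hgk : g k = u t k := by rw [hg, piN, if_pos hk]
    rw [hgk, intervalIntegral.integral_sub]
    · simp_rw [twist_cubic hgs]
      rw [show ∀ x y z w : ℂ, x * (y - I * lam * z) - x * (y + -(I * lam * w)) =
        -(x * (I * lam * (z - w))) by intros; ring,
        norm_neg, norm_mul, norm_mul, norm_mul, norm_phase, norm_I, norm_lam hl]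
      simp
    · refine ContinuousOn.intervalIntegrable ?_
      rw [Set.uIcc_of_le hτ]
      exact shift_continuousOn hu k ht hT
    · refine Continuous.intervalIntegrable ?_ _ _
      simp_rw [twist_cubic hgs]
      unfold triS
      refine continuous_finsetSum _ fun p _ => continuous_finsetSum _ fun q _ =>
        continuous_finsetSum _ fun r _ => ?_
      split_ifs <;> fun_prop
  · simp [piN, hk]

/-! ### Initial data, mass and momentum -/

/-- Constant of the aliasing estimate. -/
def cInit : ℝ := 2 * (l2 (wt (-1))).toReal

lemma cInit_nonneg : 0 ≤ cInit := by unfold cInit; positivity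

lemma wt_alias {N : ℕ} {k m : ℤ} (hN : 0 < N) (hk : |k| ≤ (N : ℤ)) (hm : m ≠ 0) :
    wt (-1) (k + m * (4 * (N : ℤ) + 1)) ≤ ENNReal.ofReal ((N : ℝ)⁻¹) * wt (-1) m := by
  have hN' : (1 : ℝ) ≤ N := by exact_mod_cast hN
  have hm1 : (1 : ℝ) ≤ |(m : ℝ)| := by exact_mod_cast Int.one_le_abs hm
  have hk' : |(k : ℝ)| ≤ N := by exact_mod_cast hk
  unfold wt
  rw [← ENNReal.ofReal_mul (by positivity)]
  apply ENNReal.ofReal_le_ofReal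
  have e : (N : ℝ)⁻¹ = ((N : ℝ) ^ 2) ^ ((-1 : ℝ) / 2) := by
    rw [← Real.rpow_natCast, ← Real.rpow_mul (by positivity), ← Real.rpow_neg_one]
    norm_num
  rw [e, ← Real.mul_rpow (by positivity) (by positivity)]
  refine Real.rpow_le_rpow_of_nonpos (by positivity) ?_ (by norm_num)
  push_cast
  have h1 : 3 * N * |(m : ℝ)| ≤ |(k : ℝ) + m * (4 * N + 1)| := by
    have h2 : |(m : ℝ) * (4 * N + 1)| ≤ |(k : ℝ) + m * (4 * N + 1)| + |(k : ℝ)| := by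
      have := abs_sub ((k : ℝ) + m * (4 * N + 1)) k
      rwa [add_sub_cancel_left] at this
    rw [abs_mul, abs_of_nonneg (by positivity : (0 : ℝ) ≤ 4 * N + 1)] at h2
    nlinarith [mul_le_mul_of_nonneg_left hm1 (by linarith : (0 : ℝ) ≤ N)]
  have h3 : (3 * N * |(m : ℝ)|) ^ 2 ≤ ((k : ℝ) + m * (4 * N + 1)) ^ 2 := by
    rw [← sq_abs ((k : ℝ) + m * (4 * N + 1))]
    gcongr
  rw [mul_pow, sq_abs, mul_pow] at h3
  have h4 : (1 : ℝ) ≤ (m : ℝ) ^ 2 := by rw [← sq_abs]; nlinarith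
  nlinarith [mul_le_mul_of_nonneg_left h4 (sq_nonneg (N : ℝ))]

lemma wt_le_N {s : ℝ} (hs : 0 ≤ s) (hs1 : s ≤ 1) {N : ℕ} (hN : 0 < N) {k : ℤ} (hk : |k| ≤ (N : ℤ)) :
    wt s k ≤ ENNReal.ofReal (2 * (N : ℝ) ^ s) := by
  have hN' : (1 : ℝ) ≤ N := by exact_mod_cast hN
  have hk' : |(k : ℝ)| ≤ N := by exact_mod_cast hk
  unfold wt
  apply ENNReal.ofReal_le_ofReal
  have h1 : 1 + (k : ℝ) ^ 2 ≤ (2 * N) ^ 2 := by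
    rw [← sq_abs]
    nlinarith [abs_nonneg (k : ℝ)]
  calc (1 + (k : ℝ) ^ 2) ^ (s / 2) ≤ ((2 * N : ℝ) ^ 2) ^ (s / 2) := by gcongr
    _ = 2 ^ s * (N : ℝ) ^ s := by
        rw [← Real.rpow_natCast, ← Real.rpow_mul (by positivity),
          ← Real.mul_rpow (by norm_num) (by positivity)]
        congr 1; push_cast; ring
    _ ≤ 2 * (N : ℝ) ^ s := by
        gcongr
        calc (2 : ℝ) ^ s ≤ 2 ^ (1 : ℝ) := Real.rpow_le_rpow_of_exponent_le (by norm_num) hs1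
          _ = 2 := Real.rpow_one 2

/-- The shifted boxes `{|k| ≤ N} + m(4N+1)` are disjoint. -/
lemma alias_sum_le {N : ℕ} (F : ℤ → ℝ≥0∞) :
    ∑' k : ℤ, (if |k| ≤ (N : ℤ) then ∑' m : ℤ, F (k + m * (4 * (N : ℤ) + 1)) else 0) ≤ ∑' j, F j := by
  have h1 : ∑' k : ℤ, (if |k| ≤ (N : ℤ) then ∑' m : ℤ, F (k + m * (4 * (N : ℤ) + 1)) else 0) =
      ∑' k : {k : ℤ // |k| ≤ (N : ℤ)}, ∑' m : ℤ, F (k + m * (4 * (N : ℤ) + 1)) := by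
    refine Eq.trans (tsum_congr fun k => ?_) (tsum_subtype {k : ℤ | |k| ≤ (N : ℤ)}
      (fun k => ∑' m : ℤ, F (k + m * (4 * (N : ℤ) + 1)))).symm
    simp [Set.indicator_apply]
  rw [h1, ← ENNReal.tsum_prod]
  refine ENNReal.tsum_comp_le_tsum_of_injective
    (f := fun x : {k : ℤ // |k| ≤ (N : ℤ)} × ℤ => (x.1 : ℤ) + x.2 * (4 * (N : ℤ) + 1)) ?_ F
  rintro ⟨⟨k, hk⟩, m⟩ ⟨⟨k', hk'⟩, m'⟩ h
  simp only at h
  have hm : m = m' := by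
    by_contra hne
    have h2 : (m - m') * (4 * (N : ℤ) + 1) = k' - k := by linarith
    have h3 : |(m - m') * (4 * (N : ℤ) + 1)| ≤ 2 * N := by
      rw [h2]
      have := abs_sub k' k
      linarith
    rw [abs_mul, abs_of_nonneg (by positivity : (0 : ℤ) ≤ 4 * N + 1)] at h3
    have h4 : 1 ≤ |m - m'| := Int.one_le_abs (sub_ne_zero.2 hne)
    nlinarith
  subst hm
  have : k = k' := by linarith
  subst this
  rfl

/-- Aliasing error of the trigonometric interpolation for `H¹` data. -/
lemma initData_err {s : ℝ} (hs : 0 ≤ s) (hs1 : s ≤ 1) {a : FSeq} {X : ℝ} (h : Bd 1 a X) {N : ℕ}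
    (hN : 0 < N) : Bd s (initData N a - piN N a) (cInit * (N : ℝ) ^ (s - 1) * X) := by
  have hN' : (0 : ℝ) < N := by exact_mod_cast hN
  have hX := h.1
  have hc0 := cInit_nonneg
  have hsum : Summable fun j => ‖a j‖ := h.summable (by norm_num)
  refine ⟨by positivity, ?_⟩
  set F : ℤ → ℝ≥0∞ := fun j => wt 1 j * ‖a j‖ₑ with hF
  set c : ℝ≥0∞ := ENNReal.ofReal (2 * (N : ℝ) ^ s) * (ENNReal.ofReal ((N : ℝ)⁻¹) * l2 (wt (-1))) with hc
  -- the aliased frequencies `k + m(4N+1)`, `m ≠ 0`, have size at least `N⟨m⟩`; Cauchy–Schwarz in `m`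
  have key : ∀ k : ℤ, wt s k * ‖(initData N a - piN N a) k‖ₑ ≤
      c * (if |k| ≤ (N : ℤ) then l2 (fun m : ℤ => F (k + m * (4 * (N : ℤ) + 1))) else 0) := by
    intro k
    by_cases hk : |k| ≤ (N : ℤ)
    · rw [if_pos hk, hc, mul_assoc]
      refine mul_le_mul' (wt_le_N hs hs1 hN hk) ?_
      have hk2 : |k| ≤ 2 * (N : ℤ) := by linarith [abs_nonneg k]
      have hinj : Function.Injective fun m : ℤ => k + m * (4 * (N : ℤ) + 1) := by
        intro m m' hmm
        have h2 : m * (4 * (N : ℤ) + 1) = m' * (4 * (N : ℤ) + 1) := add_left_cancel hmm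
        exact mul_right_cancel₀ (by positivity) h2
      have hs2 : Summable fun m : ℤ => a (k + m * (4 * (N : ℤ) + 1)) :=
        (hsum.comp_injective hinj).of_norm
      have e1 : (initData N a - piN N a) k =
          ∑' m : ℤ, if m = 0 then 0 else a (k + m * (4 * (N : ℤ) + 1)) := by
        simp only [Pi.sub_apply, initData, piN, interp2N, if_pos hk, if_pos hk2]
        rw [hs2.tsum_eq_add_tsum_ite 0]
        simp
      rw [e1]
      calc ‖∑' m : ℤ, if m = 0 then 0 else a (k + m * (4 * (N : ℤ) + 1))‖ₑ
          ≤ ∑' m : ℤ, ‖if m = 0 then 0 else a (k + m * (4 * (N : ℤ) + 1))‖ₑ := enorm_tsum_le_tsum_enorm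
        _ ≤ ∑' m : ℤ, (ENNReal.ofReal ((N : ℝ)⁻¹) * wt (-1) m) * F (k + m * (4 * (N : ℤ) + 1)) := by
            refine ENNReal.tsum_le_tsum fun m => ?_
            split_ifs with hm
            · simp
            · calc ‖a (k + m * (4 * (N : ℤ) + 1))‖ₑ =
                    wt (-1) (k + m * (4 * (N : ℤ) + 1)) * F (k + m * (4 * (N : ℤ) + 1)) := by
                    simp only [hF]
                    rw [← mul_assoc, wt_neg_mul, one_mul]
                _ ≤ _ := mul_le_mul_left (wt_alias hN hk hm) _
        _ ≤ l2 (fun m => ENNReal.ofReal ((N : ℝ)⁻¹) * wt (-1) m) *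
              l2 (fun m : ℤ => F (k + m * (4 * (N : ℤ) + 1))) := tsum_mul_le_l2 _ _
        _ = _ := by rw [l2_const_mul]
    · have : (initData N a - piN N a) k = 0 := by simp [initData, piN, hk]
      simp [this]
  have h1 : en s (initData N a - piN N a) ≤ c * l2 F := by
    refine (l2_mono key).trans ?_
    rw [l2_const_mul]
    refine mul_le_mul_right ?_ _
    rw [l2_le_iff, l2_sq]
    refine le_trans (le_of_eq ?_) (alias_sum_le (N := N) fun j => F j ^ 2)
    refine tsum_congr fun k => ?_
    split_ifs
    · rw [l2_sq]
    · simp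
  refine h1.trans ?_
  have h2 : l2 F ≤ ENNReal.ofReal X := h.2
  have h3 : c = ENNReal.ofReal (cInit * (N : ℝ) ^ (s - 1)) := by
    rw [hc, ← ENNReal.ofReal_toReal (l2_wt_ne_top (s := 1) (by norm_num)),
      ← ENNReal.ofReal_mul (by positivity), ← ENNReal.ofReal_mul (by positivity), cInit,
      Real.rpow_sub hN', Real.rpow_one]
    congr 1
    field_simp
  rw [h3, ENNReal.ofReal_mul (p := cInit * (N : ℝ) ^ (s - 1)) (by positivity)]
  exact mul_le_mul_right h2 _

lemma quad_bd {s : ℝ} {a : FSeq} {X : ℝ} (ha : Bd s a X) {μ : ℤ → ℝ}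
    (hμ : ∀ k : ℤ, |μ k| ≤ (1 + (k : ℝ) ^ 2) ^ s) : |∑' k, μ k * ‖a k‖ ^ 2| ≤ X * X := by
  have hμw : ∀ k : ℤ, ‖(μ k : ℂ)‖ ≤ (1 + (k : ℝ) ^ 2) ^ s := fun k => by
    rw [Complex.norm_real]; exact hμ k
  have e : ((∑' k, μ k * ‖a k‖ ^ 2 : ℝ) : ℂ) = ∑' k, (μ k : ℂ) * (conj (a k) * a k) := by
    rw [Complex.ofReal_tsum]
    refine tsum_congr fun k => ?_
    rw [mul_comm (conj (a k)), Complex.mul_conj, Complex.normSq_eq_norm_sq]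
    push_cast; ring
  rw [← Real.norm_eq_abs, ← Complex.norm_real, e]
  exact (norm_tsum_le_tsum_norm (pair_summable ha ha hμw)).trans (pair_tsum_norm_le ha ha hμw)

/-- Quadratic functionals such as mass and momentum are locally Lipschitz. -/
lemma quad_sub {s : ℝ} {a b : FSeq} {X d : ℝ} (ha : Bd s a X) (hb : Bd s b X)
    (hab : Bd s (a - b) d) {μ : ℤ → ℝ} (hμ : ∀ k : ℤ, |μ k| ≤ (1 + (k : ℝ) ^ 2) ^ s) :
    |∑' k, μ k * ‖a k‖ ^ 2 - ∑' k, μ k * ‖b k‖ ^ 2| ≤ 2 * X * d := by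
  have hμw : ∀ k : ℤ, ‖(μ k : ℂ)‖ ≤ (1 + (k : ℝ) ^ 2) ^ s := fun k => by
    rw [Complex.norm_real]; exact hμ k
  have e : ∀ c : FSeq, ((∑' k, μ k * ‖c k‖ ^ 2 : ℝ) : ℂ) = ∑' k, (μ k : ℂ) * (conj (c k) * c k) := by
    intro c
    rw [Complex.ofReal_tsum]
    refine tsum_congr fun k => ?_
    rw [mul_comm (conj (c k)), Complex.mul_conj, Complex.normSq_eq_norm_sq]
    push_cast; ring
  have s1 := pair_summable ha hab hμw
  have s2 := pair_summable hab hb hμw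
  rw [← Real.norm_eq_abs, ← Complex.norm_real, Complex.ofReal_sub, e, e,
    ← (pair_summable ha ha hμw).of_norm.tsum_sub (pair_summable hb hb hμw).of_norm]
  have e2 : ∀ k, (μ k : ℂ) * (conj (a k) * a k) - (μ k : ℂ) * (conj (b k) * b k) =
      (μ k : ℂ) * (conj (a k) * (a - b) k) + (μ k : ℂ) * (conj ((a - b) k) * b k) := by
    intro k
    simp only [Pi.sub_apply, map_sub]
    ring
  simp_rw [e2]
  rw [s1.of_norm.tsum_add s2.of_norm]
  refine (norm_add_le _ _).trans ?_
  have h1 := (norm_tsum_le_tsum_norm s1).trans (pair_tsum_norm_le ha hab hμw)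
  have h2 := (norm_tsum_le_tsum_norm s2).trans (pair_tsum_norm_le hab hb hμw)
  linarith

lemma abs_le_wt {s : ℝ} (hs : 1 / 2 ≤ s) (k : ℤ) : |(k : ℝ)| ≤ (1 + (k : ℝ) ^ 2) ^ s := by
  have h1 : (1 : ℝ) ≤ 1 + (k : ℝ) ^ 2 := by nlinarith [sq_nonneg (k : ℝ)]
  calc |(k : ℝ)| ≤ jw k := abs_le_jw k
    _ ≤ _ := Real.rpow_le_rpow_of_exponent_le h1 hs

lemma one_le_wt {s : ℝ} (hs : 0 ≤ s) (k : ℤ) : |(1 : ℝ)| ≤ (1 + (k : ℝ) ^ 2) ^ s := by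
  rw [abs_one]
  exact Real.one_le_rpow (by nlinarith [sq_nonneg (k : ℝ)]) hs

lemma massN_eq {N : ℕ} {g : FSeq} (hg : Supp (bx N) g) : massN N g = ∑' k, (1 : ℝ) * ‖g k‖ ^ 2 := by
  rw [tsum_eq_sum (s := bx N) fun k hk => by simp [hg k hk], massN]
  simp

lemma momN_eq {N : ℕ} {g : FSeq} (hg : Supp (bx N) g) :
    momN N g = ∑' k : ℤ, (k : ℝ) * ‖g k‖ ^ 2 := by
  rw [tsum_eq_sum (s := bx N) fun k hk => by simp [hg k hk], momN]

lemma Mnum_eq (N : ℕ) (u0 : FSeq) : Mnum N u0 = (massN N (initData N u0) : ℂ) := by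
  have hs : Supp (bx N) (initData N u0) := supp_piN N (interp2N N u0)
  rw [Mnum, modSq, conv_eq_sum _ hs, massN]
  push_cast
  refine Finset.sum_congr rfl fun j _ => ?_
  change conj (initData N u0 (-(0 - j))) * initData N u0 j = _
  rw [show -(0 - j) = j by ring, mul_comm, Complex.mul_conj, Complex.normSq_eq_norm_sq]
  push_cast; ring

lemma Pnum_eq (N : ℕ) (u0 : FSeq) : Pnum N u0 = -(I * (momN N (initData N u0) : ℂ)) := by
  have hs : Supp (bx N) (initData N u0) := supp_piN N (interp2N N u0)
  have hd : Supp (bx N) (dx (conjS (initData N u0))) := fun k hk => by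
    simp [dx, hs.conjS k hk]
  rw [Pnum, conv_eq_sum _ hd, momN, ← sum_bx_neg]
  push_cast
  rw [Finset.mul_sum, ← Finset.sum_neg_distrib]
  refine Finset.sum_congr rfl fun j _ => ?_
  simp only [dx, conjS]
  rw [show (0 - -j : ℤ) = j by ring, neg_neg]
  have := Complex.mul_conj (initData N u0 j)
  rw [Complex.normSq_eq_norm_sq] at this
  push_cast at this ⊢
  linear_combination (-I * j) * this

/-! ### Global error -/

/-- Bound for the `H^s` norm of the discrete initial value, given `‖u⁰‖_{H¹} ≤ R`. -/
def cX (R : ℝ) : ℝ := (cInit + 1) * R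

/-- Constant of the local error `O(τ(τ^{1/2} + N^{s-1}))`; `B` is a bound for the solution in `H¹`
and `X` one for the discrete initial value in `H^s`. -/
def cLoc (s B X : ℝ) : ℝ :=
  48 * (X * X) ^ 2 * B + 4 * (2 * X ^ 2 + 2 * B ^ 2) * B + 64 * cNeg s * B ^ 3 + 8 * cHalf s * B ^ 3
    + 3 * cAlg s * B ^ 2 * (cAlg 1 * B ^ 3 + B)

lemma cLoc_nonneg {s B X : ℝ} (hB : 0 ≤ B) : 0 ≤ cLoc s B X := by
  have := cNeg_nonneg s; have := cHalf_nonneg s; have := cAlg_nonneg s; have := cAlg_nonneg 1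
  unfold cLoc
  positivity

lemma rpow_N_le_one {s : ℝ} (hs1 : s < 1) {N : ℕ} (hN : 0 < N) : (N : ℝ) ^ (s - 1) ≤ 1 :=
  Real.rpow_le_one_of_one_le_of_nonpos (by exact_mod_cast hN) (by linarith)

lemma initData_bd {s : ℝ} (hs : 1 / 2 < s) (hs1 : s < 1) {u0 : FSeq} {R : ℝ} (h0 : Bd 1 u0 R)
    {N : ℕ} (hN : 0 < N) : Bd s (initData N u0) (cX R) := by
  have hR := h0.1
  have h1 := (initData_err (by linarith) hs1.le h0 hN).add ((h0.lower hs1.le).piN N)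
  rw [sub_add_cancel] at h1
  refine h1.mono ?_
  have h2 := mul_le_mul_of_nonneg_left (rpow_N_le_one hs1 hN) (mul_nonneg cInit_nonneg hR)
  unfold cX
  linarith

lemma initData_sub {s : ℝ} (hs : 1 / 2 < s) (hs1 : s < 1) {u0 : FSeq} {R : ℝ} (h0 : Bd 1 u0 R)
    {N : ℕ} (hN : 0 < N) : Bd s (initData N u0 - u0) (cX R * (N : ℝ) ^ (s - 1)) := by
  have h1 := (initData_err (by linarith) hs1.le h0 hN).sub (h0.tail hs1.le hN)
  rw [sub_sub_sub_cancel_right] at h1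
  refine h1.mono (le_of_eq ?_)
  unfold cX
  ring

/-- Mass and momentum of the truncated solution agree with the discrete ones up to `O(N^{s-1})`. -/
lemma quad_drift {s : ℝ} (hs : 1 / 2 < s) (hs1 : s < 1) {lam T : ℝ} (hl : lam = 1 ∨ lam = -1)
    {u0 : FSeq} {u : ℝ → FSeq} (hu : IsNLSSolution lam T u0 u) {R B : ℝ} (h0 : Bd 1 u0 R)
    {t : ℝ} (ht : t ∈ Set.Icc 0 T) (hB : Bd 1 (u t) B) {N : ℕ} (hN : 0 < N)
    {μ : ℤ → ℝ} (hμ : (∀ k, μ k = 1) ∨ (∀ k, μ k = k)) :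
    |∑' k, μ k * ‖initData N u0 k‖ ^ 2 - ∑' k, μ k * ‖piN N (u t) k‖ ^ 2| ≤
      (2 * cX R ^ 2 + 2 * B ^ 2) * (N : ℝ) ^ (s - 1) := by
  have hR := h0.1
  have hμw : ∀ k : ℤ, |μ k| ≤ (1 + (k : ℝ) ^ 2) ^ s := fun k => by
    rcases hμ with h | h
    · rw [h k]; exact one_le_wt (by linarith) k
    · rw [h k]; exact abs_le_wt hs.le k
  have hX : R ≤ cX R := by
    have := mul_nonneg cInit_nonneg hR
    unfold cX; linarith
  have h1 := quad_sub (initData_bd hs hs1 h0 hN) ((h0.lower hs1.le).mono hX)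
    (initData_sub hs hs1 h0 hN) hμw
  have h2 := quad_sub (hB.lower hs1.le) ((hB.lower hs1.le).piN N) (hB.tail hs1.le hN) hμw
  have h3 := sol_quad_conserved hl hu hμ ht
  rw [h3] at h2
  have h4 := abs_add_le (∑' k, μ k * ‖initData N u0 k‖ ^ 2 - ∑' k, μ k * ‖u0 k‖ ^ 2)
    (∑' k, μ k * ‖u0 k‖ ^ 2 - ∑' k, μ k * ‖piN N (u t) k‖ ^ 2)
  rw [sub_add_sub_cancel] at h4
  refine (h4.trans (add_le_add h1 h2)).trans (le_of_eq ?_)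
  ring

/-- One step of the error recursion. -/
lemma err_step {s : ℝ} (hs : 1 / 2 < s) (hs1 : s < 1) {lam T : ℝ} (hl : lam = 1 ∨ lam = -1)
    {u0 : FSeq} {u : ℝ → FSeq} (hu : IsNLSSolution lam T u0 u) {R B : ℝ} (h0 : Bd 1 u0 R)
    (hB : ∀ t ∈ Set.Icc 0 T, Bd 1 (u t) B) {t τ : ℝ} (ht : 0 ≤ t) (hτ : 0 ≤ τ) (hτ1 : τ ≤ 1)
    (hT : t + τ ≤ T) {N : ℕ} (hN : 2 ≤ N) {f : FSeq} (hf : Supp (bx N) f) {d : ℝ} (hd1 : d ≤ 1)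
    (hd : Bd s (f - piN N (u t)) d) :
    Bd s (Psi lam τ N (Mnum N u0) (Pnum N u0) f - piN N (u (t + τ)))
      ((1 + 30 * cNeg s * (B + 1) ^ 2 * τ) * d
        + τ * cLoc s B (cX R) * (Real.sqrt τ + (N : ℝ) ^ (s - 1))) := by
  have hN0 : 0 < N := by omega
  have htT : t ∈ Set.Icc 0 T := ⟨ht, by linarith⟩
  have hBt := hB t htT
  have hB0 := hBt.1
  have hg : Supp (bx N) (piN N (u t)) := supp_piN N _
  have hi : Supp (bx N) (initData N u0) := supp_piN N _
  have hgs : Bd s (piN N (u t)) B := (hBt.lower hs1.le).piN N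
  have hX0 := (initData_bd hs hs1 h0 hN0).1
  rw [Mnum_eq, Pnum_eq]
  -- stability from `f` to `Π_N u(t)`, then scheme against Picard iterate, then Picard against flow
  have h1 := Psi_stable hs hs1 hl hτ (massN N (initData N u0)) (momN N (initData N u0))
    (X := B + 1) hf hg
    (((hd.add hgs).of_norm_le fun k => by simp).mono (by linarith))
    (hgs.mono (by linarith)) hd
  have h2 := Psi_picard hs hs1 hl hτ hN hg (hBt.piN N) (Y := cX R * cX R)
    (δ := (2 * cX R ^ 2 + 2 * B ^ 2) * (N : ℝ) ^ (s - 1))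
    (Mr := massN N (initData N u0)) (J := momN N (initData N u0))
    (by rw [massN_eq hi]; exact quad_bd (initData_bd hs hs1 h0 hN0) (fun k => one_le_wt (by linarith) k))
    (by rw [momN_eq hi]; exact quad_bd (initData_bd hs hs1 h0 hN0) (fun k => abs_le_wt hs.le k))
    (by rw [massN_eq hi, massN_eq hg]
        exact quad_drift hs hs1 hl hu h0 htT hBt hN0 (Or.inl fun _ => rfl))
    (by rw [momN_eq hi, momN_eq hg]
        exact quad_drift hs hs1 hl hu h0 htT hBt hN0 (Or.inr fun _ => rfl))
  have h3 := sol_picard hs hs1 hl hu hB ht hτ hT hN0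
  have h4 := (h1.add h2).sub h3
  rw [sub_add_sub_cancel, sub_sub_sub_cancel_right] at h4
  refine h4.mono ?_
  have hd0 := hd.1
  set ε := (N : ℝ) ^ (s - 1) with hε
  have hε0 : 0 ≤ ε := by positivity
  set w := Real.sqrt τ with hw
  have hw0 : 0 ≤ w := Real.sqrt_nonneg _
  have hw2 : w * w = τ := Real.mul_self_sqrt hτ
  have hw1 : w ≤ 1 := Real.sqrt_le_one.2 hτ1
  have hτw : τ ≤ w := by nlinarith
  have c1 := cNeg_nonneg s; have c2 := cHalf_nonneg s; have c3 := cAlg_nonneg s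
  have c4 := cAlg_nonneg 1
  have hη : w ≤ w + ε := by linarith
  have hη' : ε ≤ w + ε := by linarith
  have hη'' : τ ≤ w + ε := by linarith
  have e1 : (48 * τ ^ 2 * (cX R * cX R) ^ 2 + 4 * τ * ((2 * cX R ^ 2 + 2 * B ^ 2) * ε)) * B +
      64 * τ * cNeg s * B ^ 3 * ε + 8 * (τ * w) * cHalf s * B ^ 3 +
      τ * (3 * cAlg s * B ^ 2 * (τ * (cAlg 1 * B ^ 3) + ε * B)) ≤
      τ * cLoc s B (cX R) * (w + ε) := by
    calc _ = τ * (48 * (cX R * cX R) ^ 2 * B * τ + 4 * (2 * cX R ^ 2 + 2 * B ^ 2) * B * ε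
            + 64 * cNeg s * B ^ 3 * ε + 8 * cHalf s * B ^ 3 * w
            + 3 * cAlg s * B ^ 2 * (cAlg 1 * B ^ 3 * τ + B * ε)) := by ring
      _ ≤ τ * (48 * (cX R * cX R) ^ 2 * B * (w + ε) + 4 * (2 * cX R ^ 2 + 2 * B ^ 2) * B * (w + ε)
            + 64 * cNeg s * B ^ 3 * (w + ε) + 8 * cHalf s * B ^ 3 * (w + ε)
            + 3 * cAlg s * B ^ 2 * (cAlg 1 * B ^ 3 * (w + ε) + B * (w + ε))) := by gcongr
      _ = _ := by unfold cLoc; ring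
  linarith

lemma numSol_supp (lam τ : ℝ) (N : ℕ) (u0 : FSeq) (n : ℕ) : Supp (bx N) (numSol lam τ N u0 n) := by
  induction n with
  | zero => exact supp_piN N _
  | succ n ih => exact Psi_supp ih

/-- Discrete Gronwall argument; the smallness `D η ≤ 1` keeps the numerical solution bounded. -/
lemma err_all {s : ℝ} (hs : 1 / 2 < s) (hs1 : s < 1) {lam T : ℝ} (hl : lam = 1 ∨ lam = -1)
    {u0 : FSeq} {u : ℝ → FSeq} (hu : IsNLSSolution lam T u0 u) {R B A K η : ℝ} (h0 : Bd 1 u0 R)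
    (hB : ∀ t ∈ Set.Icc 0 T, Bd 1 (u t) B) {τ : ℝ} (hτ : 0 ≤ τ) (hτ1 : τ ≤ 1)
    {L N : ℕ} (hL : L * τ = T) (hN : 2 ≤ N) (hη : η = Real.sqrt τ + (N : ℝ) ^ (s - 1))
    (hA : A = 30 * cNeg s * (B + 1) ^ 2) (hK : K = cLoc s B (cX R))
    (hsmall : (cInit * R + T * K) * Real.exp (A * T) * η ≤ 1) {n : ℕ} (hn : n ≤ L) :
    Bd s (numSol lam τ N u0 n - piN N (u (n * τ)))
      ((cInit * R + n * τ * K) * Real.exp (A * (n * τ)) * η) := by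
  have hR := h0.1
  have hci := cInit_nonneg
  have hη0 : 0 ≤ η := by rw [hη]; positivity
  have hT0 : 0 ≤ T := by rw [← hL]; positivity
  have hB0 := (hB 0 ⟨le_rfl, hT0⟩).1
  have hN0 : 0 < N := by omega
  have hA0 : 0 ≤ A := by rw [hA]; have := cNeg_nonneg s; positivity
  have hK0 : 0 ≤ K := by rw [hK]; exact cLoc_nonneg hB0
  induction n with
  | zero =>
    have h1 := initData_err (by linarith) hs1.le h0 hN0 (s := s)
    rw [Nat.cast_zero, zero_mul, hu.1, numSol]
    refine h1.mono ?_
    rw [mul_zero, Real.exp_zero, mul_one, zero_mul, add_zero, mul_right_comm]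
    have : (N : ℝ) ^ (s - 1) ≤ η := by rw [hη]; linarith [Real.sqrt_nonneg τ]
    gcongr
  | succ n ih =>
    have ih' := ih (by omega)
    have hnL : ((n : ℝ) + 1) * τ ≤ T := by
      rw [← hL]
      have : (n : ℝ) + 1 ≤ L := by exact_mod_cast hn
      gcongr
    have hnT : (n : ℝ) * τ ≤ T := by nlinarith
    have hd1 : (cInit * R + n * τ * K) * Real.exp (A * (n * τ)) * η ≤ 1 := by
      refine le_trans ?_ hsmall
      gcongr
    have h1 := err_step hs hs1 hl hu h0 hB (t := n * τ) (by positivity) hτ hτ1 (by linarith) hN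
      (numSol_supp lam τ N u0 n) hd1 ih'
    have e : ((n + 1 : ℕ) : ℝ) * τ = n * τ + τ := by push_cast; ring
    rw [e, numSol]
    refine h1.mono ?_
    rw [← hA, ← hK, ← hη]
    have hx : 1 + A * τ ≤ Real.exp (A * τ) := by linarith [Real.add_one_le_exp (A * τ)]
    have hE : Real.exp (A * (n * τ + τ)) = Real.exp (A * (n * τ)) * Real.exp (A * τ) := by
      rw [← Real.exp_add]; congr 1; ring
    have hE1 : 1 ≤ Real.exp (A * (n * τ + τ)) := Real.one_le_exp (by positivity)
    calc (1 + A * τ) * ((cInit * R + n * τ * K) * Real.exp (A * (n * τ)) * η) + τ * K * η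
        ≤ Real.exp (A * τ) * ((cInit * R + n * τ * K) * Real.exp (A * (n * τ)) * η)
          + τ * K * η * Real.exp (A * (n * τ + τ)) :=
          add_le_add (mul_le_mul_of_nonneg_right hx (by positivity))
            (le_mul_of_one_le_right (by positivity) hE1)
      _ = _ := by rw [hE]; ring

theorem fully_discrete_LRI_Hs_error (T R : ℝ) (hT : 0 < T) (hR : 0 < R)
    (s : ℝ) (hs : s ∈ Set.Ioo (1 / 2 : ℝ) 1) :
    ∃ τ0 : ℝ, 0 < τ0 ∧ ∃ N0 : ℕ, 0 < N0 ∧ ∃ C : ℝ, 0 < C ∧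
      ∀ (lam : ℝ), (lam = 1 ∨ lam = -1) →
      ∀ (u0 : FSeq), InHs 1 u0 → hnorm 1 u0 ≤ R →
      ∀ (u : ℝ → FSeq), IsNLSSolution lam T u0 u →
      ∀ (L N : ℕ), 0 < L → N0 ≤ N →
      ∀ τ : ℝ, τ = T / L → τ ≤ τ0 →
      ∀ n : ℕ, n ≤ L →
        hnorm s (u (n * τ) - numSol lam τ N u0 n) ≤
          C * (τ ^ ((1 : ℝ) / 2) + (N : ℝ) ^ (-1 + s)) := by
  obtain ⟨hs, hs1⟩ := hs
  set B := h1Bound R with hBdef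
  have hB0 : 0 ≤ B := Real.sqrt_nonneg _
  set A := 30 * cNeg s * (B + 1) ^ 2 with hA
  set K := cLoc s B (cX R) with hK
  set D := (cInit * R + T * K) * Real.exp (A * T) with hD
  have hci := cInit_nonneg
  have hK0 : 0 ≤ K := cLoc_nonneg hB0
  have hA0 : 0 ≤ A := by have := cNeg_nonneg s; positivity
  have hD0 : 0 ≤ D := by positivity
  -- half of the smallness budget for each of `√τ` and `N^{s-1}`
  set ρ : ℝ := 1 / (2 * (D + 1)) with hρ
  have hρ0 : 0 < ρ := by positivity
  have hρ1 : ρ ≤ 1 := by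
    rw [hρ, div_le_one (by positivity)]; linarith
  have hDρ : D * (ρ + ρ) ≤ 1 := by
    have : (D + 1) * (ρ + ρ) = 1 := by rw [hρ]; field_simp; ring
    nlinarith
  have hlim : Filter.Tendsto (fun N : ℕ => (N : ℝ) ^ (s - 1)) Filter.atTop (nhds 0) := by
    have := (tendsto_rpow_neg_atTop (y := 1 - s) (by linarith)).comp tendsto_natCast_atTop_atTop
    simpa [Function.comp_def] using this
  obtain ⟨N1, hN1⟩ := Filter.eventually_atTop.1 (hlim.eventually_le_const hρ0)
  refine ⟨ρ ^ 2, by positivity, max N1 2, by positivity, Real.sqrt (2 * Real.pi) * (D + B) + 1,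
    by positivity, ?_⟩
  intro lam hl u0 h0 hu0 u hu L N hL hN τ hτ hτ0 n hn
  have hN2 : 2 ≤ N := (le_max_right _ _).trans hN
  have hNρ : (N : ℝ) ^ (s - 1) ≤ ρ := hN1 N ((le_max_left _ _).trans hN)
  have hL' : (0 : ℝ) < L := by exact_mod_cast hL
  have hτp : 0 ≤ τ := by rw [hτ]; positivity
  have hτ1 : τ ≤ 1 := hτ0.trans (by nlinarith)
  have hLτ : L * τ = T := by rw [hτ]; field_simp
  have hsq : Real.sqrt τ ≤ ρ := by
    rw [Real.sqrt_le_left hρ0.le]; exact hτ0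
  have hBt : ∀ t ∈ Set.Icc 0 T, Bd 1 (u t) B := fun t ht => sol_H1 hl h0 hu0 hu ht
  have hb0 : Bd 1 u0 R := (Bd_of_hnorm h0).mono hu0
  set η := Real.sqrt τ + (N : ℝ) ^ (s - 1) with hη
  have hη0 : 0 ≤ η := by positivity
  have hsmall : D * η ≤ 1 := by
    refine le_trans ?_ hDρ
    gcongr
    exact add_le_add hsq hNρ
  have h1 := err_all hs hs1 hl hu hb0 hBt hτp hτ1 hLτ hN2 hη hA hK hsmall hn
  have hnT : (n : ℝ) * τ ≤ T := by
    rw [← hLτ]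
    have : (n : ℝ) ≤ L := by exact_mod_cast hn
    gcongr
  have h2 := (hBt (n * τ) ⟨by positivity, hnT⟩).tail hs1.le (by omega : 0 < N)
  have h3 := h2.sub h1
  rw [sub_sub_sub_cancel_right] at h3
  have h4 : Bd s (u (n * τ) - numSol lam τ N u0 n) ((D + B) * η) := by
    refine h3.mono ?_
    have e1 : (cInit * R + n * τ * K) * Real.exp (A * (n * τ)) * η ≤ D * η := by
      rw [hD]; gcongr
    have e2 : (N : ℝ) ^ (s - 1) * B ≤ η * B := by
      gcongr
      rw [hη]; linarith [Real.sqrt_nonneg τ]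
    linarith
  refine h4.hnorm_le.trans ?_
  rw [← Real.sqrt_eq_rpow, show -1 + s = s - 1 by ring, ← hη]
  nlinarith

end
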